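/- In the blow-up setup, let (y_i) ⊂ B be such that |y_i|^{(n−2k)/2}·|u_i(y_i)| → c ∈ (0, +∞). Then, after passing to a subsequence, there exist positive reals (r_i) with r_i → 0 and r_i^{−1}|y_i| → c' ∈ (0, +∞), and ε ∈ {−1, +1}, such that r_i^{(n−2k)/2}·u_i(r_i x) → ε·U(x) in C^{2k}_loc(ℝⁿ∖{0}). -/

import Mathlib

/-!
The proof works in Emden-Fowler coordinates. Put `g = (n - 2k)/2`, fix a unit vector `e` and let
`w(t) = e^{gt} u(e^t e)`. For radial `u` this turns `Δ^k` into the autonomous operator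
`(-1)^k ∏_{j<k} (γ_j² - D²)`, `γ_j = g + 2j` (`iterLap_emd`, `Gam_Eps_poly`), the critical power
into `|w|^{p-2} w` with `p = 2*`, and the term `λ u` into `λ e^{2kt} w`. The operator splits into
first-order factors `γ_j - D` and `γ_j + D`; applying them one at a time gives a chain
`w = z_0, z_1, …, z_{2k}` (`DChain`). The Dirichlet conditions become `z_j(0) = 0` for `j < k`,
the entries `z_j` with `j < 2k` tend to `0` at `-∞`, and the `L^{2*}` bound becomes a bound on
`∫ |w|^p`.

For odd `k` the equation has the wrong sign: a monotone quantity vanishing at both ends shows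
that `w = 0` (`odd_vanish`). So `k` is even.

*Compactness.* Inverting the factors, the topmost with an `L¹` right-hand side, bounds the chains
uniformly on `(-∞, 0]` (`unif_bound`). Hence they subconverge locally uniformly, by Arzelà-Ascoli
(`chain_compact`). At `t_i = log ‖y_i‖` the transforms stay away from `0`. If `t_i` did not tend
to `-∞` along a subsequence, the limit would be a nonzero solution of the limit equation on
`(-∞, 0]` with Dirichlet data, which `LimSol.half_line` excludes. So `t_i → -∞`, and the chains
translated by `t_i` converge to a nonzero solution on the whole line (`concentrate`).

*Classification.* Both exclusion and classification count sign changes. Let `z` be the difference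
of two solutions. By Rolle, the passage from `z_j` to `z_{j+1}` loses no sign change if the
entry times its integrating factor `e^{±γt}` is small at one end, and gains one if it is small at
both (`Alt.deriv`, `DChain.alt_gain`). Since `x ↦ |x|^{p-2} x` is increasing, `z_{2k}` and `z_0`
have the same sign. A single gain therefore produces infinitely many zeros
(`DChain.infinite_zeros`). These accumulate either at a finite point, where all entries vanish and
unique continuation applies, or at an infinite end, where they force decay faster than any
exponential; in both cases `z = 0` (`DChain.eq_zero_of_infinite_zeros`). The gain is available
when two whole-line solutions have the same leading coefficient at `-∞`, i.e. the same limit of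
`e^{-gt} w` (`LimSol.eq_of_asymp`). It is also available on the half-line, where the conserved
Hamiltonian gives the additional boundary condition `z_k(0) = 0`. Hence every nonzero whole-line
solution is, up to sign, a translate of the transform of the bubble `U` (`LimSol.classify`,
`bubble_limSol`).

If the limit is `ε` times the translate by `s`, then `r_i = e^{t_i - s}` are the required scales.
Derivatives of `w` are fixed linear combinations of the entries of its chain, so convergence of
the chains gives convergence in `C^{2k}_loc` away from the origin (`cLocConv_of_chain`).
-/

open MeasureTheory Metric Filter Topology Real

noncomputable section

def lap {n : ℕ} (u : EuclideanSpace ℝ (Fin n) → ℝ) : EuclideanSpace ℝ (Fin n) → ℝ :=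
  fun x => ∑ i : Fin n, iteratedFDeriv ℝ 2 u x (fun _ => EuclideanSpace.single i 1)

def iterLap {n : ℕ} (k : ℕ) (u : EuclideanSpace ℝ (Fin n) → ℝ) :
    EuclideanSpace ℝ (Fin n) → ℝ :=
  lap^[k] u

def twoStar (n k : ℕ) : ℝ := 2 * n / ((n : ℝ) - 2 * k)

def ank (n k : ℕ) : ℝ :=
  (∏ j ∈ Finset.range (2 * k), ((n : ℝ) + 2 * ((j : ℝ) - (k : ℝ)))) ^ (-(1 : ℝ) / (k : ℝ))

def Ubub (n k : ℕ) (x : EuclideanSpace ℝ (Fin n)) : ℝ :=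
  (1 / (1 + ank n k * ‖x‖ ^ 2)) ^ (((n : ℝ) - 2 * k) / 2)

def BlowUpSetup (n k : ℕ) (M : ℝ) (lam : ℕ → ℝ)
    (u : ℕ → EuclideanSpace ℝ (Fin n) → ℝ) : Prop :=
  (∀ i, 0 < lam i) ∧ Filter.Tendsto lam Filter.atTop (nhds 0) ∧
  (∀ i, ContDiff ℝ (2 * k : ℕ) (u i)) ∧
  (∀ i, ∀ x y : EuclideanSpace ℝ (Fin n), ‖x‖ = ‖y‖ → u i x = u i y) ∧
  (∀ i, ∀ x ∈ Metric.ball (0 : EuclideanSpace ℝ (Fin n)) 1,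
    iterLap k (u i) x - lam i * u i x = |u i x| ^ (twoStar n k - 2) * u i x) ∧
  (∀ i, ∀ x : EuclideanSpace ℝ (Fin n), ‖x‖ = 1 → ∀ j < k,
    iteratedFDeriv ℝ j (u i) x (fun _ => x) = 0) ∧
  (∀ i, ∃ x ∈ Metric.closedBall (0 : EuclideanSpace ℝ (Fin n)) 1, u i x ≠ 0) ∧
  (∀ i, (∫ x in Metric.ball (0 : EuclideanSpace ℝ (Fin n)) 1, |u i x| ^ twoStar n k)
      ≤ M ^ twoStar n k)

def CLocConv {n : ℕ} (m : ℕ) (S : Set (EuclideanSpace ℝ (Fin n)))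
    (f : ℕ → EuclideanSpace ℝ (Fin n) → ℝ) (g : EuclideanSpace ℝ (Fin n) → ℝ) : Prop :=
  ∀ K : Set (EuclideanSpace ℝ (Fin n)), K ⊆ S → IsCompact K → ∀ j ≤ m,
    Filter.Tendsto
      (fun i => ⨆ x : K, ‖iteratedFDeriv ℝ j (f i) (x : EuclideanSpace ℝ (Fin n))
        - iteratedFDeriv ℝ j g (x : EuclideanSpace ℝ (Fin n))‖)
      Filter.atTop (nhds 0)

def Concentration (n k : ℕ) (u : ℕ → EuclideanSpace ℝ (Fin n) → ℝ)
    (ν : ℕ → ℝ) (ε₀ : ℝ) : Prop :=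
  (∀ i, 0 < ν i) ∧ Filter.Tendsto ν Filter.atTop (nhds 0) ∧ (ε₀ = 1 ∨ ε₀ = -1) ∧
  CLocConv (2 * k) {(0 : EuclideanSpace ℝ (Fin n))}ᶜ
    (fun i z => (ν i) ^ (((n : ℝ) - 2 * k) / 2) * u i ((ν i) • z))
    (fun z => ε₀ * Ubub n k z) ∧
  Filter.Tendsto (fun R : ℝ => Filter.limsup (fun i =>
      ⨆ x : {x : EuclideanSpace ℝ (Fin n) //
        x ∈ Metric.ball (0 : EuclideanSpace ℝ (Fin n)) 1 ∧ R * ν i ≤ ‖x‖},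
        ‖(x : EuclideanSpace ℝ (Fin n))‖ ^ (((n : ℝ) - 2 * k) / 2)
          * |u i (x : EuclideanSpace ℝ (Fin n))|) Filter.atTop)
    Filter.atTop (nhds 0)

def Tfun (n k : ℕ) (u : EuclideanSpace ℝ (Fin n) → ℝ) (x : EuclideanSpace ℝ (Fin n)) : ℝ :=
  (((n : ℝ) - 2 * k) / 2) * u x + fderiv ℝ u x x

def ndS {n : ℕ} (u : EuclideanSpace ℝ (Fin n) → ℝ) (x : EuclideanSpace ℝ (Fin n)) : ℝ :=
  fderiv ℝ u x (‖x‖⁻¹ • x)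

def halfLapSq {n : ℕ} (k : ℕ) (u : EuclideanSpace ℝ (Fin n) → ℝ)
    (x : EuclideanSpace ℝ (Fin n)) : ℝ :=
  if k % 2 = 0 then (iterLap (k / 2) u x) ^ 2 else ‖gradient (iterLap (k / 2) u) x‖ ^ 2

def Sfun (n k : ℕ) (u : EuclideanSpace ℝ (Fin n) → ℝ) (x : EuclideanSpace ℝ (Fin n)) : ℝ :=
  (∑ i ∈ Finset.range (k / 2),
    (-(ndS (iterLap (k - i - 1) u) x) * iterLap i (Tfun n k u) x
      + iterLap (k - i - 1) u x * ndS (iterLap i (Tfun n k u)) x))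
  - (if k % 2 = 1 then ndS (iterLap (k / 2) u) x * iterLap (k / 2) (Tfun n k u) x else 0)

def sphVol (n : ℕ) : ℝ :=
  (μH[(n : ℝ) - 1] (Metric.sphere (0 : EuclideanSpace ℝ (Fin n)) 1)).toReal

def Cnk (n k : ℕ) : ℝ :=
  1 / (((n : ℝ) - 2) * sphVol n *
    ∏ i ∈ Finset.Icc 1 (k - 1), (((n : ℝ) - 2 * k + 2 * ((i : ℝ) - 1)) * (2 * (k : ℝ) - 2 * (i : ℝ))))

/-! ### First order factors -/

/-- A chain of first order relations `z (j+1) = γ j * z j + ε j * (z j)'` for `j < N` on the set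
`I`, written as a differential system (`ε j = ±1`).  It encodes that
`z N = ∏ (γ j + ε j D) (z 0)`. -/
def DChain (N : ℕ) (γ ε : ℕ → ℝ) (I : Set ℝ) (z : ℕ → ℝ → ℝ) : Prop :=
  ∀ j < N, ∀ t ∈ I, HasDerivAt (z j) (ε j * (z (j + 1) t - γ j * z j t)) t

lemma DChain.mono {N : ℕ} {γ ε : ℕ → ℝ} {I J : Set ℝ} {z : ℕ → ℝ → ℝ}
    (h : DChain N γ ε I z) (hJ : J ⊆ I) : DChain N γ ε J z :=
  fun j hj t ht => h j hj t (hJ ht)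

lemma DChain.reflect {N : ℕ} {γ ε : ℕ → ℝ} {I : Set ℝ} {z : ℕ → ℝ → ℝ}
    (h : DChain N γ ε I z) :
    DChain N γ (fun j => -ε j) {t | -t ∈ I} (fun j t => z j (-t)) := by
  intro j hj t ht
  have h1 := (h j hj (-t) ht).comp t (hasDerivAt_neg t)
  refine h1.congr_deriv ?_
  ring

lemma DChain.sub {N : ℕ} {γ ε : ℕ → ℝ} {I : Set ℝ} {z y : ℕ → ℝ → ℝ}
    (h : DChain N γ ε I z) (h' : DChain N γ ε I y) :
    DChain N γ ε I (fun j t => z j t - y j t) := by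
  intro j hj t ht
  refine ((h j hj t ht).sub (h' j hj t ht)).congr_deriv ?_
  ring

lemma DChain.const_mul {N : ℕ} {γ ε : ℕ → ℝ} {I : Set ℝ} {z : ℕ → ℝ → ℝ}
    (h : DChain N γ ε I z) (a : ℝ) : DChain N γ ε I (fun j t => a * z j t) := by
  intro j hj t ht
  refine ((h j hj t ht).const_mul a).congr_deriv ?_
  ring

lemma DChain.shift {N : ℕ} {γ ε : ℕ → ℝ} {I : Set ℝ} {z : ℕ → ℝ → ℝ}
    (h : DChain N γ ε I z) (s : ℝ) :
    DChain N γ ε {t | t + s ∈ I} (fun j t => z j (t + s)) := by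
  intro j hj t ht
  exact (h j hj (t + s) ht).comp_add_const t s

lemma diff_le_of_deriv_le {φ φ' Θ Θ' : ℝ → ℝ} {s t : ℝ} (hst : s ≤ t)
    (hφ : ∀ x ∈ Set.Icc s t, HasDerivAt φ (φ' x) x)
    (hΘ : ∀ x ∈ Set.Icc s t, HasDerivAt Θ (Θ' x) x)
    (h : ∀ x ∈ Set.Icc s t, |φ' x| ≤ Θ' x) : |φ t - φ s| ≤ Θ t - Θ s := by
  have key : ∀ σ : ℝ, (σ = 1 ∨ σ = -1) → σ * (φ t - φ s) ≤ Θ t - Θ s := by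
    intro σ hσ
    have hd : ∀ x ∈ Set.Icc s t, HasDerivAt (fun y => Θ y - σ * φ y) (Θ' x - σ * φ' x) x :=
      fun x hx => (hΘ x hx).sub ((hφ x hx).const_mul σ)
    have hm : MonotoneOn (fun y => Θ y - σ * φ y) (Set.Icc s t) := by
      apply monotoneOn_of_deriv_nonneg (convex_Icc s t)
      · exact fun x hx => (hd x hx).continuousAt.continuousWithinAt
      · exact fun x hx => (hd x (interior_subset hx)).differentiableAt.differentiableWithinAt
      · intro x hx
        rw [(hd x (interior_subset hx)).deriv]
        have := abs_le.1 (h x (interior_subset hx))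
        rcases hσ with rfl | rfl <;> linarith [this.1, this.2]
    have := hm (Set.left_mem_Icc.2 hst) (Set.right_mem_Icc.2 hst) hst
    simp only at this
    linarith
  have h1 := key 1 (Or.inl rfl)
  have h2 := key (-1) (Or.inr rfl)
  exact abs_le.2 ⟨by linarith, by linarith⟩

/-- The integrating factor: `(e^{εγt} z)' = ε e^{εγt} y` when `y = γ z + ε z'`. -/
lemma hasDerivAt_exp_mul {z : ℝ → ℝ} {y γ ε t : ℝ}
    (h : HasDerivAt z (ε * (y - γ * z t)) t) :
    HasDerivAt (fun s => rexp (ε * γ * s) * z s) (ε * (rexp (ε * γ * t) * y)) t := by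
  have h1 : HasDerivAt (fun s : ℝ => rexp (ε * γ * s)) (rexp (ε * γ * t) * (ε * γ * 1)) t :=
    ((hasDerivAt_id t).const_mul (ε * γ)).exp
  refine (h1.mul h).congr_deriv ?_
  ring

/-- Variation of constants as an inequality, for a right-hand side bounded by `C e^{-bt}`. -/
lemma exp_mul_diff_le {z y : ℝ → ℝ} {γ ε b C s t : ℝ} (hst : s ≤ t) (hε : |ε| = 1)
    (hb : ε * γ - b ≠ 0)
    (h : ∀ x ∈ Set.Icc s t, HasDerivAt z (ε * (y x - γ * z x)) x)
    (hy : ∀ x ∈ Set.Icc s t, |y x| ≤ C * rexp (-b * x)) :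
    |rexp (ε * γ * t) * z t - rexp (ε * γ * s) * z s| ≤
      C / (ε * γ - b) * rexp ((ε * γ - b) * t) - C / (ε * γ - b) * rexp ((ε * γ - b) * s) := by
  refine diff_le_of_deriv_le (φ := fun x => rexp (ε * γ * x) * z x)
    (Θ := fun x => C / (ε * γ - b) * rexp ((ε * γ - b) * x))
    (Θ' := fun x => C * rexp ((ε * γ - b) * x)) hst
    (fun x hx => hasDerivAt_exp_mul (h x hx)) ?_ ?_
  · intro x _
    have h1 : HasDerivAt (fun s : ℝ => rexp ((ε * γ - b) * s))
        (rexp ((ε * γ - b) * x) * ((ε * γ - b) * 1)) x :=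
      ((hasDerivAt_id x).const_mul _).exp
    refine (h1.const_mul _).congr_deriv ?_
    field_simp
  · intro x hx
    rw [abs_mul, hε, one_mul, abs_mul, abs_of_pos (exp_pos _)]
    calc rexp (ε * γ * x) * |y x| ≤ rexp (ε * γ * x) * (C * rexp (-b * x)) := by
          gcongr; exact hy x hx
      _ = C * rexp ((ε * γ - b) * x) := by
          rw [show (ε * γ - b) * x = ε * γ * x + -b * x by ring, exp_add]; ring

/-- A decay rate `b < γ` of `γ z + z'` is inherited by `z`, up to a multiple of `e^{-γt}`. -/
lemma step_plus {z y : ℝ → ℝ} {γ b C T t : ℝ} (hb : b < γ) (hC : 0 ≤ C) (ht : T ≤ t)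
    (h : ∀ x ∈ Set.Ici T, HasDerivAt z (1 * (y x - γ * z x)) x)
    (hy : ∀ x ∈ Set.Ici T, |y x| ≤ C * rexp (-b * x)) :
    |z t| ≤ rexp (-γ * (t - T)) * |z T| + C / (γ - b) * rexp (-b * t) := by
  have h1 := exp_mul_diff_le (γ := γ) (ε := 1) (b := b) (C := C) ht (by simp)
    (by linarith) (fun x hx => h x hx.1) (fun x hx => hy x hx.1)
  simp only [one_mul] at h1
  have h0 : 0 ≤ C / (γ - b) * rexp ((γ - b) * T) := by
    have : 0 < γ - b := by linarith
    positivity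
  have h2 : rexp (γ * t) * |z t| ≤ rexp (γ * T) * |z T| + C / (γ - b) * rexp ((γ - b) * t) := by
    have := abs_sub_abs_le_abs_sub (rexp (γ * t) * z t) (rexp (γ * T) * z T)
    rw [abs_mul, abs_mul, abs_of_pos (exp_pos _), abs_of_pos (exp_pos _)] at this
    linarith
  have h3 := mul_le_mul_of_nonneg_left h2 (exp_pos (-γ * t)).le
  rw [← mul_assoc, ← exp_add, mul_add, ← mul_assoc, ← exp_add] at h3
  rw [show -γ * t + γ * t = 0 by ring, exp_zero, one_mul] at h3
  refine h3.trans (le_of_eq ?_)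
  rw [show -γ * t + γ * T = -γ * (t - T) by ring]
  congr 1
  rw [mul_left_comm, ← exp_add]
  ring_nf

/-- A decay rate of `γ z - z'` is inherited by every bounded `z`: boundedness excludes the
homogeneous solution `e^{γt}`, so `z` is given by the integral over `[t, ∞)`. -/
lemma step_minus {z y : ℝ → ℝ} {γ b C T t K : ℝ} (hb : -γ < b) (hγ : 0 < γ) (ht : T ≤ t)
    (hK : ∀ x ∈ Set.Ici T, |z x| ≤ K)
    (h : ∀ x ∈ Set.Ici T, HasDerivAt z (-1 * (y x - γ * z x)) x)
    (hy : ∀ x ∈ Set.Ici T, |y x| ≤ C * rexp (-b * x)) :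
    |z t| ≤ C / (γ + b) * rexp (-b * t) := by
  have hgb : 0 < γ + b := by linarith
  have hlim : Tendsto (fun s : ℝ => rexp (-γ * s) * K + C / (γ + b) * rexp ((-γ - b) * t))
      atTop (𝓝 (0 * K + C / (γ + b) * rexp ((-γ - b) * t))) := by
    refine Tendsto.add (Tendsto.mul_const _ ?_) tendsto_const_nhds
    refine tendsto_exp_atBot.comp ?_
    exact tendsto_id.const_mul_atTop_of_neg (by linarith)
  have hC : 0 ≤ C := by
    have := (abs_nonneg _).trans (hy T (Set.mem_Ici.2 le_rfl))
    exact nonneg_of_mul_nonneg_left this (exp_pos _)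
  have h2 : rexp (-γ * t) * |z t| ≤ 0 * K + C / (γ + b) * rexp ((-γ - b) * t) := by
    refine ge_of_tendsto hlim ?_
    filter_upwards [eventually_ge_atTop t] with s hs
    have h1 := exp_mul_diff_le (γ := γ) (ε := -1) (b := b) (C := C) hs (by simp)
      (by linarith) (fun x hx => h x (ht.trans hx.1)) (fun x hx => hy x (ht.trans hx.1))
    simp only [neg_mul, one_mul] at h1
    rw [show -γ - b = -(γ + b) by ring, div_neg] at h1
    have h4 := abs_sub_abs_le_abs_sub (rexp (-γ * t) * z t) (rexp (-γ * s) * z s)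
    rw [abs_mul, abs_mul, abs_of_pos (exp_pos _), abs_of_pos (exp_pos _), abs_sub_comm] at h4
    have h5 : rexp (-γ * s) * |z s| ≤ rexp (-γ * s) * K := by
      gcongr; exact hK s (ht.trans hs)
    have h6 : 0 ≤ C / (γ + b) * rexp (-(γ + b) * s) := by positivity
    rw [show -γ - b = -(γ + b) by ring]
    simp only [neg_mul] at h1 h4 h5 h6 ⊢
    linarith
  rw [zero_mul, zero_add] at h2
  have h3 := mul_le_mul_of_nonneg_left h2 (exp_pos (γ * t)).le
  rw [← mul_assoc, ← exp_add, mul_left_comm, ← exp_add] at h3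
  rw [show γ * t + -γ * t = 0 by ring, exp_zero, one_mul] at h3
  refine h3.trans (le_of_eq ?_)
  ring_nf

/-- If the right-hand side decays faster than `e^{-γt}`, then a solution of `γ z + z' = y` with
arbitrarily large zeros inherits that decay. -/
lemma step_zero {z y : ℝ → ℝ} {γ b C T t : ℝ} (hb : γ < b) (ht : T ≤ t)
    (hz : ∀ R, ∃ x > R, z x = 0)
    (h : ∀ x ∈ Set.Ici T, HasDerivAt z (1 * (y x - γ * z x)) x)
    (hy : ∀ x ∈ Set.Ici T, |y x| ≤ C * rexp (-b * x)) :
    |z t| ≤ C / (b - γ) * rexp (-b * t) := by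
  have hgb : 0 < b - γ := by linarith
  have hC : 0 ≤ C := by
    have := (abs_nonneg _).trans (hy T (Set.mem_Ici.2 le_rfl))
    exact nonneg_of_mul_nonneg_left this (exp_pos _)
  obtain ⟨s, hs, hzs⟩ := hz t
  have h1 := exp_mul_diff_le (γ := γ) (ε := 1) (b := b) (C := C) hs.le (by simp)
      (by linarith) (fun x hx => h x (ht.trans hx.1)) (fun x hx => hy x (ht.trans hx.1))
  simp only [one_mul, hzs, mul_zero, zero_sub, abs_neg, abs_mul, abs_of_pos (exp_pos _)] at h1
  rw [show γ - b = -(b - γ) by ring, div_neg] at h1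
  have h6 : 0 ≤ C / (b - γ) * rexp (-(b - γ) * s) := by positivity
  have h2 : rexp (γ * t) * |z t| ≤ C / (b - γ) * rexp (-(b - γ) * t) := by
    simp only [neg_mul] at h1 h6 ⊢
    linarith
  have h3 := mul_le_mul_of_nonneg_left h2 (exp_pos (-γ * t)).le
  rw [← mul_assoc, ← exp_add, mul_left_comm, ← exp_add] at h3
  rw [show -γ * t + γ * t = 0 by ring, exp_zero, one_mul] at h3
  refine h3.trans (le_of_eq ?_)
  ring_nf

/-- If `γ z + z'` decays faster than `e^{-γt}`, then `e^{γt} z` converges: its derivative is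
integrable. -/
lemma step_converge {z y : ℝ → ℝ} {γ b C T : ℝ} (hb : γ < b)
    (h : ∀ x ∈ Set.Ici T, HasDerivAt z (1 * (y x - γ * z x)) x)
    (hy : ∀ x ∈ Set.Ici T, |y x| ≤ C * rexp (-b * x)) :
    ∃ A, Tendsto (fun t => rexp (γ * t) * z t) atTop (𝓝 A) := by
  have hgb : 0 < b - γ := by linarith
  have hC : 0 ≤ C := by
    have := (abs_nonneg _).trans (hy T (Set.mem_Ici.2 le_rfl))
    exact nonneg_of_mul_nonneg_left this (exp_pos _)
  apply cauchy_map_iff_exists_tendsto.1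
  rw [Metric.cauchy_iff]
  refine ⟨inferInstance, fun η hη => ?_⟩
  have hlim : Tendsto (fun s : ℝ => C / (b - γ) * rexp (-(b - γ) * s)) atTop (𝓝 0) := by
    rw [← mul_zero (C / (b - γ))]
    refine Tendsto.const_mul _ (tendsto_exp_atBot.comp ?_)
    exact tendsto_id.const_mul_atTop_of_neg (by linarith)
  obtain ⟨R, hR⟩ := ((hlim.eventually (gt_mem_nhds hη)).and (eventually_ge_atTop T)).exists
  have key : ∀ s t, R ≤ s → s ≤ t →
      |rexp (γ * t) * z t - rexp (γ * s) * z s| < η := by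
    intro s t hs hst
    have h1 := exp_mul_diff_le (γ := γ) (ε := 1) (b := b) (C := C) hst (by simp)
      (by linarith) (fun x hx => h x (hR.2.trans (hs.trans hx.1)))
      (fun x hx => hy x (hR.2.trans (hs.trans hx.1)))
    simp only [one_mul] at h1
    rw [show γ - b = -(b - γ) by ring, div_neg] at h1
    have h6 : 0 ≤ C / (b - γ) * rexp (-(b - γ) * t) := by positivity
    have h7 : C / (b - γ) * rexp (-(b - γ) * s) ≤ C / (b - γ) * rexp (-(b - γ) * R) := by
      gcongr 2
      apply mul_le_mul_of_nonpos_left hs; linarith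
    linarith [hR.1]
  refine ⟨_, image_mem_map (Ici_mem_atTop R), ?_⟩
  rintro _ ⟨s, hs, rfl⟩ _ ⟨t, ht, rfl⟩
  rw [Real.dist_eq]
  rcases le_total s t with hst | hst
  · rw [abs_sub_comm]; exact key s t hs hst
  · exact key t s ht hst

/-! ### Decay of chains at infinity -/

/-- Far out, a bounded chain whose top entry is negligible against its bottom entry loses half of
its size over a fixed length. -/
lemma DChain.halving {N : ℕ} {γ ε : ℕ → ℝ} {z : ℕ → ℝ → ℝ} {T₀ g : ℝ} (hg : 0 < g)
    (hz : DChain N γ ε (Set.Ici T₀) z) (hγ : ∀ j < N, g ≤ γ j)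
    (hε : ∀ j < N, ε j = 1 ∨ ε j = -1)
    (hN : ∀ η > 0, ∃ T, ∀ t ≥ T, |z N t| ≤ η * |z 0 t|) :
    ∃ T₁ ≥ T₀, ∃ L > 0, ∀ T ≥ T₁, ∀ A : ℝ, 0 ≤ A → (∀ j ≤ N, ∀ t ≥ T, |z j t| ≤ A) →
      ∀ j ≤ N, ∀ t ≥ T + L, |z j t| ≤ A / 2 := by
  set Q : ℝ := 1 + 1 / g with hQ
  have hQ1 : 1 ≤ Q := by rw [hQ]; have : 0 < 1 / g := by positivity
                         linarith
  have hQN : 0 < Q ^ N := by positivity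
  set θ : ℝ := 1 / (2 * Q ^ N) with hθ
  have hθ0 : 0 < θ := by positivity
  obtain ⟨T, hT⟩ := hN (θ / 2) (by positivity)
  have hexp : Tendsto (fun ℓ : ℝ => rexp (-g * ℓ)) atTop (𝓝 0) :=
    tendsto_exp_atBot.comp (tendsto_id.const_mul_atTop_of_neg (by linarith))
  obtain ⟨ℓ, hℓ, hℓ0⟩ := ((hexp.eventually (gt_mem_nhds (show 0 < θ / 2 by positivity))).and
    (eventually_gt_atTop 0)).exists
  -- each factor costs a waiting time `ℓ`, after which the homogeneous solution is negligible
  refine ⟨max T T₀, le_max_right _ _, N * ℓ + ℓ, by positivity, fun S hS A hA hbd => ?_⟩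
  have hST : T ≤ S := (le_max_left _ _).trans hS
  have hST0 : T₀ ≤ S := (le_max_right _ _).trans hS
  set q : ℝ := θ / 2 + rexp (-g * ℓ) with hq
  have hq0 : 0 ≤ q := by positivity
  have claim : ∀ i ≤ N, ∀ t ≥ S + i * ℓ, |z (N - i) t| ≤ q * Q ^ i * A := by
    intro i
    induction i with
    | zero =>
      intro _ t ht
      simp only [Nat.cast_zero, zero_mul, add_zero] at ht
      have h1 := hT t (hST.trans ht)
      have h2 := hbd 0 (Nat.zero_le _) t ht
      simp only [Nat.sub_zero, pow_zero, mul_one]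
      calc |z N t| ≤ θ / 2 * |z 0 t| := h1
        _ ≤ θ / 2 * A := by gcongr
        _ ≤ q * A := by gcongr; rw [hq]; linarith [exp_pos (-g * ℓ)]
    | succ i ih =>
      intro hi t ht
      have ih' := ih (by omega)
      set j := N - (i + 1) with hj
      have hjN : j < N := by omega
      have hj1 : N - i = j + 1 := by omega
      rw [hj1] at ih'
      set S' := S + i * ℓ with hS'
      have hSS' : S ≤ S' := by rw [hS']; have : 0 ≤ (i : ℝ) * ℓ := by positivity
                               linarith
      have ht' : S' + ℓ ≤ t := by
        push_cast at ht; rw [hS']; linarith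
      have hd : ∀ x ∈ Set.Ici S', HasDerivAt (z j) (ε j * (z (j + 1) x - γ j * z j x)) x :=
        fun x hx => hz j hjN x (hST0.trans (hSS'.trans hx))
      have hC0 : 0 ≤ q * Q ^ i * A := by positivity
      have hy : ∀ x ∈ Set.Ici S', |z (j + 1) x| ≤ q * Q ^ i * A * rexp (-0 * x) := by
        intro x hx; simpa using ih' x hx
      have hgj := hγ j hjN
      have hdiv : q * Q ^ i * A / γ j ≤ q * Q ^ i * A / g := by gcongr
      have hfin : rexp (-g * ℓ) * A + q * Q ^ i * A / g ≤ q * Q ^ (i + 1) * A := by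
        have h1 : rexp (-g * ℓ) ≤ q := by rw [hq]; linarith
        have h2 : q ≤ q * Q ^ i := le_mul_of_one_le_right hq0 (one_le_pow₀ hQ1)
        calc rexp (-g * ℓ) * A + q * Q ^ i * A / g
            ≤ q * Q ^ i * A + q * Q ^ i * A / g := by gcongr; exact h1.trans h2
          _ = q * Q ^ (i + 1) * A := by rw [pow_succ, hQ]; field_simp
      rcases hε j hjN with he | he
      · rw [he] at hd
        have h1 := step_plus (γ := γ j) (b := 0) (C := q * Q ^ i * A) (T := S') (t := t)
          (by linarith) hC0 (by linarith) hd hy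
        simp only [sub_zero, neg_zero, zero_mul, exp_zero, mul_one] at h1
        have h2 : rexp (-γ j * (t - S')) * |z j S'| ≤ rexp (-g * ℓ) * A := by
          have h3 : rexp (-γ j * (t - S')) ≤ rexp (-g * ℓ) := by
            apply exp_le_exp.2
            nlinarith
          have h4 := hbd j hjN.le S' hSS'
          gcongr
        linarith
      · rw [he] at hd
        have h1 := step_minus (γ := γ j) (b := 0) (C := q * Q ^ i * A) (T := S') (t := t)
          (K := A) (by linarith) (by linarith) (by linarith)
          (fun x hx => hbd j hjN.le x (hSS'.trans hx)) hd hy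
        simp only [add_zero, neg_zero, zero_mul, exp_zero, mul_one] at h1
        have : 0 ≤ rexp (-g * ℓ) * A := by positivity
        linarith
  intro j hj t ht
  have h1 := claim (N - j) (by omega) t (by
    have : ((N - j : ℕ) : ℝ) ≤ N := by exact_mod_cast Nat.sub_le _ _
    nlinarith)
  rw [show N - (N - j) = j by omega] at h1
  have h2 : q ≤ θ := by rw [hq]; linarith
  have h3 : Q ^ (N - j) ≤ Q ^ N := pow_le_pow_right₀ hQ1 (Nat.sub_le _ _)
  calc |z j t| ≤ q * Q ^ (N - j) * A := h1
    _ ≤ θ * Q ^ N * A := by gcongr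
    _ = A / 2 := by rw [hθ]; field_simp

/-- A bounded chain whose top entry is negligible against its bottom entry decays exponentially,
by iterating `DChain.halving`. -/
lemma DChain.exp_decay {N : ℕ} {γ ε : ℕ → ℝ} {z : ℕ → ℝ → ℝ} {T₀ g K : ℝ} (hg : 0 < g)
    (hz : DChain N γ ε (Set.Ici T₀) z) (hγ : ∀ j < N, g ≤ γ j)
    (hε : ∀ j < N, ε j = 1 ∨ ε j = -1) (hK : ∀ j ≤ N, ∀ t ≥ T₀, |z j t| ≤ K)
    (hN : ∀ η > 0, ∃ T, ∀ t ≥ T, |z N t| ≤ η * |z 0 t|) :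
    ∃ δ > 0, ∃ C, ∀ j ≤ N, ∀ t ≥ T₀, |z j t| ≤ C * rexp (-δ * t) := by
  obtain ⟨T₁, hT₁, L, hL, hh⟩ := hz.halving hg hγ hε hN
  have hK0 : 0 ≤ K := (abs_nonneg _).trans (hK 0 (Nat.zero_le _) T₀ le_rfl)
  have hm : ∀ m : ℕ, ∀ j ≤ N, ∀ t ≥ T₁ + m * L, |z j t| ≤ K / 2 ^ m := by
    intro m
    induction m with
    | zero => intro j hj t ht
              simp only [Nat.cast_zero, zero_mul, add_zero] at ht
              simpa using hK j hj t (hT₁.le.trans ht)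
    | succ m ih =>
      intro j hj t ht
      have := hh (T₁ + m * L) (by have : 0 ≤ (m : ℝ) * L := by positivity
                                  linarith) (K / 2 ^ m) (by positivity) ih j hj t
        (by push_cast at ht; linarith)
      rw [pow_succ]
      rwa [div_div] at this
  refine ⟨log 2 / L, div_pos (log_pos (by norm_num)) hL, 2 * K * rexp (log 2 / L * T₁),
    fun j hj t ht => ?_⟩
  have e1 : 2 * K * rexp (log 2 / L * T₁) * rexp (-(log 2 / L) * t)
      = 2 * K * rexp (-(log 2) * ((t - T₁) / L)) := by
    rw [mul_assoc, ← exp_add]; congr 2; field_simp; ring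
  rw [e1]
  rcases le_total t T₁ with h | h
  · have : 1 ≤ rexp (-(log 2) * ((t - T₁) / L)) := by
      apply one_le_exp
      have h1 : (t - T₁) / L ≤ 0 := div_nonpos_of_nonpos_of_nonneg (by linarith) hL.le
      have h2 : 0 < log 2 := log_pos (by norm_num)
      nlinarith
    have h3 := hK j hj t ht
    nlinarith
  · set m := ⌊(t - T₁) / L⌋₊ with hmdef
    have h0 : 0 ≤ (t - T₁) / L := div_nonneg (by linarith) hL.le
    have h1 : (m : ℝ) ≤ (t - T₁) / L := Nat.floor_le h0
    have h2 : (t - T₁) / L < m + 1 := Nat.lt_floor_add_one _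
    have h3 := hm m j hj t (by rw [le_div_iff₀ hL] at h1; linarith)
    refine h3.trans ?_
    have h4 : (1 : ℝ) / 2 ^ (m + 1) ≤ rexp (-(log 2) * ((t - T₁) / L)) := by
      have : (1 : ℝ) / 2 ^ (m + 1) = rexp (-(log 2) * (m + 1 : ℕ)) := by
        rw [neg_mul, exp_neg, mul_comm, exp_nat_mul, exp_log (by norm_num)]; simp
      rw [this]
      apply exp_le_exp.2
      have h5 : 0 < log 2 := log_pos (by norm_num)
      push_cast
      nlinarith
    calc K / 2 ^ m = 2 * K * (1 / 2 ^ (m + 1)) := by rw [pow_succ]; field_simp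
      _ ≤ _ := by gcongr

/-- A decay rate of the top entry passes down the chain as long as it is beaten by the
coefficients of the factors with sign `+`. -/
lemma DChain.rate_down {N : ℕ} {γ ε : ℕ → ℝ} {z : ℕ → ℝ → ℝ} {T b C K : ℝ} (j₀ : ℕ)
    (hz : DChain N γ ε (Set.Ici T) z) (hb : 0 ≤ b) (hC : 0 ≤ C)
    (hK : ∀ j ≤ N, ∀ t ≥ T, |z j t| ≤ K)
    (hγ : ∀ j, j₀ ≤ j → j < N → (ε j = -1 ∧ 0 < γ j) ∨ (ε j = 1 ∧ b < γ j))
    (hN : ∀ t ≥ T, |z N t| ≤ C * rexp (-b * t)) :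
    ∀ j, j₀ ≤ j → j ≤ N → ∃ C' : ℝ, 0 ≤ C' ∧ ∀ t ≥ T, |z j t| ≤ C' * rexp (-b * t) := by
  intro j hj hjN
  induction hi : N - j generalizing j with
  | zero =>
    have : j = N := by omega
    subst this
    exact ⟨C, hC, hN⟩
  | succ i ih =>
    obtain ⟨C', hC', h⟩ := ih (j + 1) (by omega) (by omega) (by omega)
    have hd := hz j (by omega)
    rcases hγ j hj (by omega) with ⟨he, hg⟩ | ⟨he, hg⟩
    · rw [he] at hd
      refine ⟨C' / (γ j + b), by positivity, fun t ht => ?_⟩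
      exact step_minus (by linarith) hg ht (fun x hx => hK j hjN x hx) hd h
    · rw [he] at hd
      have : 0 < γ j - b := by linarith
      refine ⟨rexp (b * T) * |z j T| + C' / (γ j - b), by positivity, fun t ht => ?_⟩
      refine (step_plus hg hC' ht hd h).trans ?_
      have h3 : rexp (-γ j * (t - T)) * |z j T| ≤ rexp (b * T) * |z j T| * rexp (-b * t) := by
        rw [mul_right_comm, ← exp_add]
        exact mul_le_mul_of_nonneg_right (exp_le_exp.2 (by nlinarith [show T ≤ t from ht]))
          (abs_nonneg _)
      rw [add_mul]
      linarith

/-- Sharp asymptotics of a decaying chain with superlinear right-hand side, when the slowest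
decaying exponential sits in the lowest factor. -/
lemma DChain.asymptotics {N : ℕ} (hN0 : 0 < N) {γ ε : ℕ → ℝ} {z : ℕ → ℝ → ℝ}
    {T K C q δ Cδ : ℝ} (hz : DChain N γ ε (Set.Ici T) z) (hg : 0 < γ 0) (hε0 : ε 0 = 1)
    (hγ : ∀ j, 1 ≤ j → j < N → (ε j = -1 ∧ 0 < γ j) ∨ (ε j = 1 ∧ γ 0 + 2 ≤ γ j))
    (hK : ∀ j ≤ N, ∀ t ≥ T, |z j t| ≤ K) (hq : 1 < q) (hC : 0 ≤ C)
    (hN : ∀ t ≥ T, |z N t| ≤ C * |z 0 t| ^ q) (hδ : 0 < δ)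
    (hdec : ∀ t ≥ T, |z 0 t| ≤ Cδ * rexp (-δ * t)) :
    ∃ A, Tendsto (fun t => rexp (γ 0 * t) * z 0 t) atTop (𝓝 A) := by
  set g := γ 0 with hgdef
  have up : ∀ b C₀, 0 ≤ C₀ → (∀ t ≥ T, |z 0 t| ≤ C₀ * rexp (-b * t)) →
      ∀ t ≥ T, |z N t| ≤ C * C₀ ^ q * rexp (-(q * b) * t) := by
    intro b C₀ hC₀ h t ht
    calc |z N t| ≤ C * |z 0 t| ^ q := hN t ht
      _ ≤ C * (C₀ * rexp (-b * t)) ^ q := by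
        gcongr
        exact h t ht
      _ = C * C₀ ^ q * rexp (-(q * b) * t) := by
        rw [mul_rpow hC₀ (exp_pos _).le, ← exp_mul, mul_assoc]; ring_nf
  have weak : ∀ b b' C₀, 0 ≤ C₀ → b' ≤ b → (∀ t ≥ T, |z N t| ≤ C₀ * rexp (-b * t)) →
      ∃ C₁, 0 ≤ C₁ ∧ ∀ t ≥ T, |z N t| ≤ C₁ * rexp (-b' * t) := by
    intro b b' C₀ hC₀ hb h
    refine ⟨C₀ * rexp ((b' - b) * T), by positivity, fun t ht => (h t ht).trans ?_⟩
    rw [mul_assoc, ← exp_add]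
    gcongr
    nlinarith [show T ≤ t from ht]
  set bM := min (g + 1) ((g + q * g) / 2) with hbM
  have hbM1 : g < bM := lt_min (by linarith) (by nlinarith)
  have hbM2 : bM < g + 2 := (min_le_left _ _).trans_lt (by linarith)
  have hbM3 : bM < q * g := (min_le_right _ _).trans_lt (by nlinarith)
  set bs := bM / q with hbs
  have hbs1 : bs < g := by rw [hbs, div_lt_iff₀ (by linarith)]; linarith
  have hbs0 : 0 < bs := by apply div_pos <;> linarith
  -- each application of superlinearity multiplies the rate by `q`; the cap `bs < γ 0` keeps it
  -- below the slowest exponent, while `q * bs = bM` lies strictly between `γ 0` and `γ 0 + 2`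
  have iter : ∀ m : ℕ, ∃ C₀, 0 ≤ C₀ ∧ ∀ t ≥ T, |z 0 t| ≤ C₀ * rexp (-(min (q ^ m * δ) bs) * t) := by
    intro m
    induction m with
    | zero =>
      have hCδ : 0 ≤ Cδ := nonneg_of_mul_nonneg_left
        ((abs_nonneg _).trans (hdec T le_rfl)) (exp_pos _)
      refine ⟨Cδ * rexp ((min (q ^ 0 * δ) bs - δ) * T), by positivity,
        fun t ht => (hdec t ht).trans ?_⟩
      rw [mul_assoc, ← exp_add]
      gcongr
      have : min (q ^ 0 * δ) bs ≤ δ := (min_le_left _ _).trans (by simp)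
      nlinarith [show T ≤ t from ht]
    | succ m ih =>
      obtain ⟨C₀, hC₀, h⟩ := ih
      have hle : min (q ^ (m + 1) * δ) bs ≤ q * min (q ^ m * δ) bs := by
        rcases min_cases (q ^ m * δ) bs with ⟨h1, _⟩ | ⟨h1, _⟩
        · rw [h1]; refine (min_le_left _ _).trans (le_of_eq ?_); ring
        · rw [h1]; refine (min_le_right _ _).trans ?_; nlinarith
      obtain ⟨C₁, hC₁, h1⟩ := weak _ _ _ (by positivity) hle (up _ C₀ hC₀ h)
      have hpos : 0 ≤ min (q ^ (m + 1) * δ) bs := le_min (by positivity) hbs0.le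
      refine hz.rate_down 0 hpos hC₁ hK ?_ h1 0 le_rfl (Nat.zero_le _)
      intro j _ hj
      have hm : min (q ^ (m + 1) * δ) bs < g := (min_le_right _ _).trans_lt hbs1
      rcases Nat.eq_zero_or_pos j with rfl | hj0
      · exact Or.inr ⟨hε0, hm⟩
      · rcases hγ j hj0 hj with h | h
        · exact Or.inl h
        · exact Or.inr ⟨h.1, by linarith [h.2]⟩
  obtain ⟨m, hm⟩ := pow_unbounded_of_one_lt (bs / δ) hq
  obtain ⟨C₀, hC₀, h⟩ := iter m
  rw [min_eq_right (by rw [div_lt_iff₀ hδ] at hm; exact hm.le)] at h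
  have h1 := up _ _ hC₀ h
  rw [show q * bs = bM by rw [hbs]; field_simp] at h1
  obtain ⟨C₂, _, h2⟩ := hz.rate_down 1 (by linarith) (by positivity) hK
    (fun j hj hjN => (hγ j hj hjN).imp id (fun h => ⟨h.1, by linarith [h.2]⟩)) h1 1 le_rfl hN0
  have hd := hz 0 hN0
  rw [hε0] at hd
  exact step_converge hbM1 hd h2

/-! ### Solutions with infinitely many zeros vanish -/

/-- By Rolle applied to `e^{εγt} z`, arbitrarily large zeros pass to the next entry of a chain. -/
lemma zeros_propagate {z y : ℝ → ℝ} {γ ε T : ℝ} (hε : ε ≠ 0)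
    (h : ∀ x ∈ Set.Ici T, HasDerivAt z (ε * (y x - γ * z x)) x)
    (hz : ∀ R, ∃ x > R, z x = 0) : ∀ R, ∃ x > R, y x = 0 := by
  intro R
  obtain ⟨a, ha, hza⟩ := hz (max R T)
  obtain ⟨b, hb, hzb⟩ := hz a
  have hd : ∀ x ∈ Set.Icc a b, HasDerivAt (fun s => rexp (ε * γ * s) * z s)
      (ε * (rexp (ε * γ * x) * y x)) x :=
    fun x hx => hasDerivAt_exp_mul (h x (((le_max_right _ _).trans ha.le).trans hx.1))
  obtain ⟨c, hc, hc0⟩ := exists_hasDerivAt_eq_zero hb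
    (fun x hx => (hd x hx).continuousAt.continuousWithinAt) (by simp [hza, hzb])
    (fun x hx => hd x (Set.Ioo_subset_Icc_self hx))
  refine ⟨c, ((le_max_left _ _).trans_lt ha).trans hc.1, ?_⟩
  simpa [hε, (exp_pos _).ne'] using hc0

/-- If the potential decays exponentially, a bounded solution with arbitrarily large zeros decays
faster than every exponential, and then vanishes by contraction in an exponentially weighted
norm. -/
lemma DChain.eq_zero_of_zeros_atTop {N : ℕ} (hN0 : 0 < N) {γ ε : ℕ → ℝ} {z : ℕ → ℝ → ℝ}
    {T K C δ : ℝ} (hz : DChain N γ ε (Set.Ici T) z) (hγ : ∀ j < N, 0 < γ j)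
    (hε : ∀ j < N, ε j = 1 ∨ ε j = -1)
    (hK : ∀ j ≤ N, ∀ t ≥ T, |z j t| ≤ K) (hδ : 0 < δ) (hC : 0 ≤ C)
    (hN : ∀ t ≥ T, |z N t| ≤ C * rexp (-δ * t) * |z 0 t|)
    (hzero : ∀ R, ∃ x > R, z 0 x = 0) : ∀ t ≥ T, z 0 t = 0 := by
  have hzeros : ∀ j ≤ N, ∀ R, ∃ x > R, z j x = 0 := by
    intro j
    induction j with
    | zero => exact fun _ => hzero
    | succ j ih =>
      intro hj
      exact zeros_propagate (by rcases hε j (by omega) with h | h <;> rw [h] <;> norm_num)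
        (hz j (by omega)) (ih (by omega))
  -- one step: the rate improves by `δ`, as long as it avoids the exponents `γ j`
  have down : ∀ b C₀ : ℝ, 0 ≤ b → 0 ≤ C₀ → (∀ j < N, b ≠ γ j) →
      (∀ t ≥ T, |z N t| ≤ C₀ * rexp (-b * t)) →
      ∀ i ≤ N, ∃ C₁, 0 ≤ C₁ ∧ ∀ t ≥ T, |z (N - i) t| ≤ C₁ * rexp (-b * t) := by
    intro b C₀ hb hC₀ hne h i
    induction i with
    | zero => exact fun _ => ⟨C₀, hC₀, h⟩
    | succ i ih =>
      intro hi
      obtain ⟨C₁, hC₁, h1⟩ := ih (by omega)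
      set j := N - (i + 1) with hj
      have hjN : j < N := by omega
      rw [show N - i = j + 1 by omega] at h1
      have hd := hz j hjN
      have hgj := hγ j hjN
      rcases hε j hjN with he | he
      · rw [he] at hd
        rcases lt_or_gt_of_ne (hne j hjN) with hlt | hlt
        · have : 0 < γ j - b := by linarith
          refine ⟨rexp (b * T) * |z j T| + C₁ / (γ j - b), by positivity, fun t ht => ?_⟩
          refine (step_plus hlt hC₁ ht hd h1).trans ?_
          have h3 : rexp (-γ j * (t - T)) * |z j T| ≤ rexp (b * T) * |z j T| * rexp (-b * t) := by
            rw [mul_right_comm, ← exp_add]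
            exact mul_le_mul_of_nonneg_right (exp_le_exp.2 (by nlinarith [show T ≤ t from ht]))
              (abs_nonneg _)
          rw [add_mul]
          linarith
        · have : 0 < b - γ j := by linarith
          exact ⟨C₁ / (b - γ j), by positivity,
            fun t ht => step_zero hlt ht (hzeros j hjN.le) hd h1⟩
      · rw [he] at hd
        exact ⟨C₁ / (γ j + b), by positivity, fun t ht =>
          step_minus (by linarith) hgj ht (fun x hx => hK j hjN.le x hx) hd h1⟩
  have iter : ∀ m : ℕ, ∃ b : ℝ, m * (δ / 2) ≤ b ∧ ∃ C₀, 0 ≤ C₀ ∧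
      ∀ t ≥ T, |z 0 t| ≤ C₀ * rexp (-b * t) := by
    intro m
    induction m with
    | zero =>
      have hK0 : 0 ≤ K := (abs_nonneg _).trans (hK 0 (Nat.zero_le _) T le_rfl)
      exact ⟨0, by simp, K, hK0, fun t ht => by simpa using hK 0 (Nat.zero_le _) t ht⟩
    | succ m ih =>
      obtain ⟨b, hb, C₀, hC₀, h⟩ := ih
      have hb0 : 0 ≤ b := le_trans (by positivity) hb
      -- a slightly smaller gain than `δ` is taken to avoid the resonances `b' = γ j`
      obtain ⟨b', ⟨hb1, hb2⟩, hb'⟩ : ∃ b' ∈ Set.Ioo (b + δ / 2) (b + δ),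
          b' ∉ ((Finset.range N).image γ : Set ℝ) := by
        have hinf : (Set.Ioo (b + δ / 2) (b + δ)).Infinite := Set.Ioo_infinite (by linarith)
        exact (hinf.sdiff ((Finset.range N).image γ).finite_toSet).nonempty.imp
          fun x hx => ⟨hx.1, hx.2⟩
      have hne : ∀ j < N, b' ≠ γ j := by
        intro j hj he
        exact hb' (by simp only [Finset.coe_image, Finset.coe_range]; exact ⟨j, hj, he.symm⟩)
      refine ⟨b', by push_cast; linarith, ?_⟩
      have := down b' (C * C₀ * rexp ((b' - δ - b) * T)) (by linarith) (by positivity) hne ?_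
        N le_rfl
      · simpa using this
      · intro t ht
        calc |z N t| ≤ C * rexp (-δ * t) * |z 0 t| := hN t ht
          _ ≤ C * rexp (-δ * t) * (C₀ * rexp (-b * t)) := by gcongr; exact h t ht
          _ = C * C₀ * rexp (-δ * t + -b * t) := by rw [exp_add]; ring
          _ ≤ C * C₀ * rexp ((b' - δ - b) * T + -b' * t) := by
            exact mul_le_mul_of_nonneg_left
              (exp_le_exp.2 (by nlinarith [show T ≤ t from ht])) (by positivity)
          _ = _ := by rw [exp_add]; ring
  set C₁ : ℝ := C * rexp (-δ * T) with hC₁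
  have hC₁0 : 0 ≤ C₁ := by positivity
  have hN1 : ∀ t ≥ T, |z N t| ≤ C₁ * |z 0 t| := by
    intro t ht
    refine (hN t ht).trans ?_
    rw [hC₁]
    exact mul_le_mul_of_nonneg_right (mul_le_mul_of_nonneg_left
      (exp_le_exp.2 (by nlinarith [show T ≤ t from ht])) hC) (abs_nonneg _)
  set G : ℝ := ∑ j ∈ Finset.range N, γ j with hG
  have hGj : ∀ j < N, γ j ≤ G := fun j hj =>
    Finset.single_le_sum (fun i hi => (hγ i (Finset.mem_range.1 hi)).le) (Finset.mem_range.2 hj)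
  obtain ⟨m, hm⟩ := exists_nat_gt ((G + 2 * C₁ + 1) / (δ / 2))
  obtain ⟨b, hb, A, hA, h⟩ := iter m
  rw [div_lt_iff₀ (by positivity)] at hm
  have hgap : ∀ j < N, 2 * C₁ + 1 ≤ b - γ j := fun j hj => by linarith [hGj j hj]
  have hstep : ∀ j < N, ∀ C₀ : ℝ, 0 ≤ C₀ → (∀ t ≥ T, |z (j + 1) t| ≤ C₀ * rexp (-b * t)) →
      ∀ t ≥ T, |z j t| ≤ C₀ / (2 * C₁ + 1) * rexp (-b * t) := by
    intro j hj C₀ hC₀ h1 t ht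
    have hd := hz j hj
    have hgj := hγ j hj
    have hgp := hgap j hj
    rcases hε j hj with he | he
    · rw [he] at hd
      refine (step_zero (by linarith) ht (hzeros j hj.le) hd h1).trans ?_
      gcongr
    · rw [he] at hd
      refine (step_minus (by linarith) hgj ht (fun x hx => hK j hj.le x hx) hd h1).trans ?_
      exact mul_le_mul_of_nonneg_right (div_le_div_of_nonneg_left hC₀ (by linarith)
        (by linarith)) (exp_pos _).le
  have contract : ∀ A : ℝ, 0 ≤ A → (∀ t ≥ T, |z 0 t| ≤ A * rexp (-b * t)) →
      ∀ t ≥ T, |z 0 t| ≤ A / 2 * rexp (-b * t) := by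
    intro A hA hA1
    have hd : ∀ i < N, ∀ t ≥ T, |z (N - i) t| ≤ C₁ * A * rexp (-b * t) := by
      intro i
      induction i with
      | zero =>
        intro _ t ht
        refine (hN1 t ht).trans ?_
        exact (mul_le_mul_of_nonneg_left (hA1 t ht) hC₁0).trans_eq (mul_assoc _ _ _).symm
      | succ i ih =>
        intro hi t ht
        have h1 := ih (by omega)
        rw [show N - i = N - (i + 1) + 1 by omega] at h1
        refine (hstep (N - (i + 1)) (by omega) _ (by positivity) h1 t ht).trans ?_
        gcongr
        apply div_le_self (by positivity); linarith
    intro t ht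
    have h1 := hd (N - 1) (by omega)
    rw [show N - (N - 1) = 0 + 1 by omega] at h1
    refine (hstep 0 hN0 _ (by positivity) h1 t ht).trans ?_
    gcongr ?_ * _
    rw [div_le_div_iff₀ (by positivity) (by norm_num)]
    nlinarith
  intro t ht
  have hall : ∀ m : ℕ, ∀ t ≥ T, |z 0 t| ≤ A / 2 ^ m * rexp (-b * t) := by
    intro m
    induction m with
    | zero => simpa using h
    | succ m ih =>
      intro t ht
      have := contract _ (by positivity) ih t ht
      rwa [div_div, ← pow_succ] at this
  have hlim : Tendsto (fun m : ℕ => A / 2 ^ m * rexp (-b * t)) atTop (𝓝 (0 * rexp (-b * t))) := by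
    refine Tendsto.mul_const _ ?_
    refine tendsto_const_nhds.div_atTop (tendsto_pow_atTop_atTop_of_one_lt (by norm_num))
  have := ge_of_tendsto' hlim (fun m => hall m t ht)
  rw [zero_mul] at this
  exact abs_nonpos_iff.1 this

/-! ### Unique continuation for chains -/

/-- Unique continuation: a chain with `|z N| ≤ C |z 0|` and a common zero of all its entries
vanishes, by Grönwall. -/
lemma DChain.eq_zero_of_eq_zero_at {N : ℕ} (hN0 : 0 < N) {γ ε : ℕ → ℝ} {z : ℕ → ℝ → ℝ}
    {D : Set ℝ} (hD : Convex ℝ D) (hz : DChain N γ ε (interior D) z)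
    (hε : ∀ j < N, ε j = 1 ∨ ε j = -1) (hcont : ∀ j < N, ContinuousOn (z j) D) {C : ℝ}
    (hN : ∀ t ∈ interior D, |z N t| ≤ C * |z 0 t|) {s : ℝ} (hs : s ∈ D)
    (h0 : ∀ j < N, z j s = 0) : ∀ t ∈ D, z 0 t = 0 := by
  set E : ℝ → ℝ := fun t => ∑ j ∈ Finset.range N, z j t ^ 2 with hE
  set E' : ℝ → ℝ := fun t => ∑ j ∈ Finset.range N,
    2 * z j t * (ε j * (z (j + 1) t - γ j * z j t)) with hE'
  set G : ℝ := ∑ j ∈ Finset.range N, |γ j| with hG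
  have hEc : ContinuousOn E D := continuousOn_finsetSum _ fun j hj =>
    (hcont j (Finset.mem_range.1 hj)).pow 2
  have hEd : ∀ t ∈ interior D, HasDerivAt E (E' t) t := by
    intro t ht
    refine (HasDerivAt.fun_sum (u := Finset.range N) (A := fun j t => z j t ^ 2)
      (A' := fun j => 2 * z j t * (ε j * (z (j + 1) t - γ j * z j t))) (x := t) ?_)
    intro j hj
    refine ((hz j (Finset.mem_range.1 hj) t ht).pow 2).congr_deriv ?_
    push_cast; ring
  set K : ℝ := 2 + 2 * G + C ^ 2 with hK
  have hE0 : ∀ t, 0 ≤ E t := fun t => Finset.sum_nonneg fun j _ => sq_nonneg _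
  have hbound : ∀ t ∈ interior D, |E' t| ≤ K * E t := by
    intro t ht
    have h1 : |E' t| ≤ ∑ j ∈ Finset.range N, ((1 + 2 * G) * z j t ^ 2 + z (j + 1) t ^ 2) := by
      refine (Finset.abs_sum_le_sum_abs _ _).trans (Finset.sum_le_sum fun j hj => ?_)
      have hj' := Finset.mem_range.1 hj
      have hG1 : |γ j| ≤ G := Finset.single_le_sum (f := fun j => |γ j|)
        (fun i _ => abs_nonneg _) hj
      have he : |ε j| = 1 := by rcases hε j hj' with h | h <;> rw [h] <;> simp
      rw [abs_mul, abs_mul, abs_mul, he, one_mul, abs_two]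
      have h2 : |z (j + 1) t - γ j * z j t| ≤ |z (j + 1) t| + |γ j| * |z j t| := by
        rw [← abs_mul]; exact abs_sub _ _
      rw [← sq_abs (z j t), ← sq_abs (z (j + 1) t)]
      have ha := abs_nonneg (z j t)
      calc 2 * |z j t| * |z (j + 1) t - γ j * z j t|
          ≤ 2 * |z j t| * (|z (j + 1) t| + |γ j| * |z j t|) := by gcongr
        _ ≤ 2 * |z j t| * (|z (j + 1) t| + G * |z j t|) := by gcongr
        _ ≤ _ := by nlinarith [sq_nonneg (|z j t| - |z (j + 1) t|)]
    have h3 : ∑ j ∈ Finset.range N, z (j + 1) t ^ 2 ≤ E t + z N t ^ 2 := by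
      have := Finset.sum_range_succ' (fun j => z j t ^ 2) N
      have h4 := Finset.sum_range_succ (fun j => z j t ^ 2) N
      have := sq_nonneg (z 0 t)
      simp only [hE]; linarith
    have h5 : z N t ^ 2 ≤ C ^ 2 * E t := by
      have h6 : z 0 t ^ 2 ≤ E t := Finset.single_le_sum (f := fun j => z j t ^ 2)
        (fun i _ => sq_nonneg _) (Finset.mem_range.2 hN0)
      calc z N t ^ 2 = |z N t| ^ 2 := (sq_abs _).symm
        _ ≤ (C * |z 0 t|) ^ 2 := by gcongr; exact hN t ht
        _ = C ^ 2 * z 0 t ^ 2 := by rw [mul_pow, sq_abs]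
        _ ≤ _ := by gcongr
    rw [Finset.sum_add_distrib, ← Finset.mul_sum] at h1
    rw [hK]
    have : (∑ j ∈ Finset.range N, z j t ^ 2) = E t := rfl
    rw [this] at h1
    nlinarith
  have hEs : E s = 0 := Finset.sum_eq_zero fun j hj => by
    rw [h0 j (Finset.mem_range.1 hj)]; norm_num
  have hexp : ∀ κ t : ℝ, HasDerivAt (fun s : ℝ => rexp (κ * s)) (rexp (κ * t) * κ) t := by
    intro κ t
    simpa using ((hasDerivAt_id t).const_mul κ).exp
  have hmain : ∀ t ∈ D, E t = 0 := by
    intro t ht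
    refine le_antisymm ?_ (hE0 t)
    have hprod : ∀ κ : ℝ, ∀ x ∈ interior D, HasDerivAt (fun x => rexp (κ * x) * E x)
        (rexp (κ * x) * (κ * E x + E' x)) x := by
      intro κ x hx
      refine ((hexp κ x).mul (hEd x hx)).congr_deriv ?_
      ring
    have hpc : ∀ κ : ℝ, ContinuousOn (fun x => rexp (κ * x) * E x) D := fun κ =>
      (by fun_prop : Continuous fun x : ℝ => rexp (κ * x)).continuousOn.mul hEc
    rcases le_total t s with h | h
    · have hm : MonotoneOn (fun x => rexp (K * x) * E x) D := by
        refine monotoneOn_of_deriv_nonneg hD (hpc K)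
          (fun x hx => (hprod K x hx).differentiableAt.differentiableWithinAt) fun x hx => ?_
        rw [(hprod K x hx).deriv]
        have := (abs_le.1 (hbound x hx)).1
        exact mul_nonneg (exp_pos _).le (by linarith)
      have := hm ht hs h
      simp only [hEs, mul_zero] at this
      exact nonpos_of_mul_nonpos_right this (exp_pos _)
    · have hm : AntitoneOn (fun x => rexp (-K * x) * E x) D := by
        refine antitoneOn_of_deriv_nonpos hD (hpc (-K))
          (fun x hx => (hprod _ x hx).differentiableAt.differentiableWithinAt) fun x hx => ?_
        rw [(hprod _ x hx).deriv]
        have := (abs_le.1 (hbound x hx)).2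
        exact mul_nonpos_of_nonneg_of_nonpos (exp_pos _).le (by linarith)
      have := hm hs ht h
      simp only [hEs, mul_zero] at this
      exact nonpos_of_mul_nonpos_right this (exp_pos _)
  intro t ht
  have h1 : z 0 t ^ 2 ≤ E t := Finset.single_le_sum (f := fun j => z j t ^ 2)
    (fun i _ => sq_nonneg _) (Finset.mem_range.2 hN0)
  rw [hmain t ht] at h1
  exact pow_eq_zero_iff (two_ne_zero) |>.1 (le_antisymm h1 (sq_nonneg _))

/-- By Rolle, an accumulation point of zeros of the bottom entry is a common zero of the chain. -/
lemma DChain.eq_zero_of_accZeros {N : ℕ} (hN0 : 0 < N) {γ ε : ℕ → ℝ} {z : ℕ → ℝ → ℝ}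
    {D : Set ℝ} (hD : Convex ℝ D) (hz : DChain N γ ε (interior D) z)
    (hε : ∀ j < N, ε j = 1 ∨ ε j = -1) (hcont : ∀ j ≤ N, ContinuousOn (z j) D) {C : ℝ}
    (hN : ∀ t ∈ interior D, |z N t| ≤ C * |z 0 t|) {s : ℝ} (hs : s ∈ D)
    (h0 : ∀ η > 0, ∃ x ∈ D, x ≠ s ∧ |x - s| < η ∧ z 0 x = 0) : ∀ t ∈ D, z 0 t = 0 := by
  have lim : ∀ j ≤ N, (∀ η > 0, ∃ x ∈ D, x ≠ s ∧ |x - s| < η ∧ z j x = 0) → z j s = 0 := by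
    intro j hj h
    by_contra hne
    have hc := hcont j hj s hs
    have hev : ∀ᶠ x in 𝓝[D] s, z j x ≠ 0 := hc.eventually_ne hne
    rw [eventually_nhdsWithin_iff, Metric.eventually_nhds_iff] at hev
    obtain ⟨η, hη, hh⟩ := hev
    obtain ⟨x, hx, _, hxs, hx0⟩ := h η hη
    exact hh (by rwa [Real.dist_eq]) hx hx0
  have acc : ∀ j ≤ N, ∀ η > 0, ∃ x ∈ D, x ≠ s ∧ |x - s| < η ∧ z j x = 0 := by
    intro j
    induction j with
    | zero => exact fun _ => h0
    | succ j ih =>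
      intro hj η hη
      have ih' := ih (by omega)
      have hzs := lim j (by omega) ih'
      obtain ⟨x, hx, hxs, hxη, hx0⟩ := ih' η hη
      have hej : ε j ≠ 0 := by rcases hε j (by omega) with h | h <;> rw [h] <;> norm_num
      have key : ∀ a ∈ D, ∀ b ∈ D, a < b → z j a = 0 → z j b = 0 →
          ∃ c ∈ Set.Ioo a b, z (j + 1) c = 0 := by
        intro a ha b hb hab hza hzb
        have hI : Set.Icc a b ⊆ D := hD.ordConnected.out ha hb
        have hIo : Set.Ioo a b ⊆ interior D :=
          interior_maximal (Set.Ioo_subset_Icc_self.trans hI) isOpen_Ioo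
        obtain ⟨c, hc, hc0⟩ := exists_hasDerivAt_eq_zero (f := fun s => rexp (ε j * γ j * s) * z j s)
          (f' := fun x => ε j * (rexp (ε j * γ j * x) * z (j + 1) x)) hab
          ((by fun_prop : Continuous fun x : ℝ => rexp (ε j * γ j * x)).continuousOn.mul
            ((hcont j (by omega)).mono hI)) (by simp [hza, hzb])
          (fun x hx => hasDerivAt_exp_mul (hz j (by omega) x (hIo hx)))
        exact ⟨c, hc, by simpa [hej, (exp_pos _).ne'] using hc0⟩
      rcases lt_or_gt_of_ne hxs with h | h
      · obtain ⟨c, hc, hc0⟩ := key x hx s hs h hx0 hzs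
        refine ⟨c, hD.ordConnected.out hx hs (Set.Ioo_subset_Icc_self hc), hc.2.ne, ?_, hc0⟩
        rw [abs_lt] at hxη ⊢
        constructor <;> linarith [hc.1, hc.2]
      · obtain ⟨c, hc, hc0⟩ := key s hs x hx h hzs hx0
        refine ⟨c, hD.ordConnected.out hs hx (Set.Ioo_subset_Icc_self hc), hc.1.ne', ?_, hc0⟩
        rw [abs_lt] at hxη ⊢
        constructor <;> linarith [hc.1, hc.2]
  exact hz.eq_zero_of_eq_zero_at hN0 hD hε (fun j hj => hcont j hj.le) hN hs
    (fun j hj => lim j hj.le (acc j hj.le))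

/-- A bounded solution on a line or half-line whose potential decays exponentially at the infinite
ends vanishes as soon as it has infinitely many zeros. -/
lemma DChain.eq_zero_of_infinite_zeros {N : ℕ} (hN0 : 0 < N) {γ ε : ℕ → ℝ} {z : ℕ → ℝ → ℝ}
    {D : Set ℝ} (hD : Convex ℝ D) (hDc : IsClosed D) (hz : DChain N γ ε (interior D) z)
    (hγ : ∀ j < N, 0 < γ j)
    (hε : ∀ j < N, ε j = 1 ∨ ε j = -1) (hcont : ∀ j ≤ N, ContinuousOn (z j) D) {C K : ℝ}
    (hK : ∀ j ≤ N, ∀ t ∈ D, |z j t| ≤ K)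
    (hN : ∀ t ∈ interior D, |z N t| ≤ C * |z 0 t|)
    (hm : ∃ T δ C : ℝ, 0 < δ ∧ 0 ≤ C ∧ Set.Iic T ⊆ interior D ∧
      ∀ t ≤ T, |z N t| ≤ C * rexp (δ * t) * |z 0 t|)
    (hp : BddAbove D ∨ ∃ T δ C : ℝ, 0 < δ ∧ 0 ≤ C ∧ Set.Ici T ⊆ interior D ∧
      ∀ t ≥ T, |z N t| ≤ C * rexp (-δ * t) * |z 0 t|)
    (hinf : {t ∈ D | z 0 t = 0}.Infinite) : ∀ t ∈ D, z 0 t = 0 := by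
  set S := {t ∈ D | z 0 t = 0} with hS
  have hSD : S ⊆ D := fun t ht => ht.1
  have fin : ∀ s, Set.Ioo (s - 1) (s + 1) ⊆ D → (∀ t ∈ Set.Ioo (s - 1) (s + 1), z 0 t = 0) →
      ∀ t ∈ D, z 0 t = 0 := by
    intro s h1 h2
    refine hz.eq_zero_of_accZeros hN0 hD hε hcont hN (s := s)
      (h1 ⟨by linarith, by linarith⟩) fun η hη => ?_
    have hmin : 0 < min η 1 := lt_min hη one_pos
    have hx : s + min η 1 / 2 ∈ Set.Ioo (s - 1) (s + 1) :=
      ⟨by linarith, by linarith [min_le_right η 1]⟩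
    refine ⟨_, h1 hx, by linarith, ?_, h2 _ hx⟩
    rw [add_sub_cancel_left, abs_of_pos (by linarith)]
    linarith [min_le_left η 1]
  by_cases hb : BddBelow S
  · by_cases ha : BddAbove S
    · obtain ⟨a, ha⟩ := ha
      obtain ⟨b, hb⟩ := hb
      have hcomp : IsCompact (Set.Icc b a ∩ D) := isCompact_Icc.inter_right hDc
      have hsub : S ⊆ Set.Icc b a ∩ D := fun x hx => ⟨⟨hb hx, ha hx⟩, hx.1⟩
      obtain ⟨s, hs, hacc⟩ := hinf.exists_accPt_of_subset_isCompact hcomp hsub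
      refine hz.eq_zero_of_accZeros hN0 hD hε hcont hN (s := s) hs.2 fun η hη => ?_
      rw [accPt_iff_nhds] at hacc
      obtain ⟨x, hx, hxs⟩ := hacc (Metric.ball s η) (Metric.ball_mem_nhds s hη)
      refine ⟨x, hx.2.1, hxs, ?_, hx.2.2⟩
      rw [← Real.dist_eq]; exact hx.1
    · rcases hp with hp | ⟨T, δ, C', hδ, hC', hT, hN'⟩
      · exact absurd (hp.mono hSD) ha
      · have h0 : ∀ t ≥ T, z 0 t = 0 := by
          refine DChain.eq_zero_of_zeros_atTop hN0 (hz.mono hT) hγ hε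
            (fun j hj t ht => hK j hj t (interior_subset (hT ht))) hδ hC' hN' ?_
          intro R
          rw [not_bddAbove_iff] at ha
          obtain ⟨x, hx, hxR⟩ := ha R
          exact ⟨x, hxR, hx.2⟩
        refine fin (T + 1) (fun x hx => interior_subset (hT ?_)) (fun x hx => h0 x ?_)
        · simp only [Set.mem_Ici]; linarith [hx.1]
        · linarith [hx.1]
  · obtain ⟨T, δ, C', hδ, hC', hT, hN'⟩ := hm
    have h0 : ∀ t ≥ -T, z 0 (-t) = 0 := by
      refine DChain.eq_zero_of_zeros_atTop (z := fun j t => z j (-t)) hN0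
        (hz.reflect.mono (fun t ht => hT (by simp only [Set.mem_Ici] at ht
                                             simp only [Set.mem_Iic]; linarith))) hγ ?_
        (fun j hj t ht => hK j hj (-t) (interior_subset (hT (by simp only [Set.mem_Iic]; linarith))))
        hδ hC' ?_ ?_
      · intro j hj
        rcases hε j hj with h | h <;> rw [h] <;> norm_num
      · intro t ht
        have := hN' (-t) (by linarith)
        rwa [mul_neg, ← neg_mul] at this
      · intro R
        rw [not_bddBelow_iff] at hb
        obtain ⟨x, hx, hxR⟩ := hb (-R)
        exact ⟨-x, by linarith, by simpa using hx.2⟩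
    refine fin (T - 1) (fun x hx => interior_subset (hT ?_)) (fun x hx => ?_)
    · simp only [Set.mem_Iic]; linarith [hx.2]
    · have := h0 (-x) (by linarith [hx.2])
      simpa using this

/-! ### Counting sign changes -/

/-- `z` takes values of alternating strict sign at `m + 1` increasing points of `I`. -/
def Alt (I : Set ℝ) (z : ℝ → ℝ) (m : ℕ) : Prop :=
  ∃ σ : ℝ, ∃ t : ℕ → ℝ, (∀ i ≤ m, t i ∈ I ∧ 0 < σ * (-1) ^ i * z (t i)) ∧
    ∀ i < m, t i < t (i + 1)

/-- `φ` is arbitrarily small at suitable points of `I` to the left of any given point. -/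
def LeftSmall (I : Set ℝ) (φ : ℝ → ℝ) : Prop :=
  ∀ t ∈ I, ∀ η > 0, ∃ s ∈ I, s < t ∧ |φ s| < η

/-- `φ` is arbitrarily small at suitable points of `I` to the right of any given point. -/
def RightSmall (I : Set ℝ) (φ : ℝ → ℝ) : Prop :=
  ∀ t ∈ I, ∀ η > 0, ∃ s ∈ I, t < s ∧ |φ s| < η

/-- Passing to the derivative loses at most one sign change; smallness at one end compensates
the loss, and smallness at both ends yields a gain of one. -/
lemma Alt.deriv {I : Set ℝ} (hI : I.OrdConnected) {φ φ' : ℝ → ℝ}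
    (hd : ∀ t ∈ I, HasDerivAt φ (φ' t) t) {m : ℕ} (h : Alt I φ m) :
    (LeftSmall I φ ∨ RightSmall I φ → Alt I φ' m) ∧
    (LeftSmall I φ → RightSmall I φ → Alt I φ' (m + 1)) := by
  obtain ⟨σ, t, ht, hlt⟩ := h
  have mvt : ∀ a ∈ I, ∀ b ∈ I, a < b → ∃ c ∈ Set.Ioo a b, c ∈ I ∧
      φ' c = (φ b - φ a) / (b - a) := by
    intro a ha b hb hab
    have hs : Set.Icc a b ⊆ I := hI.out ha hb
    obtain ⟨c, hc, hc'⟩ := exists_hasDerivAt_eq_slope φ φ' hab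
      (fun x hx => (hd x (hs hx)).continuousAt.continuousWithinAt)
      (fun x hx => hd x (hs (Set.Ioo_subset_Icc_self hx)))
    exact ⟨c, hc, hs (Set.Ioo_subset_Icc_self hc), hc'⟩
  have mid : ∀ i, ∃ c, i < m → (t i < c ∧ c < t (i + 1) ∧ c ∈ I ∧
      0 < σ * (-1) ^ (i + 1) * φ' c) := by
    intro i
    by_cases hi : i < m
    · obtain ⟨c, hc, hcI, hc'⟩ := mvt _ (ht i hi.le).1 _ (ht (i + 1) hi).1 (hlt i hi)
      refine ⟨c, fun _ => ⟨hc.1, hc.2, hcI, ?_⟩⟩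
      rw [hc', mul_div_assoc']
      apply div_pos _ (by linarith [hlt i hi])
      have h1 := (ht i hi.le).2
      have h2 := (ht (i + 1) hi).2
      rw [pow_succ] at h2 ⊢
      linarith
    · exact ⟨0, fun h => absurd h hi⟩
  choose ρ hρ using mid
  have left : LeftSmall I φ → ∃ c ∈ I, c < t 0 ∧ 0 < σ * φ' c := by
    intro hL
    have h0 := (ht 0 (Nat.zero_le _)).2
    rw [pow_zero, mul_one] at h0
    have hφ0 : 0 < |φ (t 0)| := abs_pos.2 (right_ne_zero_of_mul h0.ne')
    have hσ : 0 < |σ| := abs_pos.2 (left_ne_zero_of_mul h0.ne')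
    obtain ⟨s, hs, hst, hsm⟩ := hL _ (ht 0 (Nat.zero_le _)).1 _ hφ0
    obtain ⟨c, hc, hcI, hc'⟩ := mvt _ hs _ (ht 0 (Nat.zero_le _)).1 hst
    refine ⟨c, hcI, hc.2, ?_⟩
    rw [hc', mul_div_assoc']
    apply div_pos _ (by linarith)
    have h1 : |σ * φ s| < σ * φ (t 0) := by
      rw [← abs_of_pos h0, abs_mul, abs_mul]; gcongr
    linarith [(abs_lt.1 h1).2]
  have right : RightSmall I φ → ∃ c ∈ I, t m < c ∧ 0 < σ * (-1) ^ (m + 1) * φ' c := by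
    intro hR
    have h0 := (ht m le_rfl).2
    have hφ0 : 0 < |φ (t m)| := abs_pos.2 (right_ne_zero_of_mul h0.ne')
    have hσ : 0 < |σ * (-1) ^ m| := abs_pos.2 (left_ne_zero_of_mul h0.ne')
    obtain ⟨s, hs, hst, hsm⟩ := hR _ (ht m le_rfl).1 _ hφ0
    obtain ⟨c, hc, hcI, hc'⟩ := mvt _ (ht m le_rfl).1 _ hs hst
    refine ⟨c, hcI, hc.1, ?_⟩
    rw [hc', mul_div_assoc']
    apply div_pos _ (by linarith)
    have h1 : |σ * (-1) ^ m * φ s| < σ * (-1) ^ m * φ (t m) := by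
      rw [← abs_of_pos h0, abs_mul _ (φ s), abs_mul _ (φ (t m))]; gcongr
    rw [pow_succ]
    linarith [(abs_lt.1 h1).2]
  refine ⟨?_, ?_⟩
  · rintro (hL | hR)
    · obtain ⟨c, hcI, hc, hc'⟩ := left hL
      refine ⟨σ, fun i => Nat.casesOn i c ρ, ?_, ?_⟩
      · rintro (_ | i) hi
        · simpa using ⟨hcI, hc'⟩
        · exact ⟨(hρ i hi).2.2.1, (hρ i hi).2.2.2⟩
      · rintro (_ | i) hi
        · exact hc.trans (hρ 0 hi).1
        · exact (hρ i (by omega)).2.1.trans (hρ (i + 1) hi).1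
    · obtain ⟨c, hcI, hc, hc'⟩ := right hR
      refine ⟨-σ, fun i => if i < m then ρ i else c, ?_, ?_⟩
      · intro i hi
        by_cases him : i < m
        · simp only [him, if_true]
          refine ⟨(hρ i him).2.2.1, ?_⟩
          have := (hρ i him).2.2.2
          rw [pow_succ] at this
          linarith
        · have : i = m := by omega
          subst this
          simp only [him, if_false]
          refine ⟨hcI, ?_⟩
          rw [pow_succ] at hc'
          linarith
      · intro i hi
        by_cases him : i + 1 < m
        · simp only [hi, him, if_true]
          exact (hρ i hi).2.1.trans (hρ (i + 1) him).1
        · have : i + 1 = m := by omega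
          simp only [hi, him, if_true, if_false]
          have h1 := (hρ i hi).2.1
          rw [this] at h1
          exact h1.trans hc
  · intro hL hR
    obtain ⟨c, hcI, hc, hc'⟩ := left hL
    obtain ⟨d, hdI, hd', hd''⟩ := right hR
    refine ⟨σ, fun i => Nat.casesOn i c (fun i => if i < m then ρ i else d), ?_, ?_⟩
    · rintro (_ | i) hi
      · simpa using ⟨hcI, hc'⟩
      · by_cases him : i < m
        · simp only [him, if_true]
          exact ⟨(hρ i him).2.2.1, (hρ i him).2.2.2⟩
        · have : i = m := by omega
          subst this
          simp only [him, if_false]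
          exact ⟨hdI, hd''⟩
    · rintro (_ | i) hi
      · by_cases him : 0 < m
        · simp only [him, if_true]
          exact hc.trans (hρ 0 him).1
        · have : m = 0 := by omega
          subst this
          simp only [lt_irrefl, if_false]
          exact hc.trans hd'
      · have hi' : i < m := by omega
        by_cases him : i + 1 < m
        · simp only [hi', him, if_true]
          exact (hρ i hi').2.1.trans (hρ (i + 1) him).1
        · have : i + 1 = m := by omega
          simp only [hi', him, if_true, if_false]
          have h1 := (hρ i hi').2.1
          rw [this] at h1
          exact h1.trans hd'

lemma Alt.of_sign {I : Set ℝ} {z y : ℝ → ℝ} {m : ℕ} (h : Alt I z m)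
    (hzy : ∃ κ : ℝ, ∀ t ∈ I, ∀ s, 0 < s * z t → 0 < s * κ * y t) : Alt I y m := by
  obtain ⟨σ, t, ht, hlt⟩ := h
  obtain ⟨κ, hκ⟩ := hzy
  refine ⟨σ * κ, t, fun i hi => ⟨(ht i hi).1, ?_⟩, hlt⟩
  have := hκ _ (ht i hi).1 _ (ht i hi).2
  linarith

/-- `Alt.deriv` for one link of a chain, through the integrating factor `e^{εγt}`. -/
lemma Alt.chain_step {I : Set ℝ} (hI : I.OrdConnected) {z y : ℝ → ℝ} {γ ε : ℝ}
    (hd : ∀ t ∈ I, HasDerivAt z (ε * (y t - γ * z t)) t) {m : ℕ}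
    (h : Alt I z m) :
    (LeftSmall I (fun t => rexp (ε * γ * t) * z t) ∨
      RightSmall I (fun t => rexp (ε * γ * t) * z t) → Alt I y m) ∧
    (LeftSmall I (fun t => rexp (ε * γ * t) * z t) →
      RightSmall I (fun t => rexp (ε * γ * t) * z t) → Alt I y (m + 1)) := by
  have h1 : Alt I (fun t => rexp (ε * γ * t) * z t) m := by
    refine h.of_sign ⟨1, fun t _ s hs => ?_⟩
    have := mul_pos (exp_pos (ε * γ * t)) hs
    linarith
  have h2 := h1.deriv hI (fun t ht => hasDerivAt_exp_mul (hd t ht))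
  have h3 : ∀ m, Alt I (fun t => ε * (rexp (ε * γ * t) * y t)) m → Alt I y m := by
    intro m hm
    refine hm.of_sign ⟨ε, fun t _ s hs => ?_⟩
    have h4 : 0 < rexp (ε * γ * t) * (s * ε * y t) := by linarith
    exact pos_of_mul_pos_right h4 (exp_pos _).le
  exact ⟨fun h => h3 _ (h2.1 h), fun hL hR => h3 _ (h2.2 hL hR)⟩

/-- Each link keeps the number of sign changes if its weighted entry is small at one end; a link
small at both ends gains one. -/
lemma DChain.alt_gain {N : ℕ} {γ ε : ℕ → ℝ} {z : ℕ → ℝ → ℝ} {I : Set ℝ} (hI : I.OrdConnected)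
    (hz : DChain N γ ε I z)
    (hs : ∀ j < N, LeftSmall I (fun t => rexp (ε j * γ j * t) * z j t) ∨
      RightSmall I (fun t => rexp (ε j * γ j * t) * z j t))
    {j₀ : ℕ} (hj₀ : j₀ < N) (hL : LeftSmall I (fun t => rexp (ε j₀ * γ j₀ * t) * z j₀ t))
    (hR : RightSmall I (fun t => rexp (ε j₀ * γ j₀ * t) * z j₀ t)) {m : ℕ}
    (h : Alt I (z 0) m) : Alt I (z N) (m + 1) := by
  have h1 : ∀ j ≤ j₀, Alt I (z j) m := by
    intro j
    induction j with
    | zero => exact fun _ => h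
    | succ j ih =>
      intro hj
      exact ((ih (by omega)).chain_step hI (hz j (by omega))).1
        (hs j (by omega))
  have h2 : ∀ i, j₀ + 1 + i ≤ N → Alt I (z (j₀ + 1 + i)) (m + 1) := by
    intro i
    induction i with
    | zero => exact fun _ => ((h1 j₀ le_rfl).chain_step hI (hz j₀ hj₀)).2 hL hR
    | succ i ih =>
      intro hi
      exact ((ih (by omega)).chain_step hI (hz _ (by omega))).1
        (hs _ (by omega))
  have := h2 (N - (j₀ + 1)) (by omega)
  rwa [show j₀ + 1 + (N - (j₀ + 1)) = N by omega] at this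

lemma Alt.exists_zeros {I : Set ℝ} (hI : I.OrdConnected) {z : ℝ → ℝ} (hc : ContinuousOn z I)
    {m : ℕ} (h : Alt I z m) : ∃ x : ℕ → ℝ, Set.InjOn x (Set.Iio m) ∧
      ∀ i < m, x i ∈ {t ∈ I | z t = 0} := by
  obtain ⟨σ, t, ht, hlt⟩ := h
  have key : ∀ i, ∃ c, i < m → (t i < c ∧ c < t (i + 1) ∧ c ∈ I ∧ z c = 0) := by
    intro i
    by_cases hi : i < m
    · have hs : Set.Icc (t i) (t (i + 1)) ⊆ I := hI.out (ht i hi.le).1 (ht (i + 1) hi).1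
      have h1 := (ht i hi.le).2
      have h2 := (ht (i + 1) hi).2
      have hσ := left_ne_zero_of_mul h1.ne'
      have hcc : ContinuousOn (fun x => -(σ * (-1) ^ i * z x)) (Set.Icc (t i) (t (i + 1))) :=
        (continuousOn_const.mul (hc.mono hs)).neg
      have hmem : (0 : ℝ) ∈ Set.Ioo (-(σ * (-1) ^ i * z (t i)))
          (-(σ * (-1) ^ i * z (t (i + 1)))) := by
        rw [pow_succ] at h2
        constructor <;> linarith
      obtain ⟨c, hc, hc0⟩ := intermediate_value_Ioo (hlt i hi).le hcc hmem
      have hc0' : σ * (-1) ^ i * z c = 0 := by simpa only [neg_eq_zero] using hc0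
      exact ⟨c, fun _ => ⟨hc.1, hc.2, hs (Set.Ioo_subset_Icc_self hc),
        (mul_eq_zero.1 hc0').resolve_left hσ⟩⟩
    · exact ⟨0, fun h => absurd h hi⟩
  choose x hx using key
  refine ⟨x, ?_, fun i hi => ⟨(hx i hi).2.2.1, (hx i hi).2.2.2⟩⟩
  have hlt' : ∀ d i, i + d ≤ m → t i ≤ t (i + d) := by
    intro d
    induction d with
    | zero => intro i _; rfl
    | succ d ih =>
      intro i hi
      exact (ih i (by omega)).trans (hlt (i + d) (by omega)).le
  have hmono : ∀ i j, i < j → j < m → x i < x j := by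
    intro i j hij hj
    have h1 := hlt' (j - (i + 1)) (i + 1) (by omega)
    rw [show i + 1 + (j - (i + 1)) = j by omega] at h1
    exact (hx i (by omega)).2.1.trans_le (h1.trans (hx j hj).1.le)
  intro i hi j hj hij
  rcases lt_trichotomy i j with h | h | h
  · exact absurd hij (hmono i j h hj).ne
  · exact h
  · exact absurd hij (hmono j i h hi).ne'

/-- If a chain gains a sign change from bottom to top while top and bottom have equal signs, the
bottom entry has infinitely many zeros. -/
lemma DChain.infinite_zeros {N : ℕ} {γ ε : ℕ → ℝ} {z : ℕ → ℝ → ℝ} {I : Set ℝ}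
    (hI : I.OrdConnected) (hz : DChain N γ ε I z)
    (hs : ∀ j < N, LeftSmall I (fun t => rexp (ε j * γ j * t) * z j t) ∨
      RightSmall I (fun t => rexp (ε j * γ j * t) * z j t))
    {j₀ : ℕ} (hj₀ : j₀ < N) (hL : LeftSmall I (fun t => rexp (ε j₀ * γ j₀ * t) * z j₀ t))
    (hR : RightSmall I (fun t => rexp (ε j₀ * γ j₀ * t) * z j₀ t))
    (hsign : ∀ t ∈ I, ∀ s, 0 < s * z N t → 0 < s * z 0 t)
    (hne : ∃ t ∈ I, z 0 t ≠ 0) : {t ∈ I | z 0 t = 0}.Infinite := by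
  have hall : ∀ m, Alt I (z 0) m := by
    intro m
    induction m with
    | zero =>
      obtain ⟨t, ht, h0⟩ := hne
      refine ⟨z 0 t, fun _ => t, fun i hi => ⟨ht, ?_⟩, by simp⟩
      have : i = 0 := by omega
      subst this
      have := mul_self_pos.2 h0
      simpa using this
    | succ m ih =>
      refine (hz.alt_gain hI hs hj₀ hL hR ih).of_sign ⟨1, fun t ht s h => ?_⟩
      rw [mul_one]
      exact hsign t ht s h
  have hc : ContinuousOn (z 0) I := fun t ht =>
    (hz 0 (by omega) t ht).continuousAt.continuousWithinAt
  intro hfin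
  obtain ⟨x, hx, hx'⟩ := (hall (hfin.toFinset.card + 1)).exists_zeros hI hc
  have h1 : (Finset.range (hfin.toFinset.card + 1)).image x ⊆ hfin.toFinset := by
    intro y hy
    obtain ⟨i, hi, rfl⟩ := Finset.mem_image.1 hy
    rw [Set.Finite.mem_toFinset]
    exact hx' i (Finset.mem_range.1 hi)
  have h2 := Finset.card_le_card h1
  rw [Finset.card_image_of_injOn (by simpa using hx), Finset.card_range] at h2
  omega

/-! ### The power nonlinearity -/

/-- The odd power `|x|^{p-2} x`. -/
def Fnl (p x : ℝ) : ℝ := |x| ^ (p - 2) * x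

lemma abs_Fnl {p : ℝ} (hp : 2 < p) (x : ℝ) : |Fnl p x| = |x| ^ (p - 1) := by
  rw [Fnl, abs_mul, abs_of_nonneg (rpow_nonneg (abs_nonneg x) _)]
  rcases eq_or_ne x 0 with rfl | hx
  · rw [abs_zero, mul_zero, zero_rpow (by linarith)]
  · rw [← rpow_add_one (abs_ne_zero.2 hx)]; ring_nf

lemma Fnl_of_nonneg {p : ℝ} (hp : 2 < p) {x : ℝ} (hx : 0 ≤ x) : Fnl p x = x ^ (p - 1) := by
  rw [← abs_of_nonneg (show 0 ≤ Fnl p x from mul_nonneg (rpow_nonneg (abs_nonneg _) _) hx),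
    abs_Fnl hp, abs_of_nonneg hx]

lemma Fnl_neg (p x : ℝ) : Fnl p (-x) = -Fnl p x := by
  simp [Fnl]

lemma Fnl_mul_self_nonneg (p x : ℝ) : 0 ≤ Fnl p x * x := by
  rw [Fnl, mul_assoc]
  exact mul_nonneg (rpow_nonneg (abs_nonneg _) _) (mul_self_nonneg x)

lemma continuous_Fnl {p : ℝ} (hp : 2 < p) : Continuous (Fnl p) := by
  have : Continuous fun x : ℝ => |x| ^ (p - 2) :=
    continuous_abs.rpow_const (fun x => Or.inr (by linarith))
  exact this.mul continuous_id

lemma Fnl_mono {p : ℝ} (hp : 2 < p) : Monotone (Fnl p) := by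
  have h1 : ∀ a b, 0 ≤ a → a ≤ b → Fnl p a ≤ Fnl p b := by
    intro a b ha hab
    rw [Fnl_of_nonneg hp ha, Fnl_of_nonneg hp (ha.trans hab)]
    exact rpow_le_rpow ha hab (by linarith)
  have h0 : Fnl p 0 = 0 := by simp [Fnl]
  intro a b hab
  rcases le_total 0 a with ha | ha
  · exact h1 a b ha hab
  · rcases le_total 0 b with hb | hb
    · have h2 := h1 0 b le_rfl hb
      have h3 := h1 0 (-a) le_rfl (by linarith)
      rw [Fnl_neg] at h3
      linarith
    · have := h1 (-b) (-a) (by linarith) (by linarith)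
      rw [Fnl_neg, Fnl_neg] at this
      linarith

lemma Fnl_sub_sign {p : ℝ} (hp : 2 < p) (a b s : ℝ) (h : 0 < s * (Fnl p a - Fnl p b)) :
    0 < s * (a - b) := by
  rcases lt_trichotomy a b with hab | rfl | hab
  · have := Fnl_mono hp hab.le
    nlinarith
  · simp at h
  · have := Fnl_mono hp hab.le
    nlinarith

lemma abs_Fnl_sub_le {p : ℝ} (hp : 2 < p) (a b : ℝ) :
    |Fnl p a - Fnl p b| ≤ (p - 1) * (|a| + |b|) ^ (p - 2) * |a - b| := by
  have h1 : ∀ a b : ℝ, 0 ≤ b → b ≤ a →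
      |Fnl p a - Fnl p b| ≤ (p - 1) * (|a| + |b|) ^ (p - 2) * |a - b| := by
    intro a b hb hab
    have ha := hb.trans hab
    rw [Fnl_of_nonneg hp ha, Fnl_of_nonneg hp hb]
    have := (convex_Icc b a).norm_image_sub_le_of_norm_hasDerivWithin_le
      (f := fun x : ℝ => x ^ (p - 1)) (f' := fun x => (p - 1) * x ^ (p - 1 - 1))
      (C := (p - 1) * (|a| + |b|) ^ (p - 2)) (x := b) (y := a)
      (fun x _ => (hasDerivAt_rpow_const (Or.inr (by linarith))).hasDerivWithinAt)
      (fun x hx => by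
        have hx0 : 0 ≤ x := hb.trans hx.1
        rw [Real.norm_eq_abs, abs_of_nonneg (mul_nonneg (by linarith) (rpow_nonneg hx0 _)),
          show p - 1 - 1 = p - 2 by ring]
        refine mul_le_mul_of_nonneg_left (rpow_le_rpow hx0 ?_ (by linarith)) (by linarith)
        rw [abs_of_nonneg ha]
        linarith [hx.2, abs_nonneg b])
      (Set.left_mem_Icc.2 hab) (Set.right_mem_Icc.2 hab)
    simpa [Real.norm_eq_abs] using this
  have h2 : ∀ a b : ℝ, b ≤ a →
      |Fnl p a - Fnl p b| ≤ (p - 1) * (|a| + |b|) ^ (p - 2) * |a - b| := by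
    intro a b hab
    rcases le_total 0 b with hb | hb
    · exact h1 a b hb hab
    · rcases le_total 0 a with ha | ha
      · have h3 : |Fnl p a - Fnl p b| ≤ |a| ^ (p - 1) + |b| ^ (p - 1) := by
          rw [← abs_Fnl hp, ← abs_Fnl hp]; exact abs_sub _ _
        have h4 : |a - b| = |a| + |b| := by
          rw [abs_of_nonneg ha, abs_of_nonpos hb, abs_of_nonneg (by linarith)]; ring
        have key : ∀ x y : ℝ, 0 ≤ x → 0 ≤ y → x ^ (p - 1) ≤ (x + y) ^ (p - 2) * x := by
          intro x y hx hy
          have e : x ^ (p - 1) = x ^ (p - 2) * x := by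
            rw [← Fnl_of_nonneg hp hx, Fnl, abs_of_nonneg hx]
          rw [e]
          exact mul_le_mul_of_nonneg_right (rpow_le_rpow hx (by linarith) (by linarith)) hx
        have k1 := key |a| |b| (abs_nonneg _) (abs_nonneg _)
        have k2 := key |b| |a| (abs_nonneg _) (abs_nonneg _)
        rw [add_comm |b| |a|] at k2
        have h5 : 0 ≤ (|a| + |b|) ^ (p - 2) * (|a| + |b|) := by positivity
        rw [h4]
        nlinarith
      · have := h1 (-b) (-a) (by linarith) (by linarith)
        rw [Fnl_neg, Fnl_neg, abs_neg, abs_neg] at this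
        rw [show -Fnl p b - -Fnl p a = Fnl p a - Fnl p b by ring,
          show -b - -a = a - b by ring, add_comm |b| |a|] at this
        exact this
  rcases le_total b a with h | h
  · exact h2 a b h
  · have := h2 b a h
    rwa [abs_sub_comm, abs_sub_comm a b, add_comm |a| |b|]

/-! ### Solutions of the autonomous limit equation -/

/-- The constants of the factorisation `∏ (γ_j + D) ∏ (γ_j - D)`, `γ_j = g + 2j`, listed
increasingly for the factors `γ_j - D` and then decreasingly for the factors `γ_j + D`. -/
def Gam (g : ℝ) (k j : ℕ) : ℝ := if j < k then g + 2 * j else g + 2 * ((2 * k - 1 - j : ℕ) : ℝ)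

/-- The signs in that factorisation: `-1` for the factors `γ_j - D`, `1` for `γ_j + D`. -/
def Eps (k j : ℕ) : ℝ := if j < k then -1 else 1

lemma Eps_cases (k j : ℕ) : Eps k j = 1 ∨ Eps k j = -1 := by
  unfold Eps; split_ifs <;> simp

lemma le_Gam (g : ℝ) (k j : ℕ) : g ≤ Gam g k j := by
  unfold Gam; split_ifs
  · have : (0 : ℝ) ≤ j := Nat.cast_nonneg j
    linarith
  · have : (0 : ℝ) ≤ ((2 * k - 1 - j : ℕ) : ℝ) := Nat.cast_nonneg _
    linarith

/-- A bounded solution of `∏ (γ_j² - D²) w = |w|^{p-2} w` on `D`, written as a first-order chain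
`z 0 = w, …, z (2k)`, which vanishes at the infinite ends of `D`. -/
structure LimSol (g p : ℝ) (k : ℕ) (D : Set ℝ) (z : ℕ → ℝ → ℝ) : Prop where
  chain : DChain (2 * k) (Gam g k) (Eps k) (interior D) z
  cont : ∀ j ≤ 2 * k, ContinuousOn (z j) D
  bdd : ∃ K, ∀ j ≤ 2 * k, ∀ t ∈ D, |z j t| ≤ K
  eqn : ∀ t ∈ D, z (2 * k) t = Fnl p (z 0 t)
  bot : Tendsto (z 0) atBot (𝓝 0)
  top : BddAbove D ∨ Tendsto (z 0) atTop (𝓝 0)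

lemma negligible_of_tendsto {p : ℝ} (hp : 2 < p) {z y : ℝ → ℝ} {l : Filter ℝ}
    (h : Tendsto z l (𝓝 0)) (hy : ∀ᶠ t in l, y t = Fnl p (z t)) {η : ℝ} (hη : 0 < η) :
    ∀ᶠ t in l, |y t| ≤ η * |z t| := by
  have h1 : Tendsto (fun t => |z t| ^ (p - 2)) l (𝓝 0) := by
    have := (continuous_abs.rpow_const (p := p - 2)
      (fun x : ℝ => Or.inr (by linarith))).tendsto (0 : ℝ) |>.comp h
    simpa [Function.comp_def, zero_rpow (show p - 2 ≠ 0 by linarith)] using this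
  filter_upwards [h1.eventually (gt_mem_nhds hη), hy] with t ht hyt
  rw [hyt, Fnl, abs_mul, abs_of_nonneg (rpow_nonneg (abs_nonneg (z t)) _)]
  exact mul_le_mul_of_nonneg_right ht.le (abs_nonneg _)

lemma LimSol.decay_top {g p : ℝ} {k : ℕ} {z : ℕ → ℝ → ℝ} (hg : 0 < g) (hp : 2 < p)
    (h : LimSol g p k Set.univ z) :
    ∃ δ > 0, ∃ C, ∀ j ≤ 2 * k, ∀ t ≥ 0, |z j t| ≤ C * rexp (-δ * t) := by
  obtain ⟨K, hK⟩ := h.bdd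
  refine DChain.exp_decay hg (h.chain.mono (by simp)) (fun j _ => le_Gam g k j)
    (fun j _ => Eps_cases k j) (fun j hj t _ => hK j hj t trivial) fun η hη => ?_
  have ht : Tendsto (z 0) atTop (𝓝 0) := h.top.resolve_left (by simp [not_bddAbove_univ])
  exact eventually_atTop.1
    (negligible_of_tendsto hp ht (Eventually.of_forall fun t => h.eqn t trivial) hη)

lemma LimSol.refl_chain {g p : ℝ} {k : ℕ} {D : Set ℝ} {z : ℕ → ℝ → ℝ} (h : LimSol g p k D z)
    (hD : Set.Iic (-1) ⊆ interior D) :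
    DChain (2 * k) (Gam g k) (fun j => -Eps k j) (Set.Ici 1) (fun j t => z j (-t)) :=
  h.chain.reflect.mono fun t (ht : (1 : ℝ) ≤ t) => hD (by simp only [Set.mem_Iic]; linarith)

lemma LimSol.decay_bot {g p : ℝ} {k : ℕ} {D : Set ℝ} {z : ℕ → ℝ → ℝ} (hg : 0 < g) (hp : 2 < p)
    (h : LimSol g p k D z) (hD : Set.Iic (-1) ⊆ interior D) :
    ∃ δ > 0, ∃ C, ∀ j ≤ 2 * k, ∀ t ≤ -1, |z j t| ≤ C * rexp (δ * t) := by
  obtain ⟨K, hK⟩ := h.bdd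
  have hD' : ∀ t ≥ (1 : ℝ), -t ∈ D := fun t ht =>
    interior_subset (hD (by simp only [Set.mem_Iic]; linarith))
  obtain ⟨δ, hδ, C, hC⟩ := DChain.exp_decay hg (h.refl_chain hD) (fun j _ => le_Gam g k j)
    (fun j _ => by rcases Eps_cases k j with h | h <;> rw [h] <;> simp)
    (fun j hj t ht => hK j hj (-t) (hD' t ht)) (fun η hη => by
      have ht : Tendsto (fun t => z 0 (-t)) atTop (𝓝 0) := h.bot.comp tendsto_neg_atTop_atBot
      refine eventually_atTop.1 (negligible_of_tendsto hp ht ?_ hη)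
      filter_upwards [eventually_ge_atTop 1] with t ht
      exact h.eqn _ (hD' t ht))
  refine ⟨δ, hδ, C, fun j hj t ht => ?_⟩
  have := hC j hj (-t) (by simp only [ge_iff_le]; linarith)
  simpa using this

/-- Solutions have a leading coefficient at `-∞`: `e^{-gt} z 0` converges. -/
lemma LimSol.asymp_bot {g p : ℝ} {k : ℕ} (hk : 0 < k) {D : Set ℝ} {z : ℕ → ℝ → ℝ} (hg : 0 < g)
    (hp : 2 < p) (h : LimSol g p k D z) (hD : Set.Iic (-1) ⊆ interior D) :
    ∃ A, Tendsto (fun t => rexp (-g * t) * z 0 t) atBot (𝓝 A) := by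
  obtain ⟨K, hK⟩ := h.bdd
  have hD' : ∀ t ≥ (1 : ℝ), -t ∈ D := fun t ht =>
    interior_subset (hD (by simp only [Set.mem_Iic]; linarith))
  obtain ⟨δ, hδ, C, hC⟩ := h.decay_bot hg hp hD
  have hG0 : Gam g k 0 = g := by simp [Gam, hk]
  obtain ⟨A, hA⟩ := DChain.asymptotics (q := p - 1) (C := 1) (by omega) (h.refl_chain hD)
    (by rw [hG0]; exact hg)
    (by simp [Eps, hk]) (fun j hj hjN => by
      by_cases hjk : j < k
      · right
        refine ⟨by simp [Eps, hjk], ?_⟩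
        rw [hG0]; simp only [Gam, hjk, if_true]
        have : (1 : ℝ) ≤ j := by exact_mod_cast hj
        linarith
      · left
        exact ⟨by simp [Eps, hjk], hg.trans_le (le_Gam g k j)⟩)
    (fun j hj t ht => hK j hj (-t) (hD' t ht)) (by linarith) zero_le_one
    (fun t ht => by
      rw [h.eqn _ (hD' t ht), abs_Fnl hp, one_mul]) hδ
    (fun t ht => by
      have := hC 0 (Nat.zero_le _) (-t) (by simp only [ge_iff_le] at ht; linarith)
      simpa using this)
  refine ⟨A, ?_⟩
  have := hA.comp tendsto_neg_atBot_atTop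
  rw [hG0] at this
  refine this.congr fun t => ?_
  simp

lemma exists_lt_of_tendsto_bot {I : Set ℝ} (hI : Set.Iic (-1) ⊆ I) {φ : ℝ → ℝ}
    (h : Tendsto φ atBot (𝓝 0)) : LeftSmall I φ := by
  intro t _ η hη
  have h1 : ∀ᶠ s in atBot, |φ s| < η := by
    have := (continuous_abs.tendsto (0 : ℝ)).comp h
    rw [abs_zero] at this
    exact this.eventually (gt_mem_nhds hη)
  obtain ⟨s, hs, hs1, hs2⟩ := (h1.and ((eventually_lt_atBot t).and (eventually_le_atBot (-1)))).exists
  exact ⟨s, hI hs2, hs1, hs⟩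

lemma tendsto_exp_mul_bot {γ K : ℝ} (hγ : 0 < γ) {z : ℝ → ℝ}
    (hz : ∀ᶠ t in atBot, |z t| ≤ K) : Tendsto (fun t => rexp (γ * t) * z t) atBot (𝓝 0) := by
  refine bdd_le_mul_tendsto_zero' K hz ?_ |>.congr fun t => mul_comm _ _
  exact tendsto_exp_atBot.comp (tendsto_id.const_mul_atBot hγ)

/-- Uniqueness: the difference of two solutions vanishes if it gains a sign change. -/
lemma LimSol.eq_of_small {g p : ℝ} {k : ℕ} {D : Set ℝ} {z y : ℕ → ℝ → ℝ} (hg : 0 < g)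
    (hp : 2 < p) (hDc : IsClosed D) (hDx : Convex ℝ D) (hD : Set.Iic (-1) ⊆ interior D)
    (hD2 : BddAbove D ∨ D = Set.univ)
    (h : LimSol g p k D z) (h' : LimSol g p k D y)
    (hs : ∀ j < k, RightSmall (interior D)
      (fun t => rexp (Eps k j * Gam g k j * t) * (z j t - y j t)))
    {j₀ : ℕ} (hj₀ : j₀ < 2 * k)
    (hL : LeftSmall (interior D) (fun t => rexp (Eps k j₀ * Gam g k j₀ * t) * (z j₀ t - y j₀ t)))
    (hR : RightSmall (interior D) (fun t => rexp (Eps k j₀ * Gam g k j₀ * t) * (z j₀ t - y j₀ t))) :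
    ∀ t ∈ D, z 0 t = y 0 t := by
  have hN0 : 0 < 2 * k := by omega
  set d : ℕ → ℝ → ℝ := fun j t => z j t - y j t with hd
  have hch : DChain (2 * k) (Gam g k) (Eps k) (interior D) d := h.chain.sub h'.chain
  obtain ⟨K, hK⟩ := h.bdd
  obtain ⟨K', hK'⟩ := h'.bdd
  have hbd : ∀ j ≤ 2 * k, ∀ t ∈ D, |d j t| ≤ K + K' := fun j hj t ht =>
    (abs_sub _ _).trans (add_le_add (hK j hj t ht) (hK' j hj t ht))
  have hdN : ∀ t ∈ D, |d (2 * k) t| ≤ (p - 1) * (|z 0 t| + |y 0 t|) ^ (p - 2) * |d 0 t| := by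
    intro t ht
    simp only [hd]
    rw [h.eqn t ht, h'.eqn t ht]
    exact abs_Fnl_sub_le hp _ _
  have hdN' : ∀ t ∈ D, ∀ B, |z 0 t| + |y 0 t| ≤ B →
      |d (2 * k) t| ≤ (p - 1) * B ^ (p - 2) * |d 0 t| := by
    intro t ht B hB
    refine (hdN t ht).trans (mul_le_mul_of_nonneg_right ?_ (abs_nonneg _))
    refine mul_le_mul_of_nonneg_left ?_ (by linarith)
    exact rpow_le_rpow (by positivity) hB (by linarith)
  -- exponential decay of both solutions gives exponential decay of the potential
  have pot : ∀ (a b C C' : ℝ) (t s : ℝ), t ∈ D → 0 ≤ s → 0 ≤ C → 0 ≤ C' →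
      |z 0 t| ≤ C * rexp (-a * s) → |y 0 t| ≤ C' * rexp (-b * s) →
      |d (2 * k) t| ≤ (p - 1) * (C + C') ^ (p - 2) * rexp (-(min a b * (p - 2)) * s) * |d 0 t| := by
    intro a b C C' t s ht hs0 hC hC' h1 h2
    have e1 : rexp (-a * s) ≤ rexp (-(min a b) * s) :=
      exp_le_exp.2 (by nlinarith [min_le_left a b])
    have e2 : rexp (-b * s) ≤ rexp (-(min a b) * s) :=
      exp_le_exp.2 (by nlinarith [min_le_right a b])
    have h3 : |z 0 t| + |y 0 t| ≤ (C + C') * rexp (-(min a b) * s) := by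
      rw [add_mul]
      exact add_le_add (h1.trans (mul_le_mul_of_nonneg_left e1 hC))
        (h2.trans (mul_le_mul_of_nonneg_left e2 hC'))
    refine (hdN' t ht _ h3).trans (le_of_eq ?_)
    rw [mul_rpow (by positivity) (exp_pos _).le, ← exp_mul]
    ring_nf
  obtain ⟨δ, hδ, C, hC⟩ := h.decay_bot hg hp hD
  obtain ⟨δ', hδ', C', hC'⟩ := h'.decay_bot hg hp hD
  have hC0 : 0 ≤ C := nonneg_of_mul_nonneg_left
    ((abs_nonneg _).trans (hC 0 (Nat.zero_le _) (-1) le_rfl)) (exp_pos _)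
  have hC0' : 0 ≤ C' := nonneg_of_mul_nonneg_left
    ((abs_nonneg _).trans (hC' 0 (Nat.zero_le _) (-1) le_rfl)) (exp_pos _)
  refine fun t ht => sub_eq_zero.1 (DChain.eq_zero_of_infinite_zeros (z := d) hN0 hDx hDc hch
    (fun j _ => hg.trans_le (le_Gam g k j)) (fun j _ => Eps_cases k j)
    (fun j hj => (h.cont j hj).sub (h'.cont j hj)) hbd
    (C := (p - 1) * (K + K') ^ (p - 2)) ?_ ?_ ?_ ?_ t ht)
  · intro t ht
    exact hdN' t (interior_subset ht) _ (add_le_add (hK 0 (Nat.zero_le _) t (interior_subset ht))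
      (hK' 0 (Nat.zero_le _) t (interior_subset ht)))
  · refine ⟨-1, min δ δ' * (p - 2), (p - 1) * (C + C') ^ (p - 2),
      mul_pos (lt_min hδ hδ') (by linarith), ?_, hD, fun t ht => ?_⟩
    · exact mul_nonneg (by linarith) (rpow_nonneg (by linarith) _)
    · have := pot δ δ' C C' t (-t) (interior_subset (hD ht)) (by linarith) hC0 hC0'
        (by simpa using hC 0 (Nat.zero_le _) t ht) (by simpa using hC' 0 (Nat.zero_le _) t ht)
      simpa using this
  · rcases hD2 with hD2 | hD2
    · exact Or.inl hD2
    · right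
      subst hD2
      obtain ⟨δ, hδ, C, hC⟩ := h.decay_top hg hp
      obtain ⟨δ', hδ', C', hC'⟩ := h'.decay_top hg hp
      have hC0 : 0 ≤ C := nonneg_of_mul_nonneg_left
        ((abs_nonneg _).trans (hC 0 (Nat.zero_le _) 0 le_rfl)) (exp_pos _)
      have hC0' : 0 ≤ C' := nonneg_of_mul_nonneg_left
        ((abs_nonneg _).trans (hC' 0 (Nat.zero_le _) 0 le_rfl)) (exp_pos _)
      refine ⟨0, min δ δ' * (p - 2), (p - 1) * (C + C') ^ (p - 2),
        mul_pos (lt_min hδ hδ') (by linarith), ?_, by simp, fun t ht => ?_⟩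
      · exact mul_nonneg (by linarith) (rpow_nonneg (by linarith) _)
      · exact pot δ δ' C C' t t trivial ht hC0 hC0' (hC 0 (Nat.zero_le _) t ht)
          (hC' 0 (Nat.zero_le _) t ht)
  · by_cases hne : ∃ t ∈ interior D, d 0 t ≠ 0
    · refine Set.Infinite.mono (s := {t ∈ interior D | d 0 t = 0})
        (fun t ht => ⟨interior_subset ht.1, ht.2⟩) ?_
      refine DChain.infinite_zeros hDx.interior.ordConnected hch (fun j hj => ?_) hj₀ hL hR ?_ hne
      · by_cases hjk : j < k
        · exact Or.inr (hs j hjk)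
        · left
          refine exists_lt_of_tendsto_bot hD (tendsto_exp_mul_bot (K := K + K') ?_ ?_)
          · simp only [Eps, hjk, if_false, one_mul]
            exact hg.trans_le (le_Gam g k j)
          · filter_upwards [eventually_le_atBot (-1)] with t ht
            exact hbd j hj.le t (interior_subset (hD ht))
      · intro t ht s hst
        simp only [hd] at hst ⊢
        rw [h.eqn t (interior_subset ht), h'.eqn t (interior_subset ht)] at hst
        exact Fnl_sub_sign hp _ _ _ hst
    · push Not at hne
      exact (Set.Iic_infinite (-1)).mono fun t ht => ⟨interior_subset (hD ht), hne t (hD ht)⟩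

/-- Two whole-line solutions with the same leading coefficient at `-∞` agree: the lowest link is
then small at both ends, which gives the additional sign change. -/
lemma LimSol.eq_of_asymp {g p : ℝ} {k : ℕ} (hk : 0 < k) {z y : ℕ → ℝ → ℝ} (hg : 0 < g)
    (hp : 2 < p) (h : LimSol g p k Set.univ z) (h' : LimSol g p k Set.univ y) {A : ℝ}
    (hA : Tendsto (fun t => rexp (-g * t) * z 0 t) atBot (𝓝 A))
    (hA' : Tendsto (fun t => rexp (-g * t) * y 0 t) atBot (𝓝 A)) (t : ℝ) : z 0 t = y 0 t := by
  obtain ⟨K, hK⟩ := h.bdd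
  obtain ⟨K', hK'⟩ := h'.bdd
  have hs : ∀ j < k, RightSmall (interior Set.univ)
      (fun t => rexp (Eps k j * Gam g k j * t) * (z j t - y j t)) := by
    intro j hj t _ η hη
    have h1 : Tendsto (fun t => rexp (Eps k j * Gam g k j * t) * (z j t - y j t)) atTop (𝓝 0) := by
      refine (tendsto_exp_mul_bot (γ := Gam g k j) (K := K + K')
        (z := fun t => z j (-t) - y j (-t)) (hg.trans_le (le_Gam g k j))
        (Eventually.of_forall fun t => ?_)).comp tendsto_neg_atTop_atBot |>.congr fun t => ?_
      · exact (abs_sub _ _).trans (add_le_add (hK j (by omega) _ trivial)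
          (hK' j (by omega) _ trivial))
      · simp [Eps, hj]
    have h2 := (continuous_abs.tendsto (0 : ℝ)).comp h1
    rw [abs_zero] at h2
    obtain ⟨s, hs, hs'⟩ := ((h2.eventually (gt_mem_nhds hη)).and (eventually_gt_atTop t)).exists
    exact ⟨s, by simp, hs', hs⟩
  refine LimSol.eq_of_small hg hp isClosed_univ convex_univ (by simp) (Or.inr rfl) h h' hs
    (j₀ := 0) (by omega) ?_ (hs 0 hk) t trivial
  refine exists_lt_of_tendsto_bot (by simp) ?_
  have := hA.sub hA'
  rw [sub_self] at this
  refine this.congr fun t => ?_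
  simp [Eps, Gam, hk]
  ring

lemma LimSol.zero (g p : ℝ) (k : ℕ) (D : Set ℝ) : LimSol g p k D (fun _ _ => 0) where
  chain := fun j _ t _ => by simpa using hasDerivAt_const t (0 : ℝ)
  cont := fun _ _ => continuousOn_const
  bdd := ⟨0, fun _ _ _ _ => by simp⟩
  eqn := fun _ _ => by simp [Fnl]
  bot := tendsto_const_nhds
  top := Or.inr tendsto_const_nhds

lemma LimSol.smul {g p : ℝ} {k : ℕ} {z : ℕ → ℝ → ℝ} (h : LimSol g p k Set.univ z) {ε : ℝ}
    (hε : ε = -1 ∨ ε = 1) : LimSol g p k Set.univ (fun j t => ε * z j t) where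
  chain := h.chain.const_mul ε
  cont := fun j hj => continuousOn_const.mul (h.cont j hj)
  bdd := by
    obtain ⟨K, hK⟩ := h.bdd
    refine ⟨K, fun j hj t ht => ?_⟩
    rcases hε with rfl | rfl
    · simpa using hK j hj t ht
    · simpa using hK j hj t ht
  eqn := fun t ht => by
    rcases hε with rfl | rfl
    · simp [h.eqn t ht, Fnl_neg]
    · simp [h.eqn t ht]
  bot := by simpa using h.bot.const_mul ε
  top := Or.inr (by
    simpa using (h.top.resolve_left (by simp [not_bddAbove_univ])).const_mul ε)

lemma LimSol.translate {g p : ℝ} {k : ℕ} {z : ℕ → ℝ → ℝ} (h : LimSol g p k Set.univ z) (s : ℝ) :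
    LimSol g p k Set.univ (fun j t => z j (t + s)) where
  chain := by simpa using h.chain.shift s
  cont := fun j hj => by
    have := h.cont j hj
    rw [continuousOn_univ] at this ⊢
    fun_prop
  bdd := by
    obtain ⟨K, hK⟩ := h.bdd
    exact ⟨K, fun j hj t _ => hK j hj (t + s) trivial⟩
  eqn := fun t _ => h.eqn (t + s) trivial
  bot := h.bot.comp (tendsto_atBot_add_const_right _ s tendsto_id)
  top := Or.inr ((h.top.resolve_left (by simp [not_bddAbove_univ])).comp
    (tendsto_atTop_add_const_right _ s tendsto_id))

/-- Classification on the whole line: a nonzero solution is, up to sign, a translate of any fixed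
solution with a nonzero leading coefficient at `-∞`. -/
lemma LimSol.classify {g p : ℝ} {k : ℕ} (hk : 0 < k) {z b : ℕ → ℝ → ℝ} (hg : 0 < g)
    (hp : 2 < p) (h : LimSol g p k Set.univ z) (hb : LimSol g p k Set.univ b)
    (hb1 : Tendsto (fun t => rexp (-g * t) * b 0 t) atBot (𝓝 1)) (hne : ∃ t, z 0 t ≠ 0) :
    ∃ ε s : ℝ, (ε = -1 ∨ ε = 1) ∧ ∀ t, z 0 t = ε * b 0 (t + s) := by
  obtain ⟨A, hA⟩ := h.asymp_bot hk hg hp (by simp)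
  rcases eq_or_ne A 0 with rfl | hA0
  · obtain ⟨t, ht⟩ := hne
    exact absurd (h.eq_of_asymp hk hg hp (LimSol.zero g p k _) hA (by simp) t) ht
  · set ε : ℝ := (SignType.sign A : ℝ) with hε
    have hε1 : ε = -1 ∨ ε = 1 := by
      rcases lt_or_gt_of_ne hA0 with h | h
      · left; rw [hε, sign_neg h]; simp
      · right; rw [hε, sign_pos h]; simp
    set s := log |A| / g with hs
    refine ⟨ε, s, hε1, fun t => ?_⟩
    refine h.eq_of_asymp hk hg hp ((hb.translate s).smul hε1) hA ?_ t
    have h1 := (hb1.comp (tendsto_atBot_add_const_right _ s tendsto_id)).const_mul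
      (ε * rexp (g * s))
    have h2 : ε * rexp (g * s) * 1 = A := by
      rw [hs, mul_div_cancel₀ _ hg.ne', exp_log (abs_pos.2 hA0), mul_one, hε]
      exact sign_mul_abs A
    rw [h2] at h1
    refine h1.congr fun t => ?_
    simp only [Function.comp_apply, id]
    rw [show -g * t = g * s + -g * (t + s) by ring, exp_add]
    ring

/-! ### Exclusion of limits on a half-line -/

lemma hasDerivAt_abs_rpow_Fnl {p : ℝ} (hp : 2 < p) {w : ℝ → ℝ} {w' t : ℝ}
    (h : HasDerivAt w w' t) : HasDerivAt (fun t => |w t| ^ p / p) (Fnl p (w t) * w') t := by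
  have h1 := ((hasDerivAt_abs_rpow (w t) (show 1 < p by linarith)).comp t h).div_const p
  refine h1.congr_deriv ?_
  rw [Fnl]; field_simp

/-- Telescoping identity behind both energies. -/
lemma sum_telescope (k : ℕ) (a b : ℕ → ℝ) (S : ℕ → ℝ) (h : ∀ j < k, S j = b j * a j - b (j + 1) * a (j + 1)) :
    ∑ j ∈ Finset.range k, S j = b 0 * a 0 - b k * a k := by
  rw [Finset.sum_congr rfl (fun j hj => h j (Finset.mem_range.1 hj))]
  exact Finset.sum_range_sub' (fun j => b j * a j) k

/-- The conserved energy shows that the first undetermined boundary value vanishes, and the sign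
change count then excludes nonzero solutions with Dirichlet data on a half-line. -/
lemma LimSol.half_line {g p : ℝ} {k : ℕ} (hk : 0 < k) {z : ℕ → ℝ → ℝ} (hg : 0 < g) (hp : 2 < p)
    (h : LimSol g p k (Set.Iic 0) z) (h0 : ∀ j < k, z j 0 = 0) : ∀ t ≤ 0, z 0 t = 0 := by
  have hitg : interior (Set.Iic (0 : ℝ)) = Set.Iio 0 := interior_Iic
  have hD : Set.Iic (-1 : ℝ) ⊆ interior (Set.Iic 0) := by
    rw [hitg]; intro t ht; simp only [Set.mem_Iic, Set.mem_Iio] at *; linarith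
  have hch := h.chain
  rw [hitg] at hch
  set a' : ℕ → ℝ → ℝ := fun j t => (g + 2 * j) * z j t - z (j + 1) t with ha'
  have hda : ∀ j < k, ∀ t < 0, HasDerivAt (z j) (a' j t) t := by
    intro j hj t ht
    refine (hch j (by omega) t ht).congr_deriv ?_
    simp only [ha', Eps, Gam, hj, if_true]; ring
  have hdb : ∀ j < k, ∀ t < 0, HasDerivAt (z (2 * k - (j + 1)))
      (z (2 * k - j) t - (g + 2 * j) * z (2 * k - (j + 1)) t) t := by
    intro j hj t ht
    have h1 := hch (2 * k - (j + 1)) (by omega) t ht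
    have h2 : ¬ (2 * k - (j + 1) < k) := by omega
    rw [show 2 * k - (j + 1) + 1 = 2 * k - j by omega] at h1
    refine h1.congr_deriv ?_
    simp only [Eps, Gam, h2, if_false, show 2 * k - 1 - (2 * k - (j + 1)) = j by omega]
    ring
  -- `a' j` is the derivative of `z j` for `j < k`, and `H` is the Hamiltonian of the chain
  set H : ℝ → ℝ := fun t => |z 0 t| ^ p / p -
    ∑ j ∈ Finset.range k, z (2 * k - (j + 1)) t * a' j t - z k t ^ 2 / 2 with hH
  -- derivatives of the `a' j`, `j + 1 < k`, and of `z k`, all expressed through `e`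
  set e : ℕ → ℝ → ℝ := fun j t => if j < k then a' j t else
    (z (k + 1) t - (g + 2 * ((k - 1 : ℕ) : ℝ)) * z k t) with he
  have hde : ∀ j ≤ k, ∀ t < 0, HasDerivAt (z j) (e j t) t := by
    intro j hj t ht
    by_cases hjk : j < k
    · simp only [he, hjk, if_true]; exact hda j hjk t ht
    · have : j = k := by omega
      subst this
      simp only [he, lt_irrefl, if_false]
      have := hdb (j - 1) (by omega) t ht
      rwa [show 2 * j - (j - 1 + 1) = j by omega, show 2 * j - (j - 1) = j + 1 by omega] at this
  have hdH : ∀ t < 0, HasDerivAt H 0 t := by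
    intro t ht
    have h1 := hasDerivAt_abs_rpow_Fnl hp (hda 0 hk t ht)
    have h2 : HasDerivAt (fun t => ∑ j ∈ Finset.range k, z (2 * k - (j + 1)) t * a' j t)
        (∑ j ∈ Finset.range k, ((z (2 * k - j) t - (g + 2 * j) * z (2 * k - (j + 1)) t) * a' j t +
          z (2 * k - (j + 1)) t * ((g + 2 * j) * a' j t - e (j + 1) t))) t := by
      refine HasDerivAt.fun_sum fun j hj => ?_
      have hj' := Finset.mem_range.1 hj
      refine (hdb j hj' t ht).mul ?_
      exact ((hda j hj' t ht).const_mul _).sub (hde (j + 1) (by omega) t ht)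
    have h3 := (hde k le_rfl t ht).pow 2 |>.div_const 2
    refine ((h1.sub h2).sub h3).congr_deriv ?_
    rw [sum_telescope k (fun j => e j t) (fun j => z (2 * k - j) t) _ (fun j hj => by
      simp only [he, hj, if_true]; ring)]
    simp only [Nat.sub_zero, he, hk, if_true, lt_irrefl, if_false]
    rw [show 2 * k - k = k by omega, h.eqn t (by simp only [Set.mem_Iic]; linarith)]
    push_cast
    ring
  have hca : ∀ j < k, ContinuousOn (a' j) (Set.Iic 0) := fun j hj =>
    (continuousOn_const.mul (h.cont j (by omega))).sub (h.cont (j + 1) (by omega))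
  have hcH : ContinuousOn H (Set.Iic 0) := by
    refine ((ContinuousOn.div_const ?_ _).sub (continuousOn_finsetSum _ fun j hj => ?_)).sub
      (((h.cont k (by omega)).pow 2).div_const _)
    · exact (h.cont 0 (by omega)).abs.rpow_const (fun x _ => Or.inr (by linarith))
    · exact (h.cont _ (by omega)).mul (hca j (Finset.mem_range.1 hj))
  have hconst : ∀ t ≤ 0, H t = H 0 := by
    intro t ht
    have hdiff : DifferentiableOn ℝ H (interior (Set.Iic 0)) := by
      rw [hitg]
      exact fun x hx => (hdH x hx).differentiableAt.differentiableWithinAt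
    have hm : MonotoneOn H (Set.Iic 0) := monotoneOn_of_deriv_nonneg (convex_Iic 0) hcH hdiff
      (by rw [hitg]; exact fun x hx => (hdH x hx).deriv.ge)
    have hm' : AntitoneOn H (Set.Iic 0) := antitoneOn_of_deriv_nonpos (convex_Iic 0) hcH hdiff
      (by rw [hitg]; exact fun x hx => (hdH x hx).deriv.le)
    exact le_antisymm (hm ht (Set.mem_Iic.2 le_rfl) ht) (hm' ht (Set.mem_Iic.2 le_rfl) ht)
  obtain ⟨δ, hδ, C, hC⟩ := h.decay_bot hg hp hD
  have hz0 : ∀ j ≤ 2 * k, Tendsto (z j) atBot (𝓝 0) := by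
    intro j hj
    have h1 : Tendsto (fun t : ℝ => C * rexp (δ * t)) atBot (𝓝 0) := by
      have := (tendsto_exp_atBot.comp (tendsto_id.const_mul_atBot hδ)).const_mul C
      simpa using this
    refine squeeze_zero_norm' ?_ h1
    filter_upwards [eventually_le_atBot (-1)] with t ht
    exact hC j hj t ht
  have hH0 : Tendsto H atBot (𝓝 0) := by
    have h1 : Tendsto (fun t => |z 0 t| ^ p / p) atBot (𝓝 0) := by
      have h2 : Continuous fun x : ℝ => |x| ^ p / p :=
        (continuous_abs.rpow_const (fun x => Or.inr (by linarith))).div_const p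
      have := (h2.tendsto 0).comp (hz0 0 (by omega))
      simpa [Function.comp_def, zero_rpow (show p ≠ 0 by linarith)] using this
    have h2 : Tendsto (fun t => ∑ j ∈ Finset.range k, z (2 * k - (j + 1)) t * a' j t)
        atBot (𝓝 0) := by
      rw [show (0 : ℝ) = ∑ j ∈ Finset.range k, 0 * ((g + 2 * (j : ℝ)) * 0 - 0) by simp]
      refine tendsto_finsetSum _ fun j hj => ?_
      have := Finset.mem_range.1 hj
      exact (hz0 _ (by omega)).mul (((hz0 j (by omega)).const_mul _).sub (hz0 (j + 1) (by omega)))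
    have h3 := ((hz0 k (by omega)).pow 2).div_const 2
    have := (h1.sub h2).sub h3
    simpa using this
  have hHz : H 0 = 0 := by
    refine tendsto_nhds_unique (tendsto_const_nhds.congr' ?_) hH0
    filter_upwards [eventually_le_atBot 0] with t ht
    exact (hconst t ht).symm
  -- with Dirichlet data, `H 0` reduces to `z k 0 ^ 2 / 2`
  have hzk : z k 0 = 0 := by
    have h1 : ∑ j ∈ Finset.range k, z (2 * k - (j + 1)) 0 * a' j 0 = z k 0 * -z k 0 := by
      rw [Finset.sum_eq_single (k - 1)]
      · simp only [ha']
        rw [show 2 * k - (k - 1 + 1) = k by omega, show k - 1 + 1 = k by omega,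
          h0 (k - 1) (by omega)]
        ring
      · intro j hj hjk
        have := Finset.mem_range.1 hj
        simp only [ha']
        rw [h0 j this, h0 (j + 1) (by omega)]; ring
      · intro hk'; exact absurd (Finset.mem_range.2 (by omega)) hk'
    simp only [hH] at hHz
    rw [h1, h0 0 hk, abs_zero, zero_rpow (by linarith), zero_div] at hHz
    have : z k 0 ^ 2 = 0 := by linarith
    exact pow_eq_zero_iff two_ne_zero |>.1 this
  have hright : ∀ j ≤ k, RightSmall (interior (Set.Iic 0))
      (fun t => rexp (Eps k j * Gam g k j * t) * (z j t - 0)) := by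
    intro j hj t ht η hη
    rw [hitg] at ht ⊢
    have hzj : z j 0 = 0 := by
      rcases hj.lt_or_eq with hj | rfl
      · exact h0 j hj
      · exact hzk
    have hcw : ContinuousWithinAt (fun t => rexp (Eps k j * Gam g k j * t) * (z j t - 0))
        (Set.Iic 0) 0 :=
      ((by fun_prop : Continuous fun t : ℝ => rexp (Eps k j * Gam g k j * t)).continuousWithinAt).mul
        ((h.cont j (by omega) 0 (Set.mem_Iic.2 le_rfl)).sub continuousWithinAt_const)
    have h1 : Tendsto (fun t => |rexp (Eps k j * Gam g k j * t) * (z j t - 0)|) (𝓝[<] 0) (𝓝 0) := by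
      have := (hcw.mono Set.Iio_subset_Iic_self).tendsto.abs
      simpa [hzj] using this
    obtain ⟨s, hs, hs1, hs2⟩ := ((h1.eventually (gt_mem_nhds hη)).and
      ((self_mem_nhdsWithin : Set.Iio (0 : ℝ) ∈ 𝓝[<] 0) |> fun hmem =>
        (show ∀ᶠ s in 𝓝[<] (0 : ℝ), s ∈ Set.Iio 0 from hmem).and
          (eventually_nhdsWithin_of_eventually_nhds (eventually_gt_nhds ht)))).exists
    exact ⟨s, hs1, hs2, hs⟩
  obtain ⟨K, hK⟩ := h.bdd
  refine LimSol.eq_of_small hg hp isClosed_Iic (convex_Iic 0) hD (Or.inl bddAbove_Iic) h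
    (LimSol.zero g p k _) (fun j hj => hright j hj.le) (j₀ := k) (by omega) ?_ (hright k le_rfl)
  refine exists_lt_of_tendsto_bot hD (tendsto_exp_mul_bot (K := K) ?_ ?_)
  · simp only [Eps, lt_irrefl, if_false, one_mul]
    exact hg.trans_le (le_Gam g k k)
  · filter_upwards [eventually_le_atBot 0] with t ht
    simpa using hK k (by omega) t ht

/-! ### Odd order: no solutions -/

/-- For odd `k` the bottom and top entries have opposite signs, so `∑ z_{2k-1-j} z_j` is antitone:
its derivative is `z_{2k} z_0 - z_k²`. It vanishes at `0` by the Dirichlet data and at `-∞`, hence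
identically, and so does `z 0`. -/
lemma odd_vanish {g p : ℝ} {k : ℕ} (hk : 0 < k) {z : ℕ → ℝ → ℝ}
    (hch : DChain (2 * k) (Gam g k) (Eps k) (Set.Iio 0) z)
    (hc : ∀ j < 2 * k, ContinuousOn (z j) (Set.Iic 0)) (h0 : ∀ j < k, z j 0 = 0)
    (hlim : ∀ j < 2 * k, Tendsto (z j) atBot (𝓝 0)) {κ : ℝ → ℝ} (hκ : ∀ t < 0, 0 < κ t)
    (heq : ∀ t < 0, z (2 * k) t = -(Fnl p (z 0 t) + κ t * z 0 t)) : ∀ t < 0, z 0 t = 0 := by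
  have hitg : interior (Set.Iic (0 : ℝ)) = Set.Iio 0 := interior_Iic
  set B : ℝ → ℝ := fun t => ∑ j ∈ Finset.range k, z (2 * k - (j + 1)) t * z j t with hB
  have hdB : ∀ t < 0, HasDerivAt B (z (2 * k) t * z 0 t - z k t * z k t) t := by
    intro t ht
    have h2 : HasDerivAt B (∑ j ∈ Finset.range k,
        ((z (2 * k - j) t - (g + 2 * j) * z (2 * k - (j + 1)) t) * z j t +
          z (2 * k - (j + 1)) t * ((g + 2 * j) * z j t - z (j + 1) t))) t := by
      refine HasDerivAt.fun_sum fun j hj => ?_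
      have hj' := Finset.mem_range.1 hj
      refine HasDerivAt.mul ?_ ?_
      · have h1 := hch (2 * k - (j + 1)) (by omega) t ht
        have h2 : ¬ (2 * k - (j + 1) < k) := by omega
        rw [show 2 * k - (j + 1) + 1 = 2 * k - j by omega] at h1
        refine h1.congr_deriv ?_
        simp only [Eps, Gam, h2, if_false, show 2 * k - 1 - (2 * k - (j + 1)) = j by omega]
        ring
      · refine (hch j (by omega) t ht).congr_deriv ?_
        simp only [Eps, Gam, hj', if_true]; ring
    refine h2.congr_deriv ?_
    rw [sum_telescope k (fun j => z j t) (fun j => z (2 * k - j) t) _ (fun j hj => by ring)]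
    rw [show 2 * k - k = k by omega, Nat.sub_zero]
  have hneg : ∀ t < 0, z (2 * k) t * z 0 t - z k t * z k t ≤ -(κ t * z 0 t ^ 2) := by
    intro t ht
    have h1 := Fnl_mul_self_nonneg p (z 0 t)
    rw [heq t ht]
    nlinarith [mul_self_nonneg (z k t)]
  have hneg' : ∀ t < 0, z (2 * k) t * z 0 t - z k t * z k t ≤ 0 := fun t ht =>
    (hneg t ht).trans (neg_nonpos.2 (mul_nonneg (hκ t ht).le (sq_nonneg _)))
  have hcB : ContinuousOn B (Set.Iic 0) := continuousOn_finsetSum _ fun j hj => by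
    have := Finset.mem_range.1 hj
    exact (hc _ (by omega)).mul (hc j (by omega))
  have hanti : AntitoneOn B (Set.Iic 0) := by
    refine antitoneOn_of_deriv_nonpos (convex_Iic 0) hcB ?_ ?_
    · rw [hitg]; exact fun x hx => (hdB x hx).differentiableAt.differentiableWithinAt
    · rw [hitg]; intro x hx; rw [(hdB x hx).deriv]; exact hneg' x hx
  have hB0 : B 0 = 0 := Finset.sum_eq_zero fun j hj => by
    rw [h0 j (Finset.mem_range.1 hj), mul_zero]
  have hBlim : Tendsto B atBot (𝓝 0) := by
    rw [show (0 : ℝ) = ∑ j ∈ Finset.range k, (0 : ℝ) * 0 by simp]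
    refine tendsto_finsetSum _ fun j hj => ?_
    have := Finset.mem_range.1 hj
    exact (hlim _ (by omega)).mul (hlim j (by omega))
  have hBz : ∀ t < 0, B t = 0 := by
    intro t ht
    refine le_antisymm ?_ ?_
    · refine ge_of_tendsto hBlim ?_
      filter_upwards [eventually_le_atBot t] with s hs
      exact hanti (Set.mem_Iic.2 (hs.trans ht.le)) (Set.mem_Iic.2 ht.le) hs
    · rw [← hB0]
      exact hanti (Set.mem_Iic.2 ht.le) (Set.mem_Iic.2 le_rfl) ht.le
  intro t ht
  have h1 : HasDerivAt B 0 t := by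
    refine (hasDerivAt_const t (0 : ℝ)).congr_of_eventuallyEq ?_
    filter_upwards [eventually_lt_nhds ht] with s hs
    exact hBz s hs
  have h2 := (hdB t ht).unique h1
  have h3 := hneg t ht
  rw [h2] at h3
  have h4 : z 0 t ^ 2 ≤ 0 := by
    by_contra h
    push Not at h
    have := mul_pos (hκ t ht) h
    linarith
  exact pow_eq_zero_iff two_ne_zero |>.1 (le_antisymm h4 (sq_nonneg _))

/-! ### Uniform bounds on the half-line -/

/-- The Dirichlet data and the integral bound control the whole chain: the top factor `γ + D` is
inverted with an `L¹` right-hand side, the other factors with bounded ones. -/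
lemma unif_bound {g p C : ℝ} {k : ℕ} (hk : 0 < k) (hg : 0 < g) (hp : 2 < p) (hC : 0 ≤ C) :
    ∃ B, 0 ≤ B ∧ ∀ z : ℕ → ℝ → ℝ, DChain (2 * k) (Gam g k) (Eps k) (Set.Iio 0) z →
      (∀ j < 2 * k, ContinuousOn (z j) (Set.Iic 0)) → (∀ j < k, z j 0 = 0) →
      (∀ j < 2 * k, ∃ K, ∀ᶠ t in atBot, |z j t| ≤ K) →
      (∀ t < 0, |z (2 * k) t| ≤ 2 * (1 + |z 0 t| ^ p)) →
      (∀ a ≤ 0, ∫ s in a..0, |z 0 s| ^ p ≤ C) → ∀ j < 2 * k, ∀ t < 0, |z j t| ≤ B := by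
  set Q : ℝ := max 1 (1 / g) with hQ
  have hQ1 : 1 ≤ Q := le_max_left _ _
  have hQg : 1 / g ≤ Q := le_max_right _ _
  set B₀ : ℝ := 2 * (1 / g + C) with hB₀
  have hB₀0 : 0 ≤ B₀ := by positivity
  refine ⟨B₀ * Q ^ (2 * k), by positivity, fun z hch hc h0 hbot htop hitg => ?_⟩
  have hlimexp : ∀ γ : ℝ, 0 < γ → ∀ j < 2 * k,
      Tendsto (fun t => rexp (γ * t) * z j t) atBot (𝓝 0) := by
    intro γ hγ j hj
    obtain ⟨K, hK⟩ := hbot j hj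
    exact tendsto_exp_mul_bot hγ hK
  -- passing to the limit `s → -∞` in a bound for the increments of `e^{γt} z`
  have fromBot : ∀ γ : ℝ, 0 < γ → ∀ j < 2 * k, ∀ t < 0, ∀ b : ℝ,
      (∀ s ≤ t, |rexp (γ * t) * z j t - rexp (γ * s) * z j s| ≤ rexp (γ * t) * b) →
      |z j t| ≤ b := by
    intro γ hγ j hj t ht b h
    have h1 : Tendsto (fun s => |rexp (γ * t) * z j t - rexp (γ * s) * z j s|) atBot
        (𝓝 |rexp (γ * t) * z j t - 0|) := (tendsto_const_nhds.sub (hlimexp γ hγ j hj)).abs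
    have h2 := le_of_tendsto h1 (by
      filter_upwards [eventually_le_atBot t] with s hs using h s hs)
    rw [sub_zero, abs_mul, abs_of_pos (exp_pos _)] at h2
    exact le_of_mul_le_mul_left h2 (exp_pos _)
  have hcρ : ContinuousOn (fun t => |z 0 t| ^ p) (Set.Iic 0) :=
    (hc 0 (by omega)).abs.rpow_const (fun x _ => Or.inr (by linarith))
  have htopb : ∀ t < 0, |z (2 * k - 1) t| ≤ B₀ := by
    intro t ht
    have hG : Gam g k (2 * k - 1) = g := by
      have : ¬ (2 * k - 1 < k) := by omega
      simp [Gam, this]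
    have hE : Eps k (2 * k - 1) = 1 := by
      have : ¬ (2 * k - 1 < k) := by omega
      simp [Eps, this]
    refine fromBot g hg _ (by omega) t ht _ fun s hs => ?_
    have hd : ∀ x ∈ Set.Icc s t, HasDerivAt (fun x => rexp (g * x) * z (2 * k - 1) x)
        (rexp (g * x) * z (2 * k) x) x := by
      intro x hx
      have h1 := hch (2 * k - 1) (by omega) x (hx.2.trans_lt ht)
      rw [hE, hG, show 2 * k - 1 + 1 = 2 * k by omega] at h1
      simpa using hasDerivAt_exp_mul h1
    have hI : ∀ x ∈ Set.Icc s t, HasDerivAt (fun x => ∫ y in s..x, |z 0 y| ^ p) (|z 0 x| ^ p) x := by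
      intro x hx
      have hx0 : x < 0 := hx.2.trans_lt ht
      refine intervalIntegral.integral_hasDerivAt_right ?_ ?_ ?_
      · refine (hcρ.mono ?_).intervalIntegrable
        rw [Set.uIcc_of_le hx.1]; exact fun y hy => hy.2.trans hx0.le
      · exact ContinuousOn.stronglyMeasurableAtFilter isOpen_Iio
          (hcρ.mono Set.Iio_subset_Iic_self) x hx0
      · exact hcρ.continuousAt (Iic_mem_nhds hx0)
    have hI0 : ∀ x ∈ Set.Icc s t, 0 ≤ ∫ y in s..x, |z 0 y| ^ p := fun x hx =>
      intervalIntegral.integral_nonneg hx.1 fun y _ => rpow_nonneg (abs_nonneg _) _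
    have hIC : ∫ y in s..t, |z 0 y| ^ p ≤ C := by
      refine le_trans ?_ (hitg s (hs.trans ht.le))
      refine intervalIntegral.integral_mono_interval le_rfl hs ht.le
        (Eventually.of_forall fun y => rpow_nonneg (abs_nonneg _) _) ?_
      refine (hcρ.mono ?_).intervalIntegrable
      rw [Set.uIcc_of_le (hs.trans ht.le)]; exact fun y hy => hy.2
    -- the comparison function `2 e^{gx} (1/g + ∫_s^x |z 0|^p)`, whose derivative dominates
    -- `e^{gx} * 2 (1 + |z 0|^p)`
    have hΘ : ∀ x ∈ Set.Icc s t, HasDerivAt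
        (fun x => rexp (g * x) * (2 * (1 / g + ∫ y in s..x, |z 0 y| ^ p)))
        (rexp (g * x) * (2 * (1 + g * (∫ y in s..x, |z 0 y| ^ p) + |z 0 x| ^ p))) x := by
      intro x hx
      have h1 : HasDerivAt (fun s : ℝ => rexp (g * s)) (rexp (g * x) * (g * 1)) x :=
        ((hasDerivAt_id x).const_mul g).exp
      refine (h1.mul (((hI x hx).const_add (1 / g)).const_mul 2)).congr_deriv ?_
      field_simp
    have := diff_le_of_deriv_le hs hd hΘ (fun x hx => by
      rw [abs_mul, abs_of_pos (exp_pos _)]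
      refine mul_le_mul_of_nonneg_left ((htop x (hx.2.trans_lt ht)).trans ?_) (exp_pos _).le
      have := mul_nonneg hg.le (hI0 x hx)
      linarith)
    refine this.trans ?_
    have h5 : 0 ≤ rexp (g * s) * (2 * (1 / g + ∫ y in s..s, |z 0 y| ^ p)) := by
      rw [intervalIntegral.integral_same]; positivity
    have h6 : rexp (g * t) * (2 * (1 / g + ∫ y in s..t, |z 0 y| ^ p)) ≤ rexp (g * t) * B₀ := by
      rw [hB₀]; gcongr
    linarith
  have main : ∀ i < 2 * k, ∀ t < 0, |z (2 * k - 1 - i) t| ≤ B₀ * Q ^ i := by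
    intro i
    induction i with
    | zero => intro _ t ht; simpa using htopb t ht
    | succ i ih =>
      intro hi t ht
      have ih' := ih (by omega)
      set j := 2 * k - 1 - (i + 1) with hj
      rw [show 2 * k - 1 - i = j + 1 by omega] at ih'
      set b := B₀ * Q ^ i with hb
      have hb0 : 0 ≤ b := by positivity
      have hγ : g ≤ Gam g k j := le_Gam g k j
      set γ := Gam g k j with hγdef
      have hγ0 : 0 < γ := hg.trans_le hγ
      have hbγ : b / γ ≤ B₀ * Q ^ (i + 1) := by
        calc b / γ ≤ b / g := by gcongr
          _ = b * (1 / g) := by ring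
          _ ≤ b * Q := by gcongr
          _ = _ := by rw [hb]; ring
      refine le_trans ?_ hbγ
      have hd := hch j (by omega)
      by_cases hjk : j < k
      · rw [show Eps k j = -1 by simp [Eps, hjk]] at hd
        have h1 : ∀ s ∈ Set.Ico t 0, |rexp (-γ * s) * z j s - rexp (-γ * t) * z j t| ≤
            b / γ * rexp (-γ * t) := by
          intro s hs
          have h2 := exp_mul_diff_le (γ := γ) (ε := -1) (b := 0) (C := b) hs.1 (by simp)
            (by linarith) (fun x hx => hd x (hx.2.trans_lt hs.2))
            (fun x hx => by simpa using ih' x (hx.2.trans_lt hs.2))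
          simp only [neg_mul, one_mul, sub_zero] at h2
          simp only [neg_mul]
          have h3 : 0 ≤ b / γ * rexp (-(γ * s)) := by positivity
          have h4 : b / -γ = -(b / γ) := by rw [div_neg]
          rw [h4] at h2
          linarith
        have h2 : Tendsto (fun s => |rexp (-γ * s) * z j s - rexp (-γ * t) * z j t|) (𝓝[<] 0)
            (𝓝 |rexp (-γ * 0) * z j 0 - rexp (-γ * t) * z j t|) := by
          have hcw : ContinuousWithinAt (z j) (Set.Iio 0) 0 :=
            (hc j (by omega) 0 (Set.mem_Iic.2 le_rfl)).mono Set.Iio_subset_Iic_self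
          have hce : ContinuousWithinAt (fun s : ℝ => rexp (-γ * s)) (Set.Iio 0) 0 :=
            (by fun_prop : Continuous fun s : ℝ => rexp (-γ * s)).continuousWithinAt
          exact ((hce.mul hcw).tendsto.sub tendsto_const_nhds).abs
        have h3 := le_of_tendsto h2 (by
          filter_upwards [Ico_mem_nhdsLT ht] with s hs using h1 s hs)
        rw [h0 j hjk, mul_zero, zero_sub, abs_neg, abs_mul, abs_of_pos (exp_pos _), mul_comm] at h3
        exact le_of_mul_le_mul_right h3 (exp_pos _)
      · rw [show Eps k j = 1 by simp [Eps, hjk]] at hd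
        refine fromBot γ hγ0 j (by omega) t ht _ fun s hs => ?_
        have h2 := exp_mul_diff_le (γ := γ) (ε := 1) (b := 0) (C := b) hs (by simp)
            (by linarith) (fun x hx => hd x (hx.2.trans_lt ht))
            (fun x hx => by simpa using ih' x (hx.2.trans_lt ht))
        simp only [one_mul, sub_zero] at h2
        have h3 : 0 ≤ b / γ * rexp (γ * s) := by positivity
        rw [mul_comm (rexp (γ * t)) (b / γ)]
        linarith
  intro j hj t ht
  have h1 := main (2 * k - 1 - j) (by omega) t ht
  rw [show 2 * k - 1 - (2 * k - 1 - j) = j by omega] at h1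
  exact h1.trans (mul_le_mul_of_nonneg_left (pow_le_pow_right₀ hQ1 (by omega)) hB₀0)

/-! ### Decay of Lipschitz functions with bounded integrals -/

/-- A value `|z s| ≥ η` persists on an interval of fixed length, so it can only occur finitely
often at well separated points if `∫ |z|^p` is bounded. -/
lemma tendsto_zero_of_integral_le {z : ℝ → ℝ} {T L C p : ℝ} (hp : 0 < p) (hL : 0 ≤ L)
    (hz : ∀ s ≥ T, ∀ t ≥ T, |z s - z t| ≤ L * |s - t|)
    (hC : ∀ b ≥ T, ∫ t in T..b, |z t| ^ p ≤ C) : Tendsto z atTop (𝓝 0) := by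
  have hcz : ContinuousOn z (Set.Ici T) := by
    refine LipschitzOnWith.continuousOn (K := ⟨L, hL⟩) (LipschitzOnWith.of_dist_le_mul ?_)
    intro s hs t ht
    rw [Real.dist_eq, Real.dist_eq]
    exact hz s hs t ht
  have hcρ : ContinuousOn (fun t => |z t| ^ p) (Set.Ici T) :=
    hcz.abs.rpow_const (fun x _ => Or.inr hp.le)
  have hii : ∀ a b, T ≤ a → a ≤ b → IntervalIntegrable (fun t => |z t| ^ p) volume a b := by
    intro a b ha hab
    refine (hcρ.mono ?_).intervalIntegrable
    rw [Set.uIcc_of_le hab]; exact fun y hy => ha.trans hy.1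
  rw [Metric.tendsto_atTop]
  intro η hη
  set h : ℝ := η / (2 * (L + 1)) with hh
  have hh0 : 0 < h := by positivity
  have hLh : L * h ≤ η / 2 := by
    have : (L + 1) * h = η / 2 := by rw [hh]; field_simp
    nlinarith
  set a : ℕ → ℝ := fun m => ∫ t in T..(T + m * h), |z t| ^ p with ha
  have hTm : ∀ m : ℕ, T ≤ T + m * h := fun m => by
    have : 0 ≤ (m : ℝ) * h := by positivity
    linarith
  have hdiff : ∀ m, a (m + 1) = a m + ∫ t in (T + m * h)..(T + (m + 1 : ℕ) * h), |z t| ^ p := by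
    intro m
    refine (intervalIntegral.integral_add_adjacent_intervals (hii _ _ le_rfl (hTm m))
      (hii _ _ (hTm m) ?_)).symm
    push_cast; linarith
  have hmono : Monotone a := monotone_nat_of_le_succ fun m => by
    rw [hdiff]
    have : 0 ≤ ∫ t in (T + m * h)..(T + (m + 1 : ℕ) * h), |z t| ^ p :=
      intervalIntegral.integral_nonneg (by push_cast; linarith)
        fun y _ => rpow_nonneg (abs_nonneg _) _
    linarith
  have hconv : Tendsto a atTop (𝓝 (⨆ m, a m)) := tendsto_atTop_ciSup hmono
    ⟨C, by rintro _ ⟨m, rfl⟩; exact hC _ (hTm m)⟩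
  have hd0 : Tendsto (fun m => a (m + 1) - a m) atTop (𝓝 0) := by
    have := (hconv.comp (tendsto_add_atTop_nat 1)).sub hconv
    rwa [sub_self] at this
  have hpos : 0 < h * (η / 2) ^ p := by positivity
  obtain ⟨M, hM⟩ := eventually_atTop.1 (hd0.eventually (gt_mem_nhds hpos))
  refine ⟨T + M * h, fun t ht => ?_⟩
  rw [Real.dist_eq, sub_zero]
  by_contra hcon
  push Not at hcon
  set m := ⌊(t - T) / h⌋₊ with hm
  have h0 : 0 ≤ (t - T) / h := div_nonneg (by linarith [hTm M]) hh0.le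
  have h1 : (m : ℝ) * h ≤ t - T := by
    rw [← le_div_iff₀ hh0]; exact Nat.floor_le h0
  have h2 : t - T < (m + 1) * h := by
    rw [← div_lt_iff₀ hh0]; exact Nat.lt_floor_add_one _
  have hMm : M ≤ m := by
    apply Nat.le_floor
    rw [le_div_iff₀ hh0]; linarith
  have h3 := hM m hMm
  rw [hdiff, add_sub_cancel_left] at h3
  have h4 : ∫ _ in (T + m * h)..(T + (m + 1 : ℕ) * h), (η / 2) ^ p ≤
      ∫ t in (T + m * h)..(T + (m + 1 : ℕ) * h), |z t| ^ p := by
    refine intervalIntegral.integral_mono_on (by push_cast; linarith)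
      intervalIntegrable_const (hii _ _ (hTm m) (by push_cast; linarith)) fun s hs => ?_
    refine rpow_le_rpow (by positivity) ?_ hp.le
    have hs1 := hs.1
    have hs2 := hs.2
    push_cast at hs2
    have h5 := hz s ((hTm m).trans hs1) t (by linarith [hTm m])
    have h6 : |s - t| ≤ h := by rw [abs_le]; constructor <;> linarith
    have h7 : |t| = |t| := rfl
    have h8 : |z t| ≤ |z s| + |z s - z t| := by
      have := abs_sub_abs_le_abs_sub (z t) (z s)
      rw [abs_sub_comm] at this; linarith
    nlinarith
  rw [intervalIntegral.integral_const, smul_eq_mul] at h4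
  push_cast at h4 h3
  have h5 : T + (m + 1) * h - (T + m * h) = h := by ring
  rw [h5] at h4
  linarith

lemma tendsto_zero_of_integral_le_bot {z : ℝ → ℝ} {T L C p : ℝ} (hp : 0 < p) (hL : 0 ≤ L)
    (hz : ∀ s ≤ T, ∀ t ≤ T, |z s - z t| ≤ L * |s - t|)
    (hC : ∀ a ≤ T, ∫ t in a..T, |z t| ^ p ≤ C) : Tendsto z atBot (𝓝 0) := by
  have h1 : Tendsto (fun t => z (-t)) atTop (𝓝 0) := by
    refine tendsto_zero_of_integral_le (T := -T) (C := C) hp hL (fun s hs t ht => ?_)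
      (fun b hb => ?_)
    · have := hz (-s) (by linarith) (-t) (by linarith)
      rwa [neg_sub_neg, abs_sub_comm t s] at this
    · rw [intervalIntegral.integral_comp_neg (fun t => |z t| ^ p), neg_neg]
      exact hC (-b) (by linarith)
  refine (h1.comp tendsto_neg_atBot_atTop).congr fun t => ?_
  simp

/-! ### The Laplacian of a radial function -/

/-- `u` depends only on `‖x‖`. -/
def Radial {n : ℕ} (u : EuclideanSpace ℝ (Fin n) → ℝ) : Prop :=
  ∀ x y : EuclideanSpace ℝ (Fin n), ‖x‖ = ‖y‖ → u x = u y

theorem iteratedFDeriv_two_line {n : ℕ} {u : EuclideanSpace ℝ (Fin n) → ℝ}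
    (hu : ContDiff ℝ 2 u) (x v : EuclideanSpace ℝ (Fin n)) (s : ℝ) :
    iteratedFDeriv ℝ 2 u (x + s • v) (fun _ => v)
      = deriv (deriv (fun s : ℝ => u (x + s • v))) s := by
  have hl : ∀ s : ℝ, HasDerivAt (fun s : ℝ => x + s • v) v s := fun s => by
    simpa using ((hasDerivAt_id s).smul_const v).const_add x
  have h1 : deriv (fun s : ℝ => u (x + s • v)) = fun s => fderiv ℝ u (x + s • v) v := by
    funext s
    exact ((hu.differentiable (by norm_num) _).hasFDerivAt.comp_hasDerivAt s (hl s)).deriv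
  have h2 : ContDiff ℝ 1 (fderiv ℝ u) := hu.fderiv_right (by norm_num)
  have h3 := (h2.differentiable (by norm_num) (x + s • v)).hasFDerivAt.comp_hasDerivAt s (hl s)
  have h4 := h3.clm_apply (hasDerivAt_const s v)
  rw [h1, iteratedFDeriv_two_apply]
  simpa using h4.deriv.symm

/-- The radial Laplacian `φ'' + (n - 1) φ' / r`, where `φ r = u (r • e)`. -/
theorem lap_radial {n : ℕ} {u : EuclideanSpace ℝ (Fin n) → ℝ} (hu : ContDiff ℝ 2 u)
    (hr : Radial u) {e : EuclideanSpace ℝ (Fin n)} (he : ‖e‖ = 1) {r : ℝ} (hr0 : 0 < r) :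
    lap u (r • e) = deriv (deriv fun s : ℝ => u (s • e)) r
      + ((n : ℝ) - 1) / r * deriv (fun s : ℝ => u (s • e)) r := by
  have hn : 0 < n := by
    rcases Nat.eq_zero_or_pos n with h | h
    · subst h
      simp [Subsingleton.elim e 0] at he
    · exact h
  obtain ⟨m, rfl⟩ : ∃ m, n = m + 1 := ⟨n - 1, by omega⟩
  -- an orthonormal basis whose first vector is the radial direction
  obtain ⟨b, hb⟩ := Orthonormal.exists_orthonormalBasis_extension_of_card_eq (𝕜 := ℝ)
    (E := EuclideanSpace ℝ (Fin (m + 1))) (ι := Fin (m + 1)) (by simp)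
    (v := fun _ => e) (s := {0}) (by
      constructor
      · intro i; simpa using he
      · intro i j hij
        exact absurd (Subsingleton.elim i j) hij)
  have hb0 : b 0 = e := hb 0 rfl
  have hlap : lap u (r • e) = ∑ i, iteratedFDeriv ℝ 2 u (r • e) (fun _ => b i) := by
    have h1 := InnerProductSpace.laplacian_eq_iteratedFDeriv_orthonormalBasis u b
    have h2 := InnerProductSpace.laplacian_eq_iteratedFDeriv_orthonormalBasis u
      (EuclideanSpace.basisFun (Fin (m + 1)) ℝ)
    have h3 := congrFun (h2.symm.trans h1) (r • e)
    have hv : ∀ v : EuclideanSpace ℝ (Fin (m + 1)), ![v, v] = fun _ => v := by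
      intro v; funext i; fin_cases i <;> rfl
    simp only [hv, EuclideanSpace.basisFun_apply] at h3
    exact h3
  set H : ℝ → ℝ := fun s => u (s • e) with hH
  have hHc : ContDiff ℝ 2 H := hu.comp (contDiff_id.smul contDiff_const)
  have hrad : iteratedFDeriv ℝ 2 u (r • e) (fun _ => b 0) = deriv (deriv H) r := by
    have := iteratedFDeriv_two_line hu 0 e r
    simpa [hb0] using this
  have htan : ∀ i : Fin m, iteratedFDeriv ℝ 2 u (r • e) (fun _ => b i.succ) = 1 / r * deriv H r := by
    intro i
    have h1 := iteratedFDeriv_two_line hu (r • e) (b i.succ) 0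
    rw [zero_smul, add_zero] at h1
    rw [h1]
    have hperp : inner ℝ e (b i.succ) = 0 := by
      rw [← hb0]; exact b.orthonormal.2 (Fin.succ_ne_zero i).symm
    have hpos : ∀ s : ℝ, 0 < r ^ 2 + s ^ 2 := fun s => by positivity
    have h2 : (fun s : ℝ => u (r • e + s • b i.succ)) = fun s => H (√(r ^ 2 + s ^ 2)) := by
      funext s
      refine hr _ _ ?_
      rw [norm_smul, he, mul_one, Real.norm_of_nonneg (Real.sqrt_nonneg _)]
      have h3 : ‖r • e + s • b i.succ‖ ^ 2 = r ^ 2 + s ^ 2 := by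
        rw [norm_add_sq_real, inner_smul_left, inner_smul_right, hperp, norm_smul, norm_smul, he,
          b.orthonormal.1]
        simp
      rw [← h3, Real.sqrt_sq (norm_nonneg _)]
    rw [h2]
    have h3 : deriv (fun s => H (√(r ^ 2 + s ^ 2)))
        = fun s => s * (deriv H (√(r ^ 2 + s ^ 2)) / √(r ^ 2 + s ^ 2)) := by
      funext s
      have h4 : HasDerivAt (fun s : ℝ => r ^ 2 + s ^ 2) (2 * s) s := by
        simpa using (hasDerivAt_pow 2 s).const_add (r ^ 2)
      have h5 := (hHc.differentiable (by norm_num) _).hasDerivAt.comp s (h4.sqrt (hpos s).ne')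
      have h6 : 0 < √(r ^ 2 + s ^ 2) := Real.sqrt_pos.2 (hpos s)
      refine h5.deriv.trans ?_
      field_simp
    rw [h3]
    -- the derivative of `s * φ s` at `0` is `φ 0`, as `φ` is continuous
    have hφ : ContinuousAt (fun s : ℝ => deriv H (√(r ^ 2 + s ^ 2)) / √(r ^ 2 + s ^ 2)) 0 := by
      refine ContinuousAt.div ?_ (by fun_prop) (Real.sqrt_pos.2 (hpos 0)).ne'
      exact ((hHc.continuous_deriv (by norm_num)).comp (by fun_prop)).continuousAt
    have h7 : HasDerivAt
        (fun s : ℝ => s * (deriv H (√(r ^ 2 + s ^ 2)) / √(r ^ 2 + s ^ 2)))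
        (deriv H (√(r ^ 2 + 0 ^ 2)) / √(r ^ 2 + 0 ^ 2)) 0 := by
      rw [hasDerivAt_iff_tendsto_slope]
      refine (hφ.tendsto.mono_left nhdsWithin_le_nhds).congr' ?_
      filter_upwards [self_mem_nhdsWithin] with s hs
      rw [slope_def_field]
      have : s ≠ 0 := hs
      field_simp
      ring
    rw [h7.deriv]
    have : √(r ^ 2 + 0 ^ 2) = r := by rw [zero_pow two_ne_zero, add_zero, Real.sqrt_sq hr0.le]
    rw [this]; ring
  rw [hlap, Fin.sum_univ_succ, hrad, Finset.sum_congr rfl (fun i _ => htan i)]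
  simp only [Finset.sum_const, Finset.card_univ, Fintype.card_fin, nsmul_eq_mul]
  push_cast
  ring

theorem contDiff_lap {n m : ℕ} {u : EuclideanSpace ℝ (Fin n) → ℝ}
    (hu : ContDiff ℝ ((m + 2 : ℕ) : WithTop ℕ∞) u) : ContDiff ℝ m (lap u) := by
  unfold lap
  refine ContDiff.sum fun i _ => ?_
  have h1 : ContDiff ℝ m (iteratedFDeriv ℝ 2 u) :=
    hu.iteratedFDeriv_right (by push_cast; rfl)
  exact ((ContinuousMultilinearMap.apply ℝ (fun _ : Fin 2 => EuclideanSpace ℝ (Fin n)) ℝ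
    (fun _ => EuclideanSpace.single i 1)).contDiff).comp h1

theorem radial_lap {n : ℕ} {u : EuclideanSpace ℝ (Fin n) → ℝ} (hu : ContDiff ℝ 2 u)
    (hr : Radial u) : Radial (lap u) := by
  intro x y hxy
  rcases eq_or_ne x 0 with hx | hx
  · rw [hx, norm_zero] at hxy
    rw [hx, norm_eq_zero.1 hxy.symm]
  · have hx0 : 0 < ‖x‖ := norm_pos_iff.2 hx
    have hy0 : 0 < ‖y‖ := hxy ▸ hx0
    have key : ∀ z : EuclideanSpace ℝ (Fin n), 0 < ‖z‖ → ‖‖z‖⁻¹ • z‖ = 1 ∧ z = ‖z‖ • ‖z‖⁻¹ • z := by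
      intro z hz
      constructor
      · rw [norm_smul, norm_inv, norm_norm, inv_mul_cancel₀ hz.ne']
      · rw [smul_smul, mul_inv_cancel₀ hz.ne', one_smul]
    obtain ⟨hex, hx'⟩ := key x hx0
    obtain ⟨hey, hy'⟩ := key y hy0
    have hH : (fun s : ℝ => u (s • ‖x‖⁻¹ • x)) = fun s => u (s • ‖y‖⁻¹ • y) := by
      funext s
      exact hr _ _ (by rw [norm_smul s, norm_smul s, hex, hey])
    rw [hx', hy', lap_radial hu hr hex hx0, lap_radial hu hr hey hy0, hH, hxy]

theorem iterLap_succ {n : ℕ} (j : ℕ) (u : EuclideanSpace ℝ (Fin n) → ℝ) :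
    iterLap (j + 1) u = lap (iterLap j u) := Function.iterate_succ_apply' _ _ _

theorem iterLap_props {n N : ℕ} {u : EuclideanSpace ℝ (Fin n) → ℝ}
    (hu : ContDiff ℝ ((2 * N : ℕ) : WithTop ℕ∞) u) (hr : Radial u) :
    ∀ j ≤ N, ContDiff ℝ ((2 * (N - j) : ℕ) : WithTop ℕ∞) (iterLap j u) ∧ Radial (iterLap j u) := by
  intro j
  induction j with
  | zero => intro _; exact ⟨hu, hr⟩
  | succ j ih =>
    intro hj
    obtain ⟨h1, h2⟩ := ih (by omega)
    rw [iterLap_succ]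
    rw [show 2 * (N - j) = 2 * (N - (j + 1)) + 2 by omega] at h1
    exact ⟨contDiff_lap h1, radial_lap (h1.of_le (by push_cast; exact le_add_self)) h2⟩

/-! ### Constant-coefficient operators and the reduction to a chain -/

/-- The operator `q(d/dt)` applied to `f`, for polynomials `q` of degree at most `N`. -/
def opT (N : ℕ) (q : Polynomial ℝ) (f : ℝ → ℝ) (t : ℝ) : ℝ :=
  ∑ i ∈ Finset.range (N + 1), q.coeff i * iteratedDeriv i f t

theorem opT_lin (N : ℕ) (q r : Polynomial ℝ) (a b : ℝ) (f : ℝ → ℝ) (t : ℝ) :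
    opT N (Polynomial.C a * q + Polynomial.C b * r) f t = a * opT N q f t + b * opT N r f t := by
  simp only [opT, Polynomial.coeff_add, Polynomial.coeff_C_mul, Finset.mul_sum,
    ← Finset.sum_add_distrib]
  exact Finset.sum_congr rfl fun i _ => by ring

theorem hasDerivAt_opT {N : ℕ} {q : Polynomial ℝ} {f : ℝ → ℝ}
    (hf : ContDiff ℝ (N : WithTop ℕ∞) f) (hq : q.natDegree < N) (t : ℝ) :
    HasDerivAt (opT N q f) (opT N (Polynomial.X * q) f t) t := by
  have hN : q.coeff N = 0 := Polynomial.coeff_eq_zero_of_natDegree_lt hq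
  have h1 : opT N q f = fun t => ∑ i ∈ Finset.range N, q.coeff i * iteratedDeriv i f t := by
    funext t
    rw [opT, Finset.sum_range_succ, hN, zero_mul, add_zero]
  have h2 : opT N (Polynomial.X * q) f t
      = ∑ i ∈ Finset.range N, q.coeff i * iteratedDeriv (i + 1) f t := by
    rw [opT, Finset.sum_range_succ']
    simp [Polynomial.coeff_X_mul]
  rw [h1, h2]
  refine HasDerivAt.fun_sum fun i hi => ?_
  have h3 : Differentiable ℝ (iteratedDeriv i f) :=
    hf.differentiable_iteratedDeriv i (by exact_mod_cast Finset.mem_range.1 hi)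
  have h4 := (h3 t).hasDerivAt.const_mul (q.coeff i)
  rwa [← iteratedDeriv_succ] at h4

theorem opT_one (N : ℕ) (f : ℝ → ℝ) : opT N 1 f = f := by
  funext t
  rw [opT, Finset.sum_range_succ']
  simp [Polynomial.coeff_one]

/-- The product of the first `j` factors `a i + b i X`. -/
def linProd (a b : ℕ → ℝ) (j : ℕ) : Polynomial ℝ :=
  ∏ i ∈ Finset.range j, (Polynomial.C (a i) + Polynomial.C (b i) * Polynomial.X)

theorem linProd_succ (a b : ℕ → ℝ) (j : ℕ) : linProd a b (j + 1)
    = Polynomial.C (a j) * linProd a b j + Polynomial.C (b j) * (Polynomial.X * linProd a b j) := by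
  rw [linProd, Finset.prod_range_succ, ← linProd]
  ring

theorem natDegree_linProd_le (a b : ℕ → ℝ) (j : ℕ) : (linProd a b j).natDegree ≤ j := by
  refine (Polynomial.natDegree_prod_le _ _).trans ?_
  refine (Finset.sum_le_card_nsmul _ _ 1 fun i _ => ?_).trans (by simp)
  rw [add_comm]
  exact Polynomial.natDegree_linear_le

theorem opT_chain {N : ℕ} {γ ε : ℕ → ℝ} (hε : ∀ j, ε j = -1 ∨ ε j = 1) {f : ℝ → ℝ}
    (hf : ContDiff ℝ (N : WithTop ℕ∞) f) :
    DChain N γ ε Set.univ (fun j => opT N (linProd γ ε j) f) := by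
  intro j hj t _
  have h1 := hasDerivAt_opT hf ((natDegree_linProd_le γ ε j).trans_lt hj) t
  refine h1.congr_deriv ?_
  simp only
  rw [linProd_succ, opT_lin]
  rcases hε j with h | h <;> rw [h] <;> ring

theorem contDiff_opT_continuous {N : ℕ} {q : Polynomial ℝ} {f : ℝ → ℝ}
    (hf : ContDiff ℝ (N : WithTop ℕ∞) f) : Continuous (opT N q f) := by
  unfold opT
  refine continuous_finsetSum _ fun i hi => continuous_const.mul ?_
  exact hf.continuous_iteratedDeriv i (by exact_mod_cast Nat.lt_succ_iff.1 (Finset.mem_range.1 hi))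

/-- The conjugated radial Laplacian: with `P t = e^{at} H(e^t)`, the function
`e^{(a+2)t} (H'' + (n-1)/r H')(e^t)` is `(D - a)(D - a + n - 2) P`. -/
theorem emden_step {H P : ℝ → ℝ} (hH : ContDiff ℝ 2 H) (a ν : ℝ)
    (hP : ∀ t, P t = rexp (a * t) * H (rexp t)) {P1 P2 : ℝ → ℝ}
    (h1 : ∀ t, HasDerivAt P (P1 t) t) (h2 : ∀ t, HasDerivAt P1 (P2 t) t) (t : ℝ) :
    rexp ((a + 2) * t) * (deriv (deriv H) (rexp t) + (ν - 1) / rexp t * deriv H (rexp t))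
      = a * (a - ν + 2) * P t + (-(2 * a - ν + 2)) * P1 t + P2 t := by
  have hexp : ∀ t, HasDerivAt (fun t => rexp (a * t)) (a * rexp (a * t)) t := fun t => by
    have := ((hasDerivAt_id t).const_mul a).exp
    simpa [mul_comm] using this
  have hd : ∀ t, HasDerivAt (fun t => H (rexp t)) (deriv H (rexp t) * rexp t) t := fun t =>
    (hH.differentiable (by norm_num) _).hasDerivAt.comp t (Real.hasDerivAt_exp t)
  have hd' : ∀ t, HasDerivAt (fun t => deriv H (rexp t)) (deriv (deriv H) (rexp t) * rexp t) t := by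
    intro t
    have h : ContDiff ℝ 1 (deriv H) :=
      (contDiff_succ_iff_deriv (n := 1).1 (by exact_mod_cast hH)).2.2
    exact (h.differentiable (by norm_num) _).hasDerivAt.comp t (Real.hasDerivAt_exp t)
  have e1 : ∀ t, P1 t = rexp (a * t) * (a * H (rexp t) + deriv H (rexp t) * rexp t) := by
    intro t
    have h3 := (hexp t).mul (hd t)
    have h4 := h1 t
    rw [funext hP] at h4
    rw [h4.unique h3]; ring
  have e2 : P2 t = rexp (a * t) * (a ^ 2 * H (rexp t) + (2 * a + 1) * (deriv H (rexp t) * rexp t)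
      + deriv (deriv H) (rexp t) * rexp t ^ 2) := by
    have h3 := (hexp t).mul (((hd t).const_mul a).add ((hd' t).mul (Real.hasDerivAt_exp t)))
    have h4 := h2 t
    rw [funext e1] at h4
    rw [h4.unique h3]
    simp only [Pi.add_apply, Pi.mul_apply]
    ring
  rw [e1, e2, hP, add_mul, exp_add, show rexp (2 * t) = rexp t ^ 2 by rw [← exp_nat_mul]; norm_num]
  have := (exp_pos t).ne'
  field_simp
  ring

/-- The Emden-Fowler transform `t ↦ e^{gt} u(e^t e)` along a fixed direction `e`. -/
def emd {n : ℕ} (g : ℝ) (u : EuclideanSpace ℝ (Fin n) → ℝ) (e : EuclideanSpace ℝ (Fin n)) (t : ℝ) :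
    ℝ := rexp (g * t) * u (rexp t • e)

/-- The polynomial of the `j`-th conjugated iterated Laplacian. -/
def lapPoly (g ν : ℝ) (j : ℕ) : Polynomial ℝ :=
  ∏ i ∈ Finset.range j, (Polynomial.X - Polynomial.C (g + 2 * i)) *
    (Polynomial.X - Polynomial.C (g + 2 * i - ν + 2))

theorem natDegree_lapPoly_le (g ν : ℝ) (j : ℕ) : (lapPoly g ν j).natDegree ≤ 2 * j := by
  refine (Polynomial.natDegree_prod_le _ _).trans ?_
  refine (Finset.sum_le_card_nsmul _ _ 2 fun i _ => ?_).trans (by simp [mul_comm])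
  refine Polynomial.natDegree_mul_le.trans ?_
  rw [Polynomial.natDegree_X_sub_C, Polynomial.natDegree_X_sub_C]

theorem contDiff_emd {n : ℕ} {m : WithTop ℕ∞} (g : ℝ) {u : EuclideanSpace ℝ (Fin n) → ℝ}
    (hu : ContDiff ℝ m u) (e : EuclideanSpace ℝ (Fin n)) : ContDiff ℝ m (emd g u e) := by
  unfold emd
  exact (Real.contDiff_exp.comp (contDiff_const.mul contDiff_id)).mul
    (hu.comp (Real.contDiff_exp.smul contDiff_const))

/-- `e^{(g+2j)t} (Δ^j u)(e^t e)` is a constant-coefficient operator applied to the transform. -/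
theorem iterLap_emd {n N : ℕ} {u : EuclideanSpace ℝ (Fin n) → ℝ} (g : ℝ)
    (hu : ContDiff ℝ ((2 * N : ℕ) : WithTop ℕ∞) u) (hr : Radial u)
    {e : EuclideanSpace ℝ (Fin n)} (he : ‖e‖ = 1) :
    ∀ j ≤ N, ∀ t, rexp ((g + 2 * j) * t) * iterLap j u (rexp t • e)
      = opT (2 * N) (lapPoly g n j) (emd g u e) t := by
  intro j
  induction j with
  | zero =>
    intro _ t
    simp [lapPoly, opT_one, emd, iterLap]
  | succ j ih =>
    intro hj t
    have ih := ih (by omega)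
    obtain ⟨c1, r1⟩ := iterLap_props hu hr j (by omega)
    have c2 : ContDiff ℝ 2 (iterLap j u) := c1.of_le (by
      exact_mod_cast (show 2 ≤ 2 * (N - j) by omega))
    set w := emd g u e with hw
    have hwc : ContDiff ℝ ((2 * N : ℕ) : WithTop ℕ∞) w := contDiff_emd g hu e
    have hdeg := natDegree_lapPoly_le g n j
    have d1 := fun t => hasDerivAt_opT hwc (q := lapPoly g n j) (by omega) t
    have d2 := fun t => hasDerivAt_opT hwc (q := Polynomial.X * lapPoly g n j) (by
      refine (Polynomial.natDegree_mul_le).trans_lt ?_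
      rw [Polynomial.natDegree_X]; omega) t
    have hHc : ContDiff ℝ 2 (fun s : ℝ => iterLap j u (s • e)) :=
      c2.comp (contDiff_id.smul contDiff_const)
    have key := emden_step hHc (g + 2 * j) n (fun t => (ih t).symm) d1 d2 t
    rw [iterLap_succ, lap_radial c2 r1 he (exp_pos t)]
    rw [show g + 2 * ((j + 1 : ℕ) : ℝ) = g + 2 * j + 2 by push_cast; ring, key]
    rw [show lapPoly g n (j + 1) = Polynomial.C 1 * (Polynomial.C ((g + 2 * j) * (g + 2 * j - n + 2))
        * lapPoly g n j + Polynomial.C (-(2 * (g + 2 * j) - n + 2)) * (Polynomial.X * lapPoly g n j))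
        + Polynomial.C 1 * (Polynomial.X * (Polynomial.X * lapPoly g n j)) by
      rw [lapPoly, Finset.prod_range_succ, ← lapPoly]
      simp only [map_mul, map_sub, map_add, map_neg, map_one, map_ofNat]
      ring, opT_lin, opT_lin]
    ring

/-- The conjugated `Δ^k` is `(-1)^k` times the product of the factors of the chain. -/
theorem Gam_Eps_poly {g ν : ℝ} {k : ℕ} (hν : ν = 2 * g + 2 * k) :
    linProd (Gam g k) (Eps k) (2 * k) = Polynomial.C ((-1) ^ k) * lapPoly g ν k := by
  have h1 : linProd (Gam g k) (Eps k) (2 * k)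
      = (∏ i ∈ Finset.range k, (Polynomial.C (g + 2 * i) - Polynomial.X)) *
        ∏ i ∈ Finset.range k, (Polynomial.C (g + 2 * i) + Polynomial.X) := by
    rw [linProd, two_mul, Finset.prod_range_add]
    congr 1
    · refine Finset.prod_congr rfl fun i hi => ?_
      have := Finset.mem_range.1 hi
      simp only [Gam, Eps, this, if_true, map_neg, map_one]
      ring
    · rw [← Finset.prod_range_reflect]
      refine Finset.prod_congr rfl fun i hi => ?_
      have hi := Finset.mem_range.1 hi
      have h2 : ¬ (k + (k - 1 - i) < k) := by omega
      have h3 : 2 * k - 1 - (k + (k - 1 - i)) = i := by omega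
      simp [Gam, Eps, h3]
  have h4 : lapPoly g ν k
      = (∏ i ∈ Finset.range k, (Polynomial.X - Polynomial.C (g + 2 * (i : ℝ)))) *
        ∏ i ∈ Finset.range k, (Polynomial.C (g + 2 * (i : ℝ)) + Polynomial.X) := by
    rw [lapPoly, Finset.prod_mul_distrib]
    congr 1
    rw [← Finset.prod_range_reflect]
    refine Finset.prod_congr rfl fun i hi => ?_
    have hi := Finset.mem_range.1 hi
    have h5 : ((k - 1 - i : ℕ) : ℝ) = k - 1 - i := by
      rw [Nat.cast_sub (by omega), Nat.cast_sub (by omega)]; simp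
    rw [h5, hν, show g + 2 * ((k : ℝ) - 1 - i) - (2 * g + 2 * k) + 2 = -(g + 2 * i) by ring, map_neg]
    ring
  rw [h1, h4, ← mul_assoc]
  congr 1
  have h6 : ∀ i ∈ Finset.range k, Polynomial.C (g + 2 * (i : ℝ)) - Polynomial.X
      = Polynomial.C (-1) * (Polynomial.X - Polynomial.C (g + 2 * (i : ℝ))) := fun i _ => by
    rw [map_neg, map_one]; ring
  rw [Finset.prod_congr rfl h6, Finset.prod_mul_distrib, Finset.prod_const, Finset.card_range, map_pow]

/-! ### The Emden-Fowler transform of a solution -/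

theorem emden_exponents {n k : ℕ} (hk : 0 < k) (hn : 2 * k < n) :
    0 < ((n : ℝ) - 2 * k) / 2 ∧ 2 < twoStar n k ∧
    ((n : ℝ) - 2 * k) / 2 * (twoStar n k - 2) = 2 * k ∧
    ((n : ℝ) - 2 * k) / 2 * twoStar n k = n := by
  have hk' : (0 : ℝ) < k := by exact_mod_cast hk
  have hn' : (2 : ℝ) * k < n := by exact_mod_cast hn
  have h1 : (0 : ℝ) < n - 2 * k := by linarith
  refine ⟨by linarith, ?_, ?_, ?_⟩
  · rw [twoStar, lt_div_iff₀ h1]; linarith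
  · rw [twoStar]; field_simp; ring
  · rw [twoStar]; field_simp

theorem Fnl_exp_mul {p g a : ℝ} (t x : ℝ) (hg : g * (p - 2) = a) :
    Fnl p (rexp (g * t) * x) = rexp ((g + a) * t) * (|x| ^ (p - 2) * x) := by
  rw [Fnl, abs_mul, abs_of_pos (exp_pos _), mul_rpow (exp_pos _).le (abs_nonneg _),
    ← Real.exp_mul, show g * t * (p - 2) = a * t by rw [← hg]; ring, add_mul, exp_add]
  ring

/-- Derivatives of the transform of a function smooth at the origin decay at `-∞`. -/
theorem tendsto_iteratedDeriv_emd {N : ℕ} {g : ℝ} (hg : 0 < g) :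
    ∀ i ≤ N, ∀ {H : ℝ → ℝ}, ContDiff ℝ (N : WithTop ℕ∞) H →
    Tendsto (iteratedDeriv i (fun t => rexp (g * t) * H (rexp t))) atBot (𝓝 0) := by
  have key : ∀ i ≤ N, ∀ H : ℝ → ℝ, ContDiff ℝ (N : WithTop ℕ∞) H → ∃ h : ℝ → ℝ,
      ContDiff ℝ ((N - i : ℕ) : WithTop ℕ∞) h ∧
      iteratedDeriv i (fun t => rexp (g * t) * H (rexp t)) = fun t => rexp (g * t) * h (rexp t) := by
    intro i
    induction i with
    | zero => intro _ H hH; exact ⟨H, by simpa using hH, by simp⟩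
    | succ i ih =>
      intro hi H hH
      obtain ⟨h, hh, he⟩ := ih (by omega) H hH
      rw [show N - i = N - (i + 1) + 1 by omega] at hh
      push_cast at hh
      obtain ⟨hd, -, hh'⟩ := contDiff_succ_iff_deriv.1 hh
      refine ⟨fun r => g * h r + r * deriv h r, ?_, ?_⟩
      · exact (contDiff_const.mul (hh.of_le le_self_add)).add (contDiff_id.mul hh')
      · rw [iteratedDeriv_succ, he]
        funext t
        have h1 : HasDerivAt (fun t => rexp (g * t)) (rexp (g * t) * (g * 1)) t :=
          ((hasDerivAt_id t).const_mul g).exp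
        have h2 := (hd _).hasDerivAt.comp t (Real.hasDerivAt_exp t)
        refine (h1.mul h2).deriv.trans ?_
        simp only [Function.comp]
        ring
  intro i hi H hH
  obtain ⟨h, hh, he⟩ := key i hi H hH
  rw [he]
  have h1 : Tendsto (fun t => rexp (g * t)) atBot (𝓝 0) :=
    Real.tendsto_exp_atBot.comp (tendsto_id.const_mul_atBot hg)
  have h2 : Tendsto (fun t => h (rexp t)) atBot (𝓝 (h 0)) :=
    (hh.continuous.tendsto 0).comp Real.tendsto_exp_atBot
  simpa using h1.mul h2

theorem iteratedDeriv_emd_zero {m : ℕ} {g : ℝ} {H : ℝ → ℝ} (hH : ContDiff ℝ (m : WithTop ℕ∞) H)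
    (h0 : ∀ j ≤ m, iteratedDeriv j H 1 = 0) :
    iteratedDeriv m (fun t => rexp (g * t) * H (rexp t)) 0 = 0 := by
  have hc : ∀ i ≤ m, iteratedFDeriv ℝ i (H ∘ rexp) 0 = 0 := by
    intro i hi
    have h1 := norm_iteratedFDeriv_comp_le (n := i) hH
      (Real.contDiff_exp (n := (m : WithTop ℕ∞))) (by exact_mod_cast hi)
      (0 : ℝ) (C := 0) (D := 1) (fun l hl => by
        rw [norm_iteratedFDeriv_eq_norm_iteratedDeriv, Real.exp_zero, h0 l (hl.trans hi), norm_zero])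
      (fun l _ _ => by
        rw [norm_iteratedFDeriv_eq_norm_iteratedDeriv, iteratedDeriv_eq_iterate, Real.iter_deriv_exp]
        simp)
    rw [mul_zero, zero_mul] at h1
    exact norm_le_zero_iff.1 h1
  have h2 := norm_iteratedFDeriv_mul_le (N := (m : WithTop ℕ∞)) (f := fun t => rexp (g * t)) (g := H ∘ rexp)
    (Real.contDiff_exp.comp (contDiff_const.mul contDiff_id))
    (hH.comp Real.contDiff_exp) 0 (n := m) le_rfl
  rw [Finset.sum_eq_zero (fun i _ => by rw [hc _ (Nat.sub_le _ _), norm_zero, mul_zero]),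
    norm_iteratedFDeriv_eq_norm_iteratedDeriv] at h2
  exact norm_le_zero_iff.1 h2

/-- A radial solution becomes a chain `z` on the line: `z 0` is the Emden-Fowler transform. -/
theorem emden_data {n k : ℕ} (hk : 0 < k) (hn : 2 * k < n) {lam : ℝ}
    {u : EuclideanSpace ℝ (Fin n) → ℝ} (hu : ContDiff ℝ (2 * k : ℕ) u) (hr : Radial u)
    (heq : ∀ x ∈ Metric.ball (0 : EuclideanSpace ℝ (Fin n)) 1,
      iterLap k u x - lam * u x = |u x| ^ (twoStar n k - 2) * u x)
    (hdir : ∀ x : EuclideanSpace ℝ (Fin n), ‖x‖ = 1 → ∀ j < k,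
      iteratedFDeriv ℝ j u x (fun _ => x) = 0)
    {e : EuclideanSpace ℝ (Fin n)} (he : ‖e‖ = 1) :
    ∃ z : ℕ → ℝ → ℝ, z 0 = emd (((n : ℝ) - 2 * k) / 2) u e ∧
      DChain (2 * k) (Gam (((n : ℝ) - 2 * k) / 2) k) (Eps k) Set.univ z ∧
      (∀ j, Continuous (z j)) ∧ (∀ j < k, z j 0 = 0) ∧
      (∀ j, Tendsto (z j) atBot (𝓝 0)) ∧
      (∀ t ≤ 0, z (2 * k) t
        = (-1) ^ k * (Fnl (twoStar n k) (z 0 t) + lam * rexp (2 * k * t) * z 0 t)) := by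
  obtain ⟨hg, hp, hgp, -⟩ := emden_exponents hk hn
  set g := ((n : ℝ) - 2 * k) / 2 with hgdef
  set p := twoStar n k
  set w := emd g u e with hw
  have hwc : ContDiff ℝ ((2 * k : ℕ) : WithTop ℕ∞) w := contDiff_emd g hu e
  set H : ℝ → ℝ := fun s => u (s • e) with hH
  have hHc : ContDiff ℝ ((2 * k : ℕ) : WithTop ℕ∞) H := hu.comp (contDiff_id.smul contDiff_const)
  have hwH : w = fun t => rexp (g * t) * H (rexp t) := rfl
  have hz0 : opT (2 * k) (linProd (Gam g k) (Eps k) 0) w = w := by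
    rw [linProd, Finset.prod_range_zero, opT_one]
  refine ⟨fun j => opT (2 * k) (linProd (Gam g k) (Eps k) j) w, hz0,
    opT_chain (fun j => (Eps_cases k j).symm) hwc, fun j => contDiff_opT_continuous hwc, ?_, ?_, ?_⟩
  · intro j hj
    simp only [opT]
    refine Finset.sum_eq_zero fun i _ => ?_
    rcases lt_or_ge j i with hi | hi
    · rw [Polynomial.coeff_eq_zero_of_natDegree_lt ((natDegree_linProd_le _ _ j).trans_lt hi),
        zero_mul]
    · have hd : ∀ l < k, iteratedDeriv l H 1 = 0 := by
        intro l hl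
        have h1 := (ContinuousLinearMap.toSpanSingleton ℝ e).iteratedFDeriv_comp_right hu 1 (i := l)
          (by exact_mod_cast (show l ≤ 2 * k by omega))
        have h2 : u ∘ ⇑(ContinuousLinearMap.toSpanSingleton ℝ e) = H := rfl
        rw [h2] at h1
        rw [iteratedDeriv, h1]
        simpa using hdir e he l hl
      rw [hwH, iteratedDeriv_emd_zero (hHc.of_le (by exact_mod_cast (show i ≤ 2 * k by omega)))
        (fun l hl => hd l (by omega)), mul_zero]
  · intro j
    have h1 : Tendsto (fun t => ∑ i ∈ Finset.range (2 * k + 1),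
        (linProd (Gam g k) (Eps k) j).coeff i * iteratedDeriv i w t) atBot
        (𝓝 (∑ i ∈ Finset.range (2 * k + 1), (linProd (Gam g k) (Eps k) j).coeff i * 0)) :=
      tendsto_finsetSum _ fun i hi => (tendsto_iteratedDeriv_emd hg i
        (Nat.lt_succ_iff.1 (Finset.mem_range.1 hi)) hHc).const_mul _
    simp only [mul_zero, Finset.sum_const_zero] at h1
    exact h1
  · have hlt : ∀ t < 0, opT (2 * k) (linProd (Gam g k) (Eps k) (2 * k)) w t
        = (-1) ^ k * (Fnl p (w t) + lam * rexp (2 * k * t) * w t) := by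
      intro t ht
      have h1 := opT_lin (2 * k) (lapPoly g n k) 0 ((-1) ^ k) 0 w t
      rw [mul_zero, add_zero, zero_mul, add_zero] at h1
      rw [Gam_Eps_poly (ν := n) (by rw [hgdef]; ring), h1,
        ← iterLap_emd g hu hr he k le_rfl t]
      have hb : rexp t • e ∈ Metric.ball (0 : EuclideanSpace ℝ (Fin n)) 1 := by
        rw [mem_ball_zero_iff, norm_smul, he, mul_one, Real.norm_of_nonneg (exp_pos _).le]
        exact Real.exp_lt_one_iff.2 ht
      have h2 := heq _ hb
      rw [sub_eq_iff_eq_add] at h2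
      rw [h2, hwH, Fnl_exp_mul t _ hgp, add_mul, exp_add]
      simp only [hH]
      ring
    intro t ht
    simp only [hz0]
    have hcl : t ∈ closure (Set.Iio (0 : ℝ)) := by rw [closure_Iio]; exact ht
    have hwcont := hwc.continuous
    refine (Set.EqOn.closure (s := Set.Iio (0 : ℝ)) (fun t ht => hlt t ht)
      (contDiff_opT_continuous hwc) ?_) hcl
    exact continuous_const.mul (((continuous_Fnl hp).comp hwcont).add
      ((continuous_const.mul (by fun_prop)).mul hwcont))

/-- In polar coordinates the `L^{2*}` norm becomes `∫ |w|^{2*} dt` up to the area of the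
sphere, as the weight `e^{nt}` is absorbed by the transform. -/
theorem emden_integral {n k : ℕ} (hk : 0 < k) (hn : 2 * k < n) {A : ℝ}
    {u : EuclideanSpace ℝ (Fin n) → ℝ} (hu : Continuous u) (hr : Radial u)
    (hA : (∫ x in Metric.ball (0 : EuclideanSpace ℝ (Fin n)) 1, |u x| ^ twoStar n k) ≤ A)
    {e : EuclideanSpace ℝ (Fin n)} (he : ‖e‖ = 1) {a : ℝ} (ha : a ≤ 0) :
    ∫ t in a..0, |emd (((n : ℝ) - 2 * k) / 2) u e t| ^ twoStar n k
      ≤ A / (n * volume.real (Metric.ball (0 : EuclideanSpace ℝ (Fin n)) 1)) := by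
  obtain ⟨hg, hp, hgp, hgn⟩ := emden_exponents hk hn
  set g := ((n : ℝ) - 2 * k) / 2 with hgdef
  set p := twoStar n k
  have hn0 : 0 < n := by omega
  have : Nonempty (Fin n) := ⟨⟨0, hn0⟩⟩
  have hvol : 0 < volume.real (Metric.ball (0 : EuclideanSpace ℝ (Fin n)) 1) :=
    ENNReal.toReal_pos (measure_ball_pos volume _ one_pos).ne' measure_ball_lt_top.ne
  set G : ℝ → ℝ := fun s => s ^ (n - 1) * |u (s • e)| ^ p with hG
  have hGc : Continuous G := (continuous_pow _).mul
    (((hu.comp (by fun_prop)).abs).rpow_const fun x => Or.inr (by linarith))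
  have hpolar : (∫ x in Metric.ball (0 : EuclideanSpace ℝ (Fin n)) 1, |u x| ^ p)
      = n * volume.real (Metric.ball (0 : EuclideanSpace ℝ (Fin n)) 1) * ∫ s in Set.Ioo 0 1, G s := by
    have h1 := integral_fun_norm_addHaar (volume : Measure (EuclideanSpace ℝ (Fin n)))
      ((Set.Iio (1 : ℝ)).indicator fun s => |u (s • e)| ^ p)
    rw [finrank_euclideanSpace_fin] at h1
    have h2 : (fun x : EuclideanSpace ℝ (Fin n) => (Set.Iio (1 : ℝ)).indicator
        (fun s => |u (s • e)| ^ p) ‖x‖)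
        = (Metric.ball (0 : EuclideanSpace ℝ (Fin n)) 1).indicator fun x => |u x| ^ p := by
      funext x
      have h3 : u (‖x‖ • e) = u x := hr _ _ (by simp [norm_smul, he])
      simp only [Set.indicator, Set.mem_Iio, mem_ball_zero_iff, h3]
    have h4 : (fun s : ℝ => s ^ (n - 1) • (Set.Iio (1 : ℝ)).indicator
        (fun s => |u (s • e)| ^ p) s) = (Set.Iio (1 : ℝ)).indicator G := by
      funext s
      by_cases hs : s < 1 <;> simp [Set.indicator, hs, hG]
    rw [h2, integral_indicator measurableSet_ball, h4,
      setIntegral_indicator measurableSet_Iio, Set.Ioi_inter_Iio] at h1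
    rw [h1, nsmul_eq_mul, smul_eq_mul]; ring
  have hsub : ∫ t in a..0, |emd g u e t| ^ p = ∫ s in rexp a..1, G s := by
    have h1 := intervalIntegral.integral_comp_mul_deriv (a := a) (b := 0) (f := rexp) (f' := rexp)
      (g := G) (fun x _ => Real.hasDerivAt_exp x) Real.continuous_exp.continuousOn hGc
    rw [Real.exp_zero] at h1
    rw [← h1]
    refine intervalIntegral.integral_congr fun t _ => ?_
    simp only [emd, hG, Function.comp]
    rw [abs_mul, abs_of_pos (exp_pos _), mul_rpow (exp_pos _).le (abs_nonneg _), ← Real.exp_mul,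
      show g * t * p = n * t by rw [← hgn]; ring, ← Real.exp_nat_mul, mul_right_comm, ← exp_add]
    congr 2
    rw [Nat.cast_sub (by omega)]; push_cast; ring
  have hmono : ∫ s in rexp a..1, G s ≤ ∫ s in Set.Ioo 0 1, G s := by
    have h1 : rexp a ≤ 1 := Real.exp_le_one_iff.2 ha
    rw [intervalIntegral.integral_of_le h1, integral_Ioc_eq_integral_Ioo]
    refine setIntegral_mono_set ?_ ?_ ?_
    · exact (hGc.continuousOn.integrableOn_Icc (a := 0) (b := 1)).mono_set Set.Ioo_subset_Icc_self
    · filter_upwards [ae_restrict_mem measurableSet_Ioo] with s hs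
      exact mul_nonneg (pow_nonneg hs.1.le _) (rpow_nonneg (abs_nonneg _) _)
    · exact (Set.Ioo_subset_Ioo_left (exp_pos a).le).eventuallyLE
  have hn0' : (0 : ℝ) < n := by exact_mod_cast hn0
  rw [hsub, le_div_iff₀ (by positivity), mul_comm]
  refine le_trans ?_ hA
  rw [hpolar]
  gcongr

/-! ### Compactness of families of chains -/

/-- Arzelà-Ascoli on the line for tuples of uniformly bounded, uniformly Lipschitz functions. -/
theorem arzela_line {N : ℕ} {F : ℕ → ℕ → ℝ → ℝ} {L B : ℝ} (hL : 0 ≤ L)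
    (hF : ∀ i, ∀ j < N, ∀ s t, |F i j s - F i j t| ≤ L * |s - t|)
    (hB : ∀ i, ∀ j < N, ∀ t, |F i j t| ≤ B) :
    ∃ φ : ℕ → ℕ, StrictMono φ ∧ ∃ f : ℕ → ℝ → ℝ,
      (∀ j < N, ∀ s t, |f j s - f j t| ≤ L * |s - t|) ∧ (∀ j < N, ∀ t, |f j t| ≤ B) ∧
      ∀ j < N, ∀ R : ℝ, ∀ η > 0, ∀ᶠ i in atTop, ∀ t, |t| ≤ R → |F (φ i) j t - f j t| < η := by
  set S : Set C(ℝ, Fin N → ℝ) :=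
    {f | (∀ s t, ∀ j, |f s j - f t j| ≤ L * |s - t|) ∧ ∀ t, ∀ j, |f t j| ≤ B} with hS
  have lip : ∀ f : ℝ → Fin N → ℝ, (∀ s t, ∀ j, |f s j - f t j| ≤ L * |s - t|) →
      LipschitzWith ⟨L, hL⟩ f := by
    intro f hf
    refine LipschitzWith.of_dist_le_mul fun s t => ?_
    refine (dist_pi_le_iff (mul_nonneg hL dist_nonneg)).2 fun j => ?_
    rw [Real.dist_eq, Real.dist_eq]; exact hf s t j
  have hcomp : IsCompact S := by
    refine ArzelaAscoli.isCompact_of_equicontinuous S ?_ ?_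
    · have h1 : ContinuousMap.toFun '' S = {f : ℝ → Fin N → ℝ |
          (∀ s t, ∀ j, |f s j - f t j| ≤ L * |s - t|) ∧ ∀ t, ∀ j, |f t j| ≤ B} := by
        ext f
        constructor
        · rintro ⟨f, hf, rfl⟩; exact hf
        · intro hf
          exact ⟨⟨f, (lip f hf.1).continuous⟩, hf, rfl⟩
      rw [h1]
      have hK : IsCompact (Set.univ.pi fun _ : ℝ => Set.univ.pi fun _ : Fin N => Set.Icc (-B) B) :=
        isCompact_univ_pi fun _ => isCompact_univ_pi fun _ => isCompact_Icc
      refine hK.of_isClosed_subset ?_ ?_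
      · have e1 : ∀ (s : ℝ) (j : Fin N), Continuous fun f : ℝ → Fin N → ℝ => f s j := fun s j =>
          (continuous_apply j).comp (continuous_apply s)
        rw [Set.ofPred_and]
        refine IsClosed.inter ?_ ?_
        · simp only [Set.ofPred_forall]
          exact isClosed_iInter fun s => isClosed_iInter fun t => isClosed_iInter fun j =>
            isClosed_le ((e1 s j).sub (e1 t j)).abs continuous_const
        · simp only [Set.ofPred_forall]
          exact isClosed_iInter fun t => isClosed_iInter fun j =>
            isClosed_le (e1 t j).abs continuous_const
      · intro f hf t _ j _
        exact abs_le.1 (hf.2 t j)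
    · refine (LipschitzWith.uniformEquicontinuous _ ⟨L, hL⟩ ?_).equicontinuous
      intro f
      exact lip _ f.2.1
  have hFc : ∀ i, Continuous fun t (j : Fin N) => F i j t := fun i =>
    (lip _ fun s t j => hF i j j.2 s t).continuous
  obtain ⟨f, hfS, φ, hφ, hlim⟩ := hcomp.tendsto_subseq
    (x := fun i => ⟨fun t (j : Fin N) => F i j t, hFc i⟩)
    (fun i => ⟨fun s t j => hF i j j.2 s t, fun t j => hB i j j.2 t⟩)
  rw [ContinuousMap.tendsto_iff_tendstoLocallyUniformly,
    tendstoLocallyUniformly_iff_forall_isCompact] at hlim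
  refine ⟨φ, hφ, fun j t => if h : j < N then f t ⟨j, h⟩ else 0, ?_, ?_, ?_⟩
  · intro j hj s t
    simp only [hj, dif_pos]
    exact hfS.1 s t _
  · intro j hj t
    simp only [hj, dif_pos]
    exact hfS.2 t _
  · intro j hj R η hη
    have h1 := Metric.tendstoUniformlyOn_iff.1 (hlim (Set.Icc (-R) R) isCompact_Icc) η hη
    filter_upwards [h1] with i hi t ht
    have h2 := hi t (abs_le.1 ht)
    have h3 := (dist_le_pi_dist (f t) (fun j : Fin N => F (φ i) j t) ⟨j, hj⟩).trans_lt h2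
    rw [dist_comm, Real.dist_eq] at h3
    simpa only [hj, dif_pos] using h3

/-- Uniformly bounded solution chains, defined up to times `b i` that eventually exhaust `D`,
subconverge on `D` to a chain solving the limit equation. -/
theorem chain_compact {g p B : ℝ} {k : ℕ} (hk : 0 < k) (hg : 0 < g) (hp : 2 < p) (hB0 : 0 ≤ B)
    {Z : ℕ → ℕ → ℝ → ℝ} {b δ : ℕ → ℝ} {κ : ℕ → ℝ → ℝ} {D : Set ℝ}
    (hch : ∀ i, DChain (2 * k) (Gam g k) (Eps k) Set.univ (Z i))
    (hB : ∀ i, ∀ j ≤ 2 * k, ∀ t ≤ b i, |Z i j t| ≤ B)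
    (hD : ∀ R : ℝ, ∀ᶠ i in atTop, ∀ t ∈ D, |t| ≤ R → t ≤ b i)
    (hδ : Tendsto δ atTop (𝓝 0)) (hκ : ∀ i, ∀ t ≤ b i, |κ i t| ≤ δ i)
    (heq : ∀ i, ∀ t ≤ b i, Z i (2 * k) t = Fnl p (Z i 0 t) + κ i t * Z i 0 t) :
    ∃ φ : ℕ → ℕ, StrictMono φ ∧ ∃ z : ℕ → ℝ → ℝ, ∃ L : ℝ, 0 ≤ L ∧
      (∀ j ≤ 2 * k, ∀ R : ℝ, ∀ η > 0, ∀ᶠ i in atTop, ∀ t ∈ D, |t| ≤ R →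
        |Z (φ i) j t - z j t| < η) ∧
      DChain (2 * k) (Gam g k) (Eps k) (interior D) z ∧ (∀ j ≤ 2 * k, Continuous (z j)) ∧
      (∀ j ≤ 2 * k, ∀ t ∈ D, |z j t| ≤ B) ∧ (∀ t, z (2 * k) t = Fnl p (z 0 t)) ∧
      (∀ s t, |z 0 s - z 0 t| ≤ L * |s - t|) := by
  set Γ : ℝ := g + 4 * k with hΓ
  have hGam : ∀ j, |Gam g k j| ≤ Γ := by
    intro j
    unfold Gam
    split_ifs with h
    · have : (j : ℝ) ≤ k := by exact_mod_cast h.le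
      rw [abs_of_nonneg (by positivity)]; linarith
    · have : ((2 * k - 1 - j : ℕ) : ℝ) ≤ 2 * k := by exact_mod_cast (by omega)
      rw [abs_of_nonneg (by positivity)]; linarith
  have hΓ0 : 0 ≤ Γ := (abs_nonneg _).trans (hGam 0)
  have hder : ∀ i, ∀ j < 2 * k, ∀ t ≤ b i,
      |Eps k j * (Z i (j + 1) t - Gam g k j * Z i j t)| ≤ B + Γ * B := by
    intro i j hj t ht
    have h1 : |Eps k j| = 1 := by rcases Eps_cases k j with h | h <;> simp [h]
    rw [abs_mul, h1, one_mul]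
    refine (abs_sub _ _).trans ?_
    rw [abs_mul]
    exact add_le_add (hB i _ (by omega) t ht)
      (mul_le_mul (hGam j) (hB i j hj.le t ht) (abs_nonneg _) hΓ0)
  obtain ⟨φ, hφ, f, hfL, hfB, hfc⟩ := arzela_line (N := 2 * k)
    (F := fun i j t => Z i j (min t (b i))) (L := B + Γ * B) (B := B) (by positivity)
    (by
      intro i j hj s t
      have h1 := (convex_Iic (b i)).norm_image_sub_le_of_norm_hasDerivWithin_le
        (f := Z i j) (C := B + Γ * B)
        (fun x _ => (hch i j hj x trivial).hasDerivWithinAt) (fun x hx => hder i j hj x hx)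
        (x := min t (b i)) (y := min s (b i)) (Set.mem_Iic.2 (min_le_right _ _))
        (Set.mem_Iic.2 (min_le_right _ _))
      refine h1.trans (mul_le_mul_of_nonneg_left ?_ (by positivity))
      rw [Real.norm_eq_abs]
      exact abs_inf_sub_inf_le_abs s t (b i))
    (fun i j hj t => hB i j hj.le _ (min_le_right _ _))
  have hk2 : 0 < 2 * k := by omega
  set z : ℕ → ℝ → ℝ := fun j => if j < 2 * k then f j else fun t => Fnl p (f 0 t) with hz
  have hzj : ∀ j < 2 * k, z j = f j := fun j hj => by simp [hz, hj]
  have hzk : z (2 * k) = fun t => Fnl p (f 0 t) := by simp [hz]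
  have hfcont : ∀ j < 2 * k, Continuous (f j) := fun j hj =>
    (LipschitzWith.of_dist_le_mul (K := ⟨B + Γ * B, by positivity⟩) fun s t => by
      rw [Real.dist_eq, Real.dist_eq]; exact hfL j hj s t).continuous
  have hconv0 : ∀ j < 2 * k, ∀ R : ℝ, ∀ η > 0, ∀ᶠ i in atTop, ∀ t ∈ D, |t| ≤ R →
      |Z (φ i) j t - f j t| < η := by
    intro j hj R η hη
    filter_upwards [hfc j hj R η hη, hφ.tendsto_atTop.eventually (hD R)] with i h1 h2 t ht htR
    have := h1 t htR
    rwa [min_eq_left (h2 t ht htR)] at this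
  have hconv : ∀ j ≤ 2 * k, ∀ R : ℝ, ∀ η > 0, ∀ᶠ i in atTop, ∀ t ∈ D, |t| ≤ R →
      |Z (φ i) j t - z j t| < η := by
    intro j hj R η hη
    rcases hj.lt_or_eq with hj | rfl
    · rw [hzj j hj]; exact hconv0 j hj R η hη
    · rw [hzk]
      set A : ℝ := (p - 1) * (B + B) ^ (p - 2) with hA
      have hA0 : 0 ≤ A := mul_nonneg (by linarith) (rpow_nonneg (by linarith) _)
      have hδ' : ∀ᶠ i in atTop, |δ (φ i)| < η / 2 / (B + 1) := by
        have := (hδ.comp hφ.tendsto_atTop).abs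
        rw [abs_zero] at this
        exact this.eventually (gt_mem_nhds (by positivity))
      filter_upwards [hconv0 0 hk2 R (η / 2 / (A + 1)) (by positivity),
        hφ.tendsto_atTop.eventually (hD R), hδ'] with i h1 h2 h3 t ht htR
      have htb := h2 t ht htR
      have h1 := h1 t ht htR
      have e1 := abs_Fnl_sub_le hp (Z (φ i) 0 t) (f 0 t)
      have e2 := hB (φ i) 0 (by omega) t htb
      have e3 : (p - 1) * (|Z (φ i) 0 t| + |f 0 t|) ^ (p - 2) ≤ A :=
        mul_le_mul_of_nonneg_left (rpow_le_rpow (by positivity)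
          (add_le_add e2 (hfB 0 hk2 t)) (by linarith)) (by linarith)
      have e4 : |Fnl p (Z (φ i) 0 t) - Fnl p (f 0 t)| ≤ η / 2 := by
        refine e1.trans ((mul_le_mul e3 h1.le (abs_nonneg _) hA0).trans ?_)
        rw [mul_div_assoc', div_le_iff₀ (by linarith)]
        nlinarith
      have e5 : |κ (φ i) t * Z (φ i) 0 t| < η / 2 := by
        rw [abs_mul]
        have e6 : |κ (φ i) t| ≤ |δ (φ i)| := (hκ _ t htb).trans (le_abs_self _)
        calc _ ≤ |δ (φ i)| * (B + 1) :=
              mul_le_mul e6 (by linarith) (abs_nonneg _) (abs_nonneg _)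
          _ < η / 2 / (B + 1) * (B + 1) := by gcongr
          _ = η / 2 := by field_simp
      rw [heq _ t htb, add_sub_right_comm]
      exact (abs_add_le _ _).trans_lt (by linarith)
  have hptw : ∀ j ≤ 2 * k, ∀ t ∈ D, Tendsto (fun i => Z (φ i) j t) atTop (𝓝 (z j t)) := by
    intro j hj t ht
    refine Metric.tendsto_atTop'.2 fun η hη => ?_
    obtain ⟨n, hn⟩ := eventually_atTop.1 (hconv j hj |t| η hη)
    exact ⟨n, fun i hi => by rw [Real.dist_eq]; exact hn i hi.le t ht le_rfl⟩
  refine ⟨φ, hφ, z, B + Γ * B, by positivity, hconv, ?_, ?_, ?_, ?_, ?_⟩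
  · intro j hj t ht
    obtain ⟨r, hr, hball⟩ := Metric.isOpen_iff.1 isOpen_interior t ht
    have hsub : ∀ x ∈ Metric.ball t r, x ∈ D := fun x hx => interior_subset (hball hx)
    refine hasDerivAt_of_tendstoUniformlyOn (l := atTop) (s := Metric.ball t r) Metric.isOpen_ball
      (f := fun i => Z (φ i) j)
      (f' := fun i x => Eps k j * (Z (φ i) (j + 1) x - Gam g k j * Z (φ i) j x))
      (g' := fun x => Eps k j * (z (j + 1) x - Gam g k j * z j x)) ?_ ?_ ?_ (mem_ball_self hr)
    · refine Metric.tendstoUniformlyOn_iff.2 fun η hη => ?_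
      filter_upwards [hconv (j + 1) (by omega) (|t| + r) (η / 2) (by positivity),
        hconv j hj.le (|t| + r) (η / 2 / (Γ + 1)) (by positivity)] with i h1 h2 x hx
      have hxR : |x| ≤ |t| + r := by
        have := Metric.mem_ball.1 hx
        rw [Real.dist_eq] at this
        have e := abs_add_le t (x - t)
        rw [add_sub_cancel] at e
        linarith
      have h1 := h1 x (hsub x hx) hxR
      have h2 := h2 x (hsub x hx) hxR
      have hε : |Eps k j| = 1 := by rcases Eps_cases k j with h | h <;> simp [h]
      rw [dist_comm, Real.dist_eq, ← mul_sub, abs_mul, hε, one_mul,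
        show Z (φ i) (j + 1) x - Gam g k j * Z (φ i) j x - (z (j + 1) x - Gam g k j * z j x)
          = (Z (φ i) (j + 1) x - z (j + 1) x) - Gam g k j * (Z (φ i) j x - z j x) by ring]
      refine (abs_sub _ _).trans_lt ?_
      have h3 : |Gam g k j * (Z (φ i) j x - z j x)| ≤ η / 2 := by
        rw [abs_mul]
        refine (mul_le_mul (hGam j) h2.le (abs_nonneg _) hΓ0).trans ?_
        rw [mul_div_assoc', div_le_iff₀ (by linarith)]
        nlinarith
      linarith
    · exact Eventually.of_forall fun i x _ => hch (φ i) j hj x trivial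
    · exact fun x hx => hptw j hj.le x (hsub x hx)
  · intro j hj
    rcases hj.lt_or_eq with hj | rfl
    · rw [hzj j hj]; exact hfcont j hj
    · rw [hzk]; exact (continuous_Fnl hp).comp (hfcont 0 hk2)
  · intro j hj t ht
    refine le_of_tendsto (hptw j hj t ht).abs ?_
    filter_upwards [hφ.tendsto_atTop.eventually (hD |t|)] with i hi
    exact hB _ j hj t (hi t ht le_rfl)
  · intro t
    rw [hzk, hzj 0 hk2]
  · rw [hzj 0 hk2]; exact hfL 0 hk2

/-! ### The bubble in Emden-Fowler coordinates -/

/-- The profile `e^t / (1 + a e^{2t})`; its powers are the transforms of the bubbles. -/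
def sbub (a t : ℝ) : ℝ := rexp t / (1 + a * rexp (2 * t))

/-- The logarithmic derivative of `sbub`. -/
def thbub (a t : ℝ) : ℝ := (1 - a * rexp (2 * t)) / (1 + a * rexp (2 * t))

section
variable {a : ℝ}

theorem sbub_pos (ha : 0 < a) (t : ℝ) : 0 < sbub a t := by unfold sbub; positivity

theorem thbub_sq (ha : 0 < a) (t : ℝ) : 1 - thbub a t ^ 2 = 4 * a * sbub a t ^ 2 := by
  have : 1 + a * rexp (2 * t) ≠ 0 := by positivity
  have h2 : rexp t ^ 2 = rexp (2 * t) := by rw [← exp_nat_mul]; norm_num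
  rw [thbub, sbub, div_pow, div_pow, h2]
  field_simp
  ring

theorem abs_thbub_le (ha : 0 < a) (t : ℝ) : |thbub a t| ≤ 1 := by
  have := thbub_sq ha t
  have h : 0 ≤ 4 * a * sbub a t ^ 2 := by positivity
  rw [← sq_le_one_iff_abs_le_one]; linarith

theorem hasDerivAt_sbub (ha : 0 < a) (t : ℝ) : HasDerivAt (sbub a) (sbub a t * thbub a t) t := by
  have h0 : 1 + a * rexp (2 * t) ≠ 0 := by positivity
  have h1 : HasDerivAt (fun t => 1 + a * rexp (2 * t)) (a * (rexp (2 * t) * (2 * 1))) t :=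
    (((hasDerivAt_id t).const_mul 2).exp.const_mul a).const_add 1
  refine ((Real.hasDerivAt_exp t).div h1 h0).congr_deriv ?_
  rw [sbub, thbub]
  field_simp
  ring

theorem hasDerivAt_thbub (ha : 0 < a) (t : ℝ) :
    HasDerivAt (thbub a) (-(4 * a * sbub a t ^ 2)) t := by
  have h0 : 1 + a * rexp (2 * t) ≠ 0 := by positivity
  have h2 : rexp t ^ 2 = rexp (2 * t) := by rw [← exp_nat_mul]; norm_num
  have h1 : HasDerivAt (fun t => a * rexp (2 * t)) (a * (rexp (2 * t) * (2 * 1))) t :=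
    ((hasDerivAt_id t).const_mul 2).exp.const_mul a
  refine ((h1.const_sub 1).div (h1.const_add 1) h0).congr_deriv ?_
  rw [sbub, div_pow, h2]
  field_simp
  ring

theorem hasDerivAt_sbub_rpow (ha : 0 < a) (γ t : ℝ) :
    HasDerivAt (fun t => sbub a t ^ γ) (γ * (sbub a t ^ γ * thbub a t)) t := by
  have hs := sbub_pos ha t
  refine ((hasDerivAt_sbub ha t).rpow_const (p := γ) (Or.inl hs.ne')).congr_deriv ?_
  rw [rpow_sub_one hs.ne']
  field_simp

theorem contDiff_sbub_rpow (ha : 0 < a) (γ : ℝ) {m : WithTop ℕ∞} :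
    ContDiff ℝ m (fun t => sbub a t ^ γ) := by
  refine ContDiff.rpow_const_of_ne ?_ fun t => (sbub_pos ha t).ne'
  refine Real.contDiff_exp.div (contDiff_const.add (contDiff_const.mul
    (Real.contDiff_exp.comp (contDiff_const.mul contDiff_id)))) fun t => ?_
  positivity

theorem iteratedDeriv_sbub (ha : 0 < a) (γ : ℝ) (i : ℕ) : ∃ P : Polynomial ℝ,
    iteratedDeriv i (fun t => sbub a t ^ γ) = fun t => sbub a t ^ γ * P.eval (thbub a t) := by
  induction i with
  | zero => exact ⟨1, by simp⟩
  | succ i ih =>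
    obtain ⟨P, hP⟩ := ih
    refine ⟨Polynomial.C γ * Polynomial.X * P
      - (1 - Polynomial.X ^ 2) * Polynomial.derivative P, ?_⟩
    rw [iteratedDeriv_succ, hP]
    funext t
    have h1 := (P.hasDerivAt (thbub a t)).comp t (hasDerivAt_thbub ha t)
    refine ((hasDerivAt_sbub_rpow ha γ t).mul h1).deriv.trans ?_
    simp only [Polynomial.eval_sub, Polynomial.eval_mul, Polynomial.eval_C, Polynomial.eval_X,
      Polynomial.eval_one, Polynomial.eval_pow, Function.comp]
    rw [thbub_sq ha]
    ring

theorem tendsto_sbub_bot (ha : 0 < a) : Tendsto (sbub a) atBot (𝓝 0) := by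
  refine squeeze_zero (fun t => (sbub_pos ha t).le) (fun t => ?_) Real.tendsto_exp_atBot
  exact div_le_self (exp_pos t).le (by have := exp_pos (2 * t); nlinarith)

theorem tendsto_sbub_top (ha : 0 < a) : Tendsto (sbub a) atTop (𝓝 0) := by
  have h1 : Tendsto (fun t => a⁻¹ * rexp (-t)) atTop (𝓝 0) := by
    simpa using (Real.tendsto_exp_neg_atTop_nhds_zero).const_mul a⁻¹
  refine squeeze_zero (fun t => (sbub_pos ha t).le) (fun t => ?_) h1
  rw [sbub, div_le_iff₀ (by positivity), exp_neg, two_mul, exp_add]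
  have := exp_pos t
  field_simp
  nlinarith

theorem sbub_le (ha : 0 < a) : ∃ K, 0 ≤ K ∧ ∀ t, sbub a t ≤ K := by
  refine ⟨1 + a⁻¹, by positivity, fun t => ?_⟩
  have h1 : 0 < rexp t := exp_pos t
  rw [sbub, div_le_iff₀ (by positivity), two_mul, exp_add]
  have e : (1 + a⁻¹) * (1 + a * (rexp t * rexp t))
      = 1 + a⁻¹ + a * (rexp t * rexp t) + rexp t * rexp t := by field_simp; ring
  rw [e]
  have : 0 < a⁻¹ := by positivity
  nlinarith [mul_pos ha (mul_pos h1 h1), sq_nonneg (rexp t - 1)]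

/-- `(γ² - D²) s^γ = 4a γ (γ+1) s^{γ+2}` for the profile `s`, iterated over `γ = g, g+2, …`. -/
theorem opT_sbub (ha : 0 < a) (g : ℝ) (k : ℕ) : ∀ j ≤ k, ∀ t,
    opT (2 * k) (∏ i ∈ Finset.range j, (Polynomial.C ((g + 2 * (i : ℝ)) ^ 2) - Polynomial.X ^ 2))
      (fun t => sbub a t ^ g) t
      = (∏ i ∈ Finset.range j, (4 * a * ((g + 2 * i) * (g + 2 * i + 1)))) *
        sbub a t ^ (g + 2 * j) := by
  intro j
  induction j with
  | zero => intro _ t; simp [opT_one]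
  | succ j ih =>
    intro hj t
    have ih := funext (ih (by omega))
    set q : Polynomial ℝ :=
      ∏ i ∈ Finset.range j, (Polynomial.C ((g + 2 * (i : ℝ)) ^ 2) - Polynomial.X ^ 2) with hq
    set A : ℝ := ∏ i ∈ Finset.range j, (4 * a * ((g + 2 * (i : ℝ)) * (g + 2 * i + 1))) with hA
    have hdeg : q.natDegree ≤ 2 * j := by
      refine (Polynomial.natDegree_prod_le _ _).trans ?_
      refine (Finset.sum_le_card_nsmul _ _ 2 fun i _ => ?_).trans (by simp [mul_comm])
      refine (Polynomial.natDegree_sub_le _ _).trans ?_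
      rw [Polynomial.natDegree_C, Polynomial.natDegree_X_pow]
      simp
    have hc : ContDiff ℝ ((2 * k : ℕ) : WithTop ℕ∞) (fun t => sbub a t ^ g) :=
      contDiff_sbub_rpow ha g
    have d1 := fun t => hasDerivAt_opT hc (q := q) (by omega) t
    have d2 := fun t => hasDerivAt_opT hc (q := Polynomial.X * q) (by
      refine Polynomial.natDegree_mul_le.trans_lt ?_
      rw [Polynomial.natDegree_X]; omega) t
    set γ : ℝ := g + 2 * j with hγ
    rw [ih] at d1
    have e1 : opT (2 * k) (Polynomial.X * q) (fun t => sbub a t ^ g)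
        = fun t => A * (γ * (sbub a t ^ γ * thbub a t)) := by
      funext t
      exact (d1 t).unique ((hasDerivAt_sbub_rpow ha γ t).const_mul A)
    rw [e1] at d2
    have e2 := (d2 t).unique ((((hasDerivAt_sbub_rpow ha γ t).mul
      (hasDerivAt_thbub ha t)).const_mul γ).const_mul A)
    rw [Finset.prod_range_succ, Finset.prod_range_succ, ← hq, ← hA,
      show q * (Polynomial.C ((g + 2 * (j : ℝ)) ^ 2) - Polynomial.X ^ 2)
        = Polynomial.C (γ ^ 2) * q + Polynomial.C (-1) * (Polynomial.X * (Polynomial.X * q)) by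
        rw [map_neg, map_one]; ring, opT_lin, e2, ih, Nat.cast_succ,
      show g + 2 * ((j : ℝ) + 1) = γ + 2 by rw [hγ]; ring, ← hγ]
    have hr : sbub a t ^ (γ + 2) = sbub a t ^ γ * sbub a t ^ 2 := by
      rw [rpow_add (sbub_pos ha t), rpow_two]
    simp only [hr]
    have h3 : thbub a t * thbub a t = 1 - 4 * a * sbub a t ^ 2 := by
      rw [← thbub_sq ha]; ring
    linear_combination (-A * γ ^ 2 * sbub a t ^ γ) * h3

end

theorem ank_pos {n k : ℕ} (hn : 2 * k < n) : 0 < ank n k := by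
  have hn' : (2 : ℝ) * k < n := by exact_mod_cast hn
  refine rpow_pos_of_pos (Finset.prod_pos fun j _ => ?_) _
  have : (0 : ℝ) ≤ j := Nat.cast_nonneg j
  linarith

/-- The normalisation of `ank` makes the coefficient of the bubble equation equal to one. -/
theorem ank_normal {n k : ℕ} (hk : 0 < k) (hn : 2 * k < n) :
    ∏ i ∈ Finset.range k, (4 * ank n k * ((((n : ℝ) - 2 * k) / 2 + 2 * i)
      * (((n : ℝ) - 2 * k) / 2 + 2 * i + 1))) = 1 := by
  have hn' : (2 : ℝ) * k < n := by exact_mod_cast hn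
  have hk' : (k : ℝ) ≠ 0 := by exact_mod_cast hk.ne'
  have h1 : ∀ m : ℕ, ∏ j ∈ Finset.range (2 * m), ((n : ℝ) + 2 * ((j : ℝ) - (k : ℝ)))
      = ∏ i ∈ Finset.range m, (4 * ((((n : ℝ) - 2 * k) / 2 + 2 * i)
      * (((n : ℝ) - 2 * k) / 2 + 2 * i + 1))) := by
    intro m
    induction m with
    | zero => simp
    | succ m ih =>
      rw [show 2 * (m + 1) = 2 * m + 1 + 1 by ring, Finset.prod_range_succ, Finset.prod_range_succ,
        ih, Finset.prod_range_succ, mul_assoc]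
      congr 1
      push_cast
      ring
  have hP : 0 < ∏ j ∈ Finset.range (2 * k), ((n : ℝ) + 2 * ((j : ℝ) - (k : ℝ))) := by
    refine Finset.prod_pos fun j _ => ?_
    have : (0 : ℝ) ≤ j := Nat.cast_nonneg j
    linarith
  have h2 : ank n k ^ k * ∏ j ∈ Finset.range (2 * k), ((n : ℝ) + 2 * ((j : ℝ) - (k : ℝ))) = 1 := by
    rw [ank, ← rpow_natCast, ← rpow_mul hP.le, div_mul_cancel₀ _ hk', rpow_neg_one,
      inv_mul_cancel₀ hP.ne']
  rw [h1] at h2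
  rw [Finset.prod_congr rfl (fun (i : ℕ) _ => show 4 * ank n k * ((((n : ℝ) - 2 * k) / 2 + 2 * i)
      * (((n : ℝ) - 2 * k) / 2 + 2 * i + 1)) = ank n k * (4 * ((((n : ℝ) - 2 * k) / 2 + 2 * i)
      * (((n : ℝ) - 2 * k) / 2 + 2 * i + 1))) by ring), Finset.prod_mul_distrib,
    Finset.prod_const, Finset.card_range]
  exact h2

theorem emd_Ubub {n k : ℕ} (hn : 2 * k < n) {e : EuclideanSpace ℝ (Fin n)} (he : ‖e‖ = 1) (t : ℝ) :
    emd (((n : ℝ) - 2 * k) / 2) (Ubub n k) e t = sbub (ank n k) t ^ (((n : ℝ) - 2 * k) / 2) := by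
  have ha := ank_pos hn
  rw [emd, Ubub, norm_smul, he, mul_one, Real.norm_of_nonneg (exp_pos t).le, sbub, mul_comm _ t,
    Real.exp_mul, ← mul_rpow (exp_pos t).le (by positivity), ← exp_nat_mul]
  congr 1
  push_cast
  field_simp

theorem bubble_limSol {n k : ℕ} (hk : 0 < k) (hn : 2 * k < n) :
    ∃ b : ℕ → ℝ → ℝ, (b 0 = fun t => sbub (ank n k) t ^ (((n : ℝ) - 2 * k) / 2)) ∧
      LimSol (((n : ℝ) - 2 * k) / 2) (twoStar n k) k Set.univ b ∧
      Tendsto (fun t => rexp (-(((n : ℝ) - 2 * k) / 2) * t) * b 0 t) atBot (𝓝 1) := by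
  obtain ⟨hg, hp, hgp, -⟩ := emden_exponents hk hn
  have hnorm := ank_normal hk hn
  have ha := ank_pos hn
  set g := ((n : ℝ) - 2 * k) / 2 with hgdef
  set p := twoStar n k
  set a := ank n k
  set f : ℝ → ℝ := fun t => sbub a t ^ g with hf
  have hc : ContDiff ℝ ((2 * k : ℕ) : WithTop ℕ∞) f := contDiff_sbub_rpow ha g
  have hz0 : opT (2 * k) (linProd (Gam g k) (Eps k) 0) f = f := by
    rw [linProd, Finset.prod_range_zero, opT_one]
  have hlim : ∀ {l : Filter ℝ}, Tendsto (sbub a) l (𝓝 0) → Tendsto f l (𝓝 0) := by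
    intro l h
    have := h.rpow_const (p := g) (Or.inr hg.le)
    rwa [zero_rpow hg.ne'] at this
  refine ⟨fun j => opT (2 * k) (linProd (Gam g k) (Eps k) j) f, hz0, ⟨?_, ?_, ?_, ?_, ?_, ?_⟩, ?_⟩
  · rw [interior_univ]
    exact opT_chain (fun j => (Eps_cases k j).symm) hc
  · exact fun j _ => (contDiff_opT_continuous hc).continuousOn
  · have h1 : ∀ i, ∃ K, 0 ≤ K ∧ ∀ t, |iteratedDeriv i f t| ≤ K := by
      intro i
      obtain ⟨P, hP⟩ := iteratedDeriv_sbub ha g i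
      obtain ⟨K, hK0, hK⟩ := sbub_le ha
      obtain ⟨K', hK'⟩ := (isCompact_Icc (a := (-1 : ℝ)) (b := 1)).exists_bound_of_continuousOn
        (f := fun x => P.eval x) P.continuous.continuousOn
      have hK'0 : 0 ≤ K' := (norm_nonneg _).trans (hK' 0 (by simp))
      refine ⟨K ^ g * K', by positivity, fun t => ?_⟩
      rw [hf, hP, abs_mul, abs_of_pos (rpow_pos_of_pos (sbub_pos ha t) g)]
      exact mul_le_mul (rpow_le_rpow (sbub_pos ha t).le (hK t) hg.le)
        (hK' _ (abs_le.1 (abs_thbub_le ha t))) (abs_nonneg _) (by positivity)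
    choose K hK0 hK using h1
    refine ⟨∑ j ∈ Finset.range (2 * k + 1), ∑ i ∈ Finset.range (2 * k + 1),
      |(linProd (Gam g k) (Eps k) j).coeff i| * K i, fun j hj t _ => ?_⟩
    have h2 : |opT (2 * k) (linProd (Gam g k) (Eps k) j) f t|
        ≤ ∑ i ∈ Finset.range (2 * k + 1), |(linProd (Gam g k) (Eps k) j).coeff i| * K i := by
      rw [opT]
      refine (Finset.abs_sum_le_sum_abs _ _).trans (Finset.sum_le_sum fun i _ => ?_)
      rw [abs_mul]
      exact mul_le_mul_of_nonneg_left (hK i t) (abs_nonneg _)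
    refine h2.trans ?_
    exact Finset.single_le_sum (f := fun j => ∑ i ∈ Finset.range (2 * k + 1),
      |(linProd (Gam g k) (Eps k) j).coeff i| * K i)
      (fun j _ => Finset.sum_nonneg fun i _ => mul_nonneg (abs_nonneg _) (hK0 i))
      (Finset.mem_range.2 (by omega))
  · intro t _
    have hpoly : linProd (Gam g k) (Eps k) (2 * k)
        = ∏ i ∈ Finset.range k, (Polynomial.C ((g + 2 * (i : ℝ)) ^ 2) - Polynomial.X ^ 2) := by
      rw [linProd, two_mul, Finset.prod_range_add, ← Finset.prod_range_reflect (n := k)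
        (f := fun x => Polynomial.C (Gam g k (k + x)) + Polynomial.C (Eps k (k + x)) * Polynomial.X),
        ← Finset.prod_mul_distrib]
      refine Finset.prod_congr rfl fun i hi => ?_
      have hi := Finset.mem_range.1 hi
      have h3 : 2 * k - 1 - (k + (k - 1 - i)) = i := by omega
      simp [Gam, Eps, h3, hi]
      ring
    simp only [hz0]
    rw [hpoly, opT_sbub ha g k k le_rfl t, hnorm, one_mul, hf, Fnl,
      abs_of_pos (rpow_pos_of_pos (sbub_pos ha t) g), ← rpow_mul (sbub_pos ha t).le, hgp,
      ← rpow_add (sbub_pos ha t), add_comm]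
  · simp only [hz0]; exact hlim (tendsto_sbub_bot ha)
  · simp only [hz0]; exact Or.inr (hlim (tendsto_sbub_top ha))
  · simp only [hz0]
    have h1 : ∀ t, rexp (-g * t) * f t = (1 + a * rexp (2 * t))⁻¹ ^ g := by
      intro t
      rw [hf, show -g * t = (-t) * g by ring, Real.exp_mul]
      simp only
      rw [← mul_rpow (exp_pos _).le (sbub_pos ha t).le, sbub, exp_neg]
      congr 1
      have := exp_pos t
      field_simp
    simp only [h1]
    have h2 : Tendsto (fun t => rexp (2 * t)) atBot (𝓝 0) :=
      Real.tendsto_exp_atBot.comp (tendsto_id.const_mul_atBot two_pos)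
    have h3 := (((h2.const_mul a).const_add 1).inv₀ (by simp)).rpow_const (p := g) (Or.inr hg.le)
    simpa using h3

/-! ### Compactness for the transformed sequence -/

section
variable {g p C : ℝ} {k : ℕ}

theorem integral_le_of_unif {p : ℝ} (hp : 0 < p) {w : ℕ → ℝ → ℝ} {z : ℝ → ℝ} {a b B C : ℝ}
    (hab : a ≤ b) (hw : ∀ i, Continuous (w i))
    (hB : ∀ᶠ i in atTop, ∀ t ∈ Set.Icc a b, |w i t| ≤ B)
    (hlim : ∀ η > 0, ∀ᶠ i in atTop, ∀ t ∈ Set.Icc a b, |w i t - z t| < η)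
    (hC : ∀ᶠ i in atTop, ∫ t in a..b, |w i t| ^ p ≤ C) : ∫ t in a..b, |z t| ^ p ≤ C := by
  have h : Tendsto (fun i => ∫ t in a..b, |w i t| ^ p) atTop (𝓝 (∫ t in a..b, |z t| ^ p)) := by
    refine intervalIntegral.tendsto_integral_filter_of_dominated_convergence (fun _ => B ^ p) ?_ ?_
      intervalIntegrable_const ?_
    · exact Eventually.of_forall fun i =>
        ((hw i).abs.rpow_const fun _ => Or.inr hp.le).aestronglyMeasurable
    · filter_upwards [hB] with i hi
      refine Eventually.of_forall fun t ht => ?_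
      rw [Set.uIoc_of_le hab] at ht
      rw [Real.norm_of_nonneg (by positivity)]
      exact rpow_le_rpow (abs_nonneg _) (hi t ⟨ht.1.le, ht.2⟩) hp.le
    · refine Eventually.of_forall fun t ht => ?_
      rw [Set.uIoc_of_le hab] at ht
      have h1 : Tendsto (fun i => w i t) atTop (𝓝 (z t)) := by
        rw [Metric.tendsto_nhds]
        intro η hη
        filter_upwards [hlim η hη] with i hi using hi t ⟨ht.1.le, ht.2⟩
      exact h1.abs.rpow_const (Or.inr hp.le)
  exact le_of_tendsto h hC

theorem integral_sub_le {p : ℝ} (hp : 0 < p) {w : ℝ → ℝ} (hw : Continuous w) {C s t : ℝ}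
    (hst : s ≤ t) (ht : t ≤ 0) (hC : ∀ a ≤ 0, ∫ r in a..0, |w r| ^ p ≤ C) :
    ∫ r in s..t, |w r| ^ p ≤ C := by
  have hc : Continuous fun r => |w r| ^ p := hw.abs.rpow_const fun _ => Or.inr hp.le
  have h1 := intervalIntegral.integral_add_adjacent_intervals (hc.intervalIntegrable s t)
    (hc.intervalIntegrable t 0) (μ := volume)
  have h2 : 0 ≤ ∫ r in t..0, |w r| ^ p :=
    intervalIntegral.integral_nonneg ht fun r _ => by positivity
  have h3 := hC s (hst.trans ht)
  linarith

/-- The a priori bound of `unif_bound`, extended to the closed half-line and to the last entry of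
the chain. -/
theorem seq_bound (hk : 0 < k) (hg : 0 < g) (hp : 2 < p) (hC : 0 ≤ C) {Z : ℕ → ℕ → ℝ → ℝ}
    {κ : ℕ → ℝ → ℝ} (hch : ∀ i, DChain (2 * k) (Gam g k) (Eps k) Set.univ (Z i))
    (hcont : ∀ i j, Continuous (Z i j)) (h0 : ∀ i, ∀ j < k, Z i j 0 = 0)
    (hbot : ∀ i j, Tendsto (Z i j) atBot (𝓝 0)) (hκ : ∀ i, ∀ t ≤ 0, |κ i t| ≤ 1)
    (heq : ∀ i, ∀ t ≤ 0, Z i (2 * k) t = Fnl p (Z i 0 t) + κ i t * Z i 0 t)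
    (hitg : ∀ i, ∀ a ≤ 0, ∫ s in a..0, |Z i 0 s| ^ p ≤ C) :
    ∃ B, 0 ≤ B ∧ ∀ i, ∀ j ≤ 2 * k, ∀ t ≤ 0, |Z i j t| ≤ B := by
  obtain ⟨B, hB0, hB⟩ := unif_bound hk hg hp hC
  have hpow : ∀ x q : ℝ, 0 ≤ x → 0 ≤ q → q ≤ p → x ^ q ≤ 1 + x ^ p := by
    intro x q hx hq hqp
    have h0 : 0 ≤ x ^ p := by positivity
    rcases le_total x 1 with h | h
    · have := rpow_le_one hx h hq
      linarith
    · have := rpow_le_rpow_of_exponent_le h hqp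
      linarith
  have h2k : ∀ i, ∀ t ≤ 0, |Z i (2 * k) t| ≤ |Z i 0 t| ^ (p - 1) + |Z i 0 t| := by
    intro i t ht
    rw [heq i t ht]
    refine (abs_add_le _ _).trans ?_
    rw [abs_Fnl hp, abs_mul]
    have := mul_le_mul_of_nonneg_right (hκ i t ht) (abs_nonneg (Z i 0 t))
    linarith
  have h1 : ∀ i, ∀ j < 2 * k, ∀ t < 0, |Z i j t| ≤ B := by
    intro i
    refine hB (Z i) ((hch i).mono (Set.subset_univ _)) (fun j _ => (hcont i j).continuousOn) (h0 i)
      (fun j _ => ⟨1, ?_⟩) (fun t ht => ?_) (hitg i)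
    · have := (hbot i j).abs.eventually (Iio_mem_nhds (by simp : |(0 : ℝ)| < 1))
      filter_upwards [this] with t ht using ht.le
    · have e1 := h2k i t ht.le
      have e2 := hpow |Z i 0 t| (p - 1) (abs_nonneg _) (by linarith) (by linarith)
      have e3 := hpow |Z i 0 t| 1 (abs_nonneg _) (by linarith) (by linarith)
      rw [rpow_one] at e3
      linarith
  have h2 : ∀ i, ∀ j < 2 * k, ∀ t ≤ 0, |Z i j t| ≤ B := by
    intro i j hj t ht
    have hcl : IsClosed {t | |Z i j t| ≤ B} := isClosed_le (hcont i j).abs continuous_const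
    have hsub : closure (Set.Iio (0 : ℝ)) ⊆ {t | |Z i j t| ≤ B} :=
      hcl.closure_subset_iff.2 fun t ht => h1 i j hj t ht
    rw [closure_Iio] at hsub
    exact hsub ht
  refine ⟨B + B ^ (p - 1), by positivity, fun i j hj t ht => ?_⟩
  have hBp : 0 ≤ B ^ (p - 1) := by positivity
  rcases hj.lt_or_eq with hj | rfl
  · linarith [h2 i j hj t ht]
  · have e := h2 i 0 (by omega) t ht
    have e2 : |Z i 0 t| ^ (p - 1) ≤ B ^ (p - 1) :=
      rpow_le_rpow (abs_nonneg _) e (by linarith)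
    linarith [h2k i t ht]

/-- A sequence of transformed solutions which stays away from zero at the points `T i` must
have `T i → -∞` along a subsequence, since the half-line admits no nontrivial solution; the
translates then converge to a nontrivial solution on the whole line. -/
theorem concentrate (hk : 0 < k) (hg : 0 < g) (hp : 2 < p) (hC : 0 ≤ C) {Z : ℕ → ℕ → ℝ → ℝ}
    {κ : ℕ → ℝ → ℝ} {δ T : ℕ → ℝ} {c : ℝ} (hc : 0 < c)
    (hch : ∀ i, DChain (2 * k) (Gam g k) (Eps k) Set.univ (Z i))
    (hcont : ∀ i j, Continuous (Z i j)) (h0 : ∀ i, ∀ j < k, Z i j 0 = 0)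
    (hbot : ∀ i j, Tendsto (Z i j) atBot (𝓝 0))
    (hδ : Tendsto δ atTop (𝓝 0)) (hδ1 : ∀ i, δ i ≤ 1) (hκ : ∀ i, ∀ t ≤ 0, |κ i t| ≤ δ i)
    (heq : ∀ i, ∀ t ≤ 0, Z i (2 * k) t = Fnl p (Z i 0 t) + κ i t * Z i 0 t)
    (hitg : ∀ i, ∀ a ≤ 0, ∫ s in a..0, |Z i 0 s| ^ p ≤ C)
    (hT : ∀ i, T i ≤ 0) (hTc : Tendsto (fun i => |Z i 0 (T i)|) atTop (𝓝 c)) :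
    ∃ φ : ℕ → ℕ, StrictMono φ ∧ Tendsto (fun i => T (φ i)) atTop atBot ∧
      ∃ z, LimSol g p k Set.univ z ∧ z 0 0 ≠ 0 ∧
        ∀ j ≤ 2 * k, ∀ R, ∀ η > 0, ∀ᶠ i in atTop, ∀ t, |t| ≤ R →
          |Z (φ i) j (t + T (φ i)) - z j t| < η := by
  have hp0 : 0 < p := by linarith
  obtain ⟨B, hB0, hB⟩ := seq_bound hk hg hp hC hch hcont h0 hbot
    (fun i t ht => (hκ i t ht).trans (hδ1 i)) heq hitg
  -- either `T i → -∞` along a subsequence, and the limit lives on the whole line, or `T i` stays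
  -- bounded, and the limit is a nonzero solution on `(-∞, 0]` with Dirichlet data
  by_cases hfr : ∀ R : ℕ, ∃ᶠ i in atTop, T i < -R
  · obtain ⟨φ₀, hφ₀, hφT⟩ := extraction_forall_of_frequently hfr
    have hTbot : Tendsto (fun i => T (φ₀ i)) atTop atBot :=
      tendsto_atBot_mono (fun i => (hφT i).le)
        (tendsto_neg_atTop_atBot.comp tendsto_natCast_atTop_atTop)
    obtain ⟨φ, hφ, z, L, hL, hconv, hzch, hzc, hzB, hzeq, hzL⟩ :=
      chain_compact hk hg hp hB0 (Z := fun i j t => Z (φ₀ i) j (t + T (φ₀ i)))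
        (b := fun i => -T (φ₀ i)) (δ := fun i => δ (φ₀ i))
        (κ := fun i t => κ (φ₀ i) (t + T (φ₀ i))) (D := Set.univ)
        (fun i => by simpa using (hch (φ₀ i)).shift (T (φ₀ i)))
        (fun i j hj t ht => hB _ j hj _ (by linarith))
        (fun R => by
          filter_upwards [hTbot.eventually (eventually_le_atBot (-R))] with i hi t _ ht
          have := (abs_le.1 ht).2
          linarith)
        (hδ.comp hφ₀.tendsto_atTop)
        (fun i t ht => hκ _ _ (by linarith)) (fun i t ht => heq _ _ (by linarith))
    have hTbot' : Tendsto (fun i => T (φ₀ (φ i))) atTop atBot := hTbot.comp hφ.tendsto_atTop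
    have hI : ∀ a b, a ≤ b → ∫ t in a..b, |z 0 t| ^ p ≤ C := by
      intro a b hab
      have hev := hTbot'.eventually (eventually_le_atBot (-b))
      refine integral_le_of_unif hp0 (w := fun i t => Z (φ₀ (φ i)) 0 (t + T (φ₀ (φ i)))) (B := B)
        hab (fun i => (hcont _ 0).comp (continuous_add_const _)) ?_ (fun η hη => ?_) ?_
      · filter_upwards [hev] with i hi t ht
        exact hB _ 0 (by omega) _ (by linarith [ht.2])
      · filter_upwards [hconv 0 (by omega) (|a| + |b|) η hη] with i hi t ht
        refine hi t (Set.mem_univ _) (abs_le.2 ⟨?_, ?_⟩)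
        · linarith [ht.1, neg_abs_le a, abs_nonneg b]
        · linarith [ht.2, le_abs_self b, abs_nonneg a]
      · filter_upwards [hev] with i hi
        rw [intervalIntegral.integral_comp_add_right (fun t => |Z (φ₀ (φ i)) 0 t| ^ p)]
        exact integral_sub_le hp0 (hcont _ 0) (by linarith) (by linarith) (hitg _)
    refine ⟨φ₀ ∘ φ, hφ₀.comp hφ, hTbot', z, ⟨hzch, fun j hj => (hzc j hj).continuousOn,
      ⟨B, hzB⟩, fun t _ => hzeq t, ?_, Or.inr ?_⟩, ?_, ?_⟩
    · exact tendsto_zero_of_integral_le_bot (T := 0) hp0 hL (fun s _ t _ => hzL s t)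
        (fun a ha => hI a 0 ha)
    · exact tendsto_zero_of_integral_le (T := 0) hp0 hL (fun s _ t _ => hzL s t)
        (fun b hb => hI 0 b hb)
    · intro hz
      have h1 := (hTc.comp (hφ₀.comp hφ).tendsto_atTop).eventually (lt_mem_nhds (half_lt_self hc))
      have h2 := hconv 0 (by omega) 0 (c / 2) (half_pos hc)
      obtain ⟨i, hi1, hi2⟩ := (h1.and h2).exists
      have := hi2 0 (Set.mem_univ _) (by simp)
      simp only [hz, sub_zero, zero_add] at this
      simp only [Function.comp] at hi1
      linarith
    · intro j hj R η hη
      filter_upwards [hconv j hj R η hη] with i hi t ht using hi t (Set.mem_univ _) ht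
  · exfalso
    push Not at hfr
    obtain ⟨R, hR⟩ := hfr
    obtain ⟨φ, hφ, z, L, hL, hconv, hzch, hzc, hzB, hzeq, hzL⟩ :=
      chain_compact hk hg hp hB0 (b := fun _ => 0) (D := Set.Iic 0) hch hB
        (fun R => Eventually.of_forall fun i t ht _ => ht) hδ hκ heq
    have hI : ∀ a ≤ 0, ∫ t in a..0, |z 0 t| ^ p ≤ C := by
      intro a ha
      refine integral_le_of_unif hp0 (w := fun i => Z (φ i) 0) (B := B)
        ha (fun i => hcont _ 0) ?_ (fun η hη => ?_) ?_
      · exact Eventually.of_forall fun i t ht => hB _ 0 (by omega) _ ht.2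
      · filter_upwards [hconv 0 (by omega) |a| η hη] with i hi t ht
        refine hi t ht.2 (abs_le.2 ⟨?_, ?_⟩)
        · linarith [ht.1, neg_abs_le a]
        · linarith [ht.2, abs_nonneg a]
      · exact Eventually.of_forall fun i => hitg _ a ha
    have hz : ∀ t ≤ 0, z 0 t = 0 := by
      refine LimSol.half_line hk hg hp ⟨hzch, fun j hj => (hzc j hj).continuousOn,
        ⟨B, hzB⟩, fun t _ => hzeq t, ?_, Or.inl bddAbove_Iic⟩ fun j hj => ?_
      · exact tendsto_zero_of_integral_le_bot (T := 0) hp0 hL (fun s _ t _ => hzL s t) hI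
      · by_contra hne
        obtain ⟨i, hi⟩ := (hconv j (by omega) 0 |z j 0| (abs_pos.2 hne)).exists
        have := hi 0 (by simp) (by simp)
        rw [h0 _ j hj, zero_sub, abs_neg] at this
        exact lt_irrefl _ this
    have h1 := (hTc.comp hφ.tendsto_atTop).eventually (lt_mem_nhds (half_lt_self hc))
    have h2 := hconv 0 (by omega) R (c / 2) (half_pos hc)
    have h3 := hφ.tendsto_atTop.eventually hR
    obtain ⟨i, hi1, hi2, hi3⟩ := (h1.and (h2.and h3)).exists
    have := hi2 (T (φ i)) (hT _) (abs_le.2 ⟨hi3, (hT _).trans (Nat.cast_nonneg R)⟩)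
    rw [hz _ (hT _), sub_zero] at this
    simp only [Function.comp] at hi1
    linarith

end

/-! ### Convergence of derivatives -/

/-- Derivatives of the first entry of a chain are fixed linear combinations of its entries. -/
theorem DChain.iteratedDeriv_le {N : ℕ} (γ ε : ℕ → ℝ) : ∀ m ≤ N, ∃ A, 0 ≤ A ∧
    ∀ z, DChain N γ ε Set.univ z → ∀ t B, (∀ j ≤ N, |z j t| ≤ B) →
      |iteratedDeriv m (z 0) t| ≤ A * B := by
  have key : ∀ m ≤ N, ∃ α : ℕ → ℝ, ∀ z, DChain N γ ε Set.univ z →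
      iteratedDeriv m (z 0) = fun t => ∑ j ∈ Finset.range (m + 1), α j * z j t := by
    intro m
    induction m with
    | zero => exact fun _ => ⟨fun _ => 1, fun z _ => by simp⟩
    | succ m ih =>
      intro hm
      obtain ⟨α, hα⟩ := ih (by omega)
      refine ⟨fun j => Nat.casesOn j 0 (fun i => α i * ε i)
        - (if j < m + 1 then α j * (ε j * γ j) else 0), fun z hz => ?_⟩
      rw [iteratedDeriv_succ, hα z hz]
      funext t
      have h1 : HasDerivAt (fun t => ∑ j ∈ Finset.range (m + 1), α j * z j t)
          (∑ j ∈ Finset.range (m + 1), α j * (ε j * (z (j + 1) t - γ j * z j t))) t :=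
        HasDerivAt.fun_sum fun j hj => (hz j (by have := Finset.mem_range.1 hj; omega) t
          (Set.mem_univ _)).const_mul (α j)
      rw [h1.deriv]
      simp only [sub_mul, Finset.sum_sub_distrib]
      rw [Finset.sum_range_succ' (fun j => (Nat.casesOn j 0 (fun i => α i * ε i) : ℝ) * z j t),
        Finset.sum_range_succ
          (fun j => (if j < m + 1 then α j * (ε j * γ j) else 0) * z j t)]
      simp only [zero_mul, add_zero, lt_irrefl, if_false]
      rw [Finset.sum_congr rfl (g := fun j => α j * (ε j * γ j) * z j t) (s₂ := Finset.range (m + 1))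
        (f := fun j => (if j < m + 1 then α j * (ε j * γ j) else 0) * z j t) fun j hj => by
          rw [if_pos (Finset.mem_range.1 hj)]]
      have h0 : (Nat.casesOn 0 0 (fun i => α i * ε i) : ℝ) * z 0 t = 0 := zero_mul _
      rw [h0, add_zero, ← Finset.sum_sub_distrib]
      exact Finset.sum_congr rfl fun j _ => by ring
  intro m hm
  obtain ⟨α, hα⟩ := key m hm
  refine ⟨∑ j ∈ Finset.range (m + 1), |α j|, by positivity, fun z hz t B hB => ?_⟩
  rw [hα z hz, Finset.sum_mul]
  refine (Finset.abs_sum_le_sum_abs _ _).trans (Finset.sum_le_sum fun j hj => ?_)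
  rw [abs_mul]
  exact mul_le_mul_of_nonneg_left (hB j (by have := Finset.mem_range.1 hj; omega)) (abs_nonneg _)

theorem DChain.exp_mul {N : ℕ} {γ ε : ℕ → ℝ} {I : Set ℝ} {z : ℕ → ℝ → ℝ}
    (hε : ∀ j, ε j = 1 ∨ ε j = -1) (h : DChain N γ ε I z) (g : ℝ) :
    DChain N (fun j => γ j + ε j * g) ε I (fun j t => rexp (-g * t) * z j t) := by
  intro j hj t ht
  have h1 : HasDerivAt (fun t => rexp (-g * t)) (rexp (-g * t) * (-g * 1)) t :=
    ((hasDerivAt_id t).const_mul (-g)).exp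
  refine (h1.mul (h j hj t ht)).congr_deriv ?_
  have h2 : ε j * ε j = 1 := by rcases hε j with h | h <;> rw [h] <;> norm_num
  linear_combination (g * rexp (-g * t) * z j t) * h2

/-- The chain rule for `x ↦ G (log ‖x‖)`, with constants uniform on a compact set avoiding the
origin. -/
theorem comp_log_bound {n : ℕ} {K : Set (EuclideanSpace ℝ (Fin n))} (hK : IsCompact K)
    (hK0 : K ⊆ {(0 : EuclideanSpace ℝ (Fin n))}ᶜ) (N : ℕ) :
    ∃ R A : ℝ, 0 ≤ A ∧ (∀ x ∈ K, |Real.log ‖x‖| ≤ R) ∧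
      ∀ G : ℝ → ℝ, ContDiff ℝ N G → ∀ x ∈ K, ∀ B, (∀ i ≤ N, |iteratedDeriv i G (Real.log ‖x‖)| ≤ B) →
        ∀ j ≤ N, ‖iteratedFDerivWithin ℝ j (fun x : EuclideanSpace ℝ (Fin n) => G (Real.log ‖x‖))
          {(0 : EuclideanSpace ℝ (Fin n))}ᶜ x‖ ≤ A * B := by
  set S : Set (EuclideanSpace ℝ (Fin n)) := {(0 : EuclideanSpace ℝ (Fin n))}ᶜ with hS
  have hSo : IsOpen S := isOpen_compl_singleton
  set ℓ : EuclideanSpace ℝ (Fin n) → ℝ := fun x => Real.log ‖x‖ with hℓ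
  have hℓc : ContDiffOn ℝ (N : WithTop ℕ∞) ℓ S := fun x hx =>
    ((contDiffAt_norm ℝ hx).log (norm_ne_zero_iff.2 hx)).contDiffWithinAt
  have h1 : ∀ i ≤ N, ∃ C, ∀ x ∈ K, ‖iteratedFDerivWithin ℝ i ℓ S x‖ ≤ C := fun i hi =>
    hK.exists_bound_of_continuousOn ((hℓc.continuousOn_iteratedFDerivWithin
      (by exact_mod_cast hi) hSo.uniqueDiffOn).mono hK0)
  obtain ⟨R, hR⟩ := hK.exists_bound_of_continuousOn (hℓc.continuousOn.mono hK0)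
  choose! C hC using h1
  set D : ℝ := 1 + ∑ i ∈ Finset.range (N + 1), |C i| with hD
  have hD1 : 1 ≤ D := le_add_of_nonneg_right (by positivity)
  have hCD : ∀ i ≤ N, C i ≤ D := by
    intro i hi
    have := Finset.single_le_sum (f := fun i => |C i|) (fun i _ => abs_nonneg _)
      (Finset.mem_range.2 (Nat.lt_succ_of_le hi))
    have h2 := le_abs_self (C i)
    linarith
  refine ⟨R, N.factorial * D ^ N, by positivity, hR, fun G hG x hx B hB j hj => ?_⟩
  have hB0 : 0 ≤ B := (abs_nonneg _).trans (hB 0 (Nat.zero_le _))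
  have h2 := norm_iteratedFDerivWithin_comp_le (n := j) (D := D) (C := B) hG.contDiffOn hℓc
    (by exact_mod_cast hj) uniqueDiffOn_univ hSo.uniqueDiffOn (Set.mapsTo_univ _ _) (hK0 hx)
    (fun i hi => by
      rw [iteratedFDerivWithin_univ, norm_iteratedFDeriv_eq_norm_iteratedDeriv]
      exact hB i (hi.trans hj))
    (fun i hi1 hij => ((hC i (hij.trans hj) x hx).trans (hCD i (hij.trans hj))).trans
      (le_self_pow₀ hD1 (by omega)))
  refine h2.trans ?_
  have e1 : (j.factorial : ℝ) ≤ N.factorial := by exact_mod_cast Nat.factorial_le hj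
  have e2 : D ^ j ≤ D ^ N := pow_le_pow_right₀ hD1 hj
  calc (j.factorial : ℝ) * B * D ^ j ≤ N.factorial * B * D ^ N := by gcongr
    _ = _ := by ring

theorem contDiff_Ubub {n k : ℕ} (hn : 2 * k < n) {m : WithTop ℕ∞} : ContDiff ℝ m (Ubub n k) := by
  have ha := ank_pos hn
  unfold Ubub
  refine ContDiff.rpow_const_of_ne ?_ fun x => by positivity
  exact contDiff_const.div (contDiff_const.add (contDiff_const.mul (contDiff_norm_sq ℝ)))
    fun x => by positivity

/-- Convergence of the translated chains to that of the bubble, along `log r i → -∞`, gives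
convergence of the rescaled functions away from the origin. -/
theorem cLocConv_of_chain {n k : ℕ} (hn : 2 * k < n)
    {e : EuclideanSpace ℝ (Fin n)} (he : ‖e‖ = 1) {v : ℕ → EuclideanSpace ℝ (Fin n) → ℝ}
    (hv : ∀ i, ContDiff ℝ (2 * k : ℕ) (v i)) (hr : ∀ i, Radial (v i)) {σ : ℕ → ℝ} {ε : ℝ}
    {γ η : ℕ → ℝ} (hη : ∀ j, η j = 1 ∨ η j = -1)
    {H : ℕ → ℕ → ℝ → ℝ} (hch : ∀ i, DChain (2 * k) γ η Set.univ (H i))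
    (hH0 : ∀ i t, H i 0 t = emd (((n : ℝ) - 2 * k) / 2) (v i) e (t + σ i)
      - ε * sbub (ank n k) t ^ (((n : ℝ) - 2 * k) / 2))
    (hconv : ∀ j ≤ 2 * k, ∀ R, ∀ δ > 0, ∀ᶠ i in atTop, ∀ t, |t| ≤ R → |H i j t| < δ) :
    CLocConv (2 * k) {(0 : EuclideanSpace ℝ (Fin n))}ᶜ
      (fun i z => (rexp (σ i)) ^ (((n : ℝ) - 2 * k) / 2) * v i (rexp (σ i) • z))
      (fun z => ε * Ubub n k z) := by
  intro K hK0 hK j hj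
  set g := ((n : ℝ) - 2 * k) / 2 with hg
  have ha := ank_pos hn
  obtain ⟨R, A, hA0, hR, hA⟩ := comp_log_bound hK hK0 (2 * k)
  choose! A' hA'0 hA' using
    DChain.iteratedDeriv_le (N := 2 * k) (fun j => γ j + η j * g) η
  set Q : ℝ := ∑ m ∈ Finset.range (2 * k + 1), A' m with hQ
  have hAQ : ∀ m ≤ 2 * k, A' m ≤ Q := fun m hm =>
    Finset.single_le_sum (f := A') (fun i hi => hA'0 i (by have := Finset.mem_range.1 hi; omega))
      (Finset.mem_range.2 (Nat.lt_succ_of_le hm))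
  have hQ0 : 0 ≤ Q := (hA'0 0 (Nat.zero_le _)).trans (hAQ 0 (Nat.zero_le _))
  -- the difference of the two functions is `G i (log ‖x‖)`
  set G : ℕ → ℝ → ℝ := fun i t => rexp (-g * t) * H i 0 t with hG
  have hGc : ∀ i, ContDiff ℝ ((2 * k : ℕ) : WithTop ℕ∞) (G i) := by
    intro i
    have e1 : H i 0 = fun t => emd g (v i) e (t + σ i) - ε * sbub (ank n k) t ^ g :=
      funext fun t => hH0 i t
    simp only [hG, e1]
    exact (Real.contDiff_exp.comp (contDiff_const.mul contDiff_id)).mul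
      (((contDiff_emd g (hv i) e).comp (contDiff_id.add contDiff_const)).sub
        (contDiff_const.mul (contDiff_sbub_rpow ha g)))
  have hdiff : ∀ i, Set.EqOn
      ((fun z => (rexp (σ i)) ^ g * v i (rexp (σ i) • z)) - (fun z => ε * Ubub n k z))
      (fun x => G i (Real.log ‖x‖)) {(0 : EuclideanSpace ℝ (Fin n))}ᶜ := by
    intro i x hx
    have hx' : 0 < ‖x‖ := norm_pos_iff.2 hx
    have e1 : v i (rexp (σ i) • x) = v i (rexp (Real.log ‖x‖ + σ i) • e) := by
      refine hr i _ _ ?_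
      rw [norm_smul, norm_smul, he, mul_one, Real.norm_of_nonneg (exp_pos _).le,
        Real.norm_of_nonneg (exp_pos _).le, exp_add, exp_log hx', mul_comm]
    have e2 : Ubub n k x = Ubub n k (rexp (Real.log ‖x‖) • e) := by
      rw [exp_log hx', Ubub, Ubub, norm_smul, he, mul_one, norm_norm]
    have e3 := emd_Ubub hn he (Real.log ‖x‖)
    have e4 : rexp (-g * Real.log ‖x‖) * rexp (g * Real.log ‖x‖) = 1 := by
      rw [← exp_add]; simp
    have e5 : rexp (g * (Real.log ‖x‖ + σ i)) = rexp (g * Real.log ‖x‖) * rexp (g * σ i) := by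
      rw [mul_add, exp_add]
    rw [← hg] at e3
    simp only [hG, Pi.sub_apply, hH0]
    rw [← e3, e1, e2, emd, emd, ← Real.exp_mul, e5, mul_comm (σ i) g]
    linear_combination (-(rexp (g * σ i) * v i (rexp (Real.log ‖x‖ + σ i) • e)
      - ε * Ubub n k (rexp (Real.log ‖x‖) • e))) * e4
  rw [Metric.tendsto_nhds]
  intro ξ hξ
  set E : ℝ := rexp (|g| * R) with hE
  have hE0 : 0 < E := exp_pos _
  set δ : ℝ := ξ / 2 / ((A + 1) * (Q + 1) * E) with hδ
  have hδ0 : 0 < δ := by positivity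
  have hev : ∀ᶠ i in atTop, ∀ m ∈ Finset.range (2 * k + 1), ∀ t, |t| ≤ R → |H i m t| < δ :=
    (Filter.eventually_all_finset _).2 fun m hm =>
      hconv m (by have := Finset.mem_range.1 hm; omega) R δ hδ0
  filter_upwards [hev] with i hi
  have hle : (⨆ x : K, ‖iteratedFDeriv ℝ j (fun z => (rexp (σ i)) ^ g * v i (rexp (σ i) • z)) x
      - iteratedFDeriv ℝ j (fun z => ε * Ubub n k z) x‖) ≤ ξ / 2 := by
    refine Real.iSup_le (fun x => ?_) (by positivity)
    have hx := hK0 x.2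
    have hj' : (j : WithTop ℕ∞) ≤ ((2 * k : ℕ) : WithTop ℕ∞) := by exact_mod_cast hj
    have c1 : ContDiff ℝ j (fun z => (rexp (σ i)) ^ g * v i (rexp (σ i) • z)) :=
      contDiff_const.mul (((hv i).of_le hj').comp (contDiff_id.const_smul (rexp (σ i))))
    have c2 : ContDiff ℝ j (fun z => ε * Ubub n k z) := contDiff_const.mul (contDiff_Ubub hn)
    rw [← iteratedFDeriv_sub_apply c1.contDiffAt c2.contDiffAt,
      ← iteratedFDerivWithin_of_isOpen j isOpen_compl_singleton hx,
      iteratedFDerivWithin_congr (hdiff i) hx]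
    refine (hA (G i) (hGc i) x x.2 (Q * (E * δ)) (fun m hm => ?_) j hj).trans ?_
    · refine (hA' m hm _ ((hch i).exp_mul hη g) (Real.log ‖(x : EuclideanSpace ℝ (Fin n))‖)
        (E * δ) fun l hl => ?_).trans
          (mul_le_mul_of_nonneg_right (hAQ m hm) (by positivity))
      rw [abs_mul, abs_of_pos (exp_pos _)]
      refine mul_le_mul (exp_le_exp.2 ?_) (hi l (Finset.mem_range.2 (by omega)) _ (hR x x.2)).le
        (abs_nonneg _) hE0.le
      refine (le_abs_self _).trans ?_
      rw [abs_mul, abs_neg]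
      exact mul_le_mul_of_nonneg_left (hR x x.2) (abs_nonneg _)
    · have e1 : A * (Q * (E * δ)) ≤ (A + 1) * ((Q + 1) * (E * δ)) := by
        have : 0 < E * δ := by positivity
        gcongr <;> linarith
      refine e1.trans (le_of_eq ?_)
      rw [hδ]
      field_simp
  have hnn : 0 ≤ (⨆ x : K, ‖iteratedFDeriv ℝ j (fun z => (rexp (σ i)) ^ g * v i (rexp (σ i) • z)) x
      - iteratedFDeriv ℝ j (fun z => ε * Ubub n k z) x‖) :=
    Real.iSup_nonneg fun x => norm_nonneg _
  rw [Real.dist_eq, sub_zero, abs_of_nonneg hnn]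
  linarith

/-! ### Conclusion -/

theorem stmt6 (n k : ℕ) (hk : 2 ≤ 2 * k) (hn : 2 * k < n) (M : ℝ) (hM : 0 < M)
    (lam : ℕ → ℝ) (u : ℕ → EuclideanSpace ℝ (Fin n) → ℝ)
    (hsetup : BlowUpSetup n k M lam u)
    (y : ℕ → EuclideanSpace ℝ (Fin n))
    (hy : ∀ i, y i ∈ Metric.ball (0 : EuclideanSpace ℝ (Fin n)) 1)
    (c : ℝ) (hc : 0 < c)
    (hlim : Filter.Tendsto (fun i => ‖y i‖ ^ (((n : ℝ) - 2 * k) / 2) * |u i (y i)|)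
      Filter.atTop (nhds c)) :
    ∃ φ : ℕ → ℕ, StrictMono φ ∧
      ∃ r : ℕ → ℝ, (∀ i, 0 < r i) ∧ Filter.Tendsto r Filter.atTop (nhds 0) ∧
        (∃ c' : ℝ, 0 < c' ∧
          Filter.Tendsto (fun i => ‖y (φ i)‖ / r i) Filter.atTop (nhds c')) ∧
        ∃ ε : ℝ, (ε = -1 ∨ ε = 1) ∧
          CLocConv (2 * k) {(0 : EuclideanSpace ℝ (Fin n))}ᶜ
            (fun i z => (r i) ^ (((n : ℝ) - 2 * k) / 2) * u (φ i) ((r i) • z))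
            (fun z => ε * Ubub n k z) := by
  have hk0 : 0 < k := by omega
  obtain ⟨hlam, hlam0, hu, hrad, heqn, hdir, hne, hitg⟩ := hsetup
  obtain ⟨hg, hp, hgp, hgn⟩ := emden_exponents hk0 hn
  set e : EuclideanSpace ℝ (Fin n) := EuclideanSpace.single ⟨0, by omega⟩ 1 with he_def
  have he : ‖e‖ = 1 := by simp [he_def]
  have hdata := fun i => emden_data hk0 hn (hu i) (hrad i) (heqn i) (hdir i) he
  have hI := fun i a (ha : a ≤ 0) => emden_integral hk0 hn (hu i).continuous (hrad i) (hitg i) he ha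
  choose Z hZ0 hZch hZc hZbd hZbot hZeq using hdata
  set g := ((n : ℝ) - 2 * k) / 2 with hg_def
  set p := twoStar n k with hp_def
  rcases Nat.even_or_odd k with hke | hko
  · simp only [hke.neg_one_pow, one_mul] at hZeq
    -- only a tail of the sequence is used, where `y i ≠ 0` and `lam i ≤ 1`
    have hy0 : ∀ᶠ i in atTop, y i ≠ 0 := by
      filter_upwards [hlim.eventually (lt_mem_nhds hc)] with i hi h0
      rw [h0, norm_zero, zero_rpow hg.ne', zero_mul] at hi
      exact lt_irrefl _ hi
    obtain ⟨m, hm⟩ := eventually_atTop.1 (hy0.and (hlam0.eventually (Iic_mem_nhds one_pos)))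
    have hym : ∀ i, 0 < ‖y (i + m)‖ := fun i => norm_pos_iff.2 (hm (i + m) (by omega)).1
    have hlog : ∀ i, rexp (Real.log ‖y (i + m)‖) = ‖y (i + m)‖ := fun i => exp_log (hym i)
    have hval : ∀ i, |Z (i + m) 0 (Real.log ‖y (i + m)‖)|
        = ‖y (i + m)‖ ^ g * |u (i + m) (y (i + m))| := by
      intro i
      rw [hZ0, emd, abs_mul, abs_of_pos (exp_pos _), mul_comm g, Real.exp_mul, hlog]
      congr 2
      refine hrad _ _ _ ?_
      rw [norm_smul, he, mul_one, norm_norm]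
    have hmm : Tendsto (fun i => i + m) atTop atTop := tendsto_add_atTop_nat m
    have hC0 : 0 ≤ M ^ p / (n * volume.real (ball (0 : EuclideanSpace ℝ (Fin n)) 1)) := by
      positivity
    obtain ⟨φ, hφ, hTbot, z, hz, hz0, hconv⟩ := concentrate hk0 hg hp hC0 hc
      (Z := fun i => Z (i + m)) (κ := fun i t => lam (i + m) * rexp (2 * k * t))
      (δ := fun i => lam (i + m)) (T := fun i => Real.log ‖y (i + m)‖)
      (fun i => hZch _) (fun i => hZc _) (fun i => hZbd _) (fun i => hZbot _)
      (hlam0.comp hmm) (fun i => (hm (i + m) (by omega)).2)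
      (fun i t ht => by
        rw [abs_of_pos (mul_pos (hlam _) (exp_pos _))]
        refine mul_le_of_le_one_right (hlam _).le (exp_le_one_iff.2 ?_)
        exact mul_nonpos_of_nonneg_of_nonpos (by positivity) ht)
      (fun i => hZeq _)
      (fun i a ha => by rw [hZ0]; exact hI _ a ha)
      (fun i => Real.log_nonpos (norm_nonneg _) (mem_ball_zero_iff.1 (hy _)).le)
      (by simp only [hval]; exact hlim.comp hmm)
    obtain ⟨b, hb0, hb, hb1⟩ := bubble_limSol hk0 hn
    obtain ⟨ε, s, hε, hzb⟩ := LimSol.classify hk0 hg hp hz hb hb1 ⟨0, hz0⟩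
    -- the limit is `ε` times the bubble's transform shifted by `s`, so the scale is `r = e^{T - s}`
    refine ⟨fun i => φ i + m, fun i j hij => Nat.add_lt_add_right (hφ hij) m,
      fun i => rexp (Real.log ‖y (φ i + m)‖ - s), fun i => exp_pos _, ?_,
      ⟨rexp s, exp_pos _, ?_⟩, ε, hε, ?_⟩
    · refine Real.tendsto_exp_atBot.comp ?_
      exact tendsto_atBot_add_const_right _ (-s) hTbot
    · refine tendsto_const_nhds.congr fun i => ?_
      beta_reduce
      rw [exp_sub, hlog]
      have := hym (φ i)
      field_simp
    · have hzch := hz.chain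
      rw [interior_univ] at hzch
      refine cLocConv_of_chain hn he (fun i => hu _) (fun i => hrad _) (Eps_cases k)
        (H := fun i j t => Z (φ i + m) j (t - s + Real.log ‖y (φ i + m)‖) - z j (t - s))
        (γ := Gam g k) (fun i => ?_) (fun i t => ?_) ?_
      · have h1 := ((hZch (φ i + m)).shift (Real.log ‖y (φ i + m)‖)).sub
          (hzch.mono (Set.subset_univ _))
        simpa [sub_eq_add_neg] using h1.shift (-s)
      · simp only [hzb, hb0, sub_add_cancel, hZ0]
        rw [show t - s + Real.log ‖y (φ i + m)‖ = t + (Real.log ‖y (φ i + m)‖ - s) by ring]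
      · intro j hj R δ hδ
        filter_upwards [hconv j hj (R + |s|) δ hδ] with i hi t ht
        refine hi (t - s) ((abs_sub _ _).trans ?_)
        linarith
  -- for odd `k` no nonzero solution exists
  · exfalso
    simp only [hko.neg_one_pow, neg_one_mul] at hZeq
    have hz : ∀ t < 0, Z 0 0 t = 0 := odd_vanish hk0 ((hZch 0).mono (Set.subset_univ _))
      (fun j _ => (hZc 0 j).continuousOn) (hZbd 0) (fun j _ => hZbot 0 j)
      (κ := fun t => lam 0 * rexp (2 * k * t)) (fun t _ => mul_pos (hlam 0) (exp_pos _))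
      (fun t ht => hZeq 0 t ht.le)
    have hcl : IsClosed {s : ℝ | u 0 (s • e) = 0} :=
      isClosed_eq ((hu 0).continuous.comp (continuous_id.smul continuous_const)) continuous_const
    have hsub : closure (Set.Ioo (0 : ℝ) 1) ⊆ {s : ℝ | u 0 (s • e) = 0} := by
      refine hcl.closure_subset_iff.2 fun s hs => ?_
      have h1 := hz (Real.log s) (Real.log_neg hs.1 hs.2)
      rw [hZ0, emd, exp_log hs.1] at h1
      exact (mul_eq_zero.1 h1).resolve_left (exp_pos _).ne'
    rw [closure_Ioo (by norm_num)] at hsub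
    obtain ⟨x, hx, hx0⟩ := hne 0
    apply hx0
    rw [hrad 0 x (‖x‖ • e) (by rw [norm_smul, he, mul_one, norm_norm])]
    exact hsub ⟨norm_nonneg _, mem_closedBall_zero_iff.1 hx⟩
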